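/- There exists a universal constant C > 0 such that the following holds for all positive integers n ≥ 2 and d with d ≤ n², and all f > 0. Given symmetric matrices A_1, ..., A_n ∈ ℝ^{d×d} with ‖A_i‖_op ≤ 1 for all i and ∑_{i=1}^n ‖A_i‖_F² ≤ n f², there exist signs x ∈ {−1, +1}^n such that ‖∑_{i=1}^n x_i A_i‖_op ≤ C (√n + (log n)^{3/4} · f^{1/2} · n^{1/4}). -/

import Mathlib

open MeasureTheory ProbabilityTheory

/-- Operator norm (largest singular value) of a real matrix, as the norm of the
induced linear map between Euclidean spaces. -/
noncomputable def opNorm {m n : Type*} [Fintype m] [Fintype n] [DecidableEq n]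
    (M : Matrix m n ℝ) : ℝ :=
  ‖LinearMap.toContinuousLinearMap (Matrix.toEuclideanLin M)‖

/-- Squared Frobenius norm of a real matrix. -/
noncomputable def frobNormSq {m n : Type*} [Fintype m] [Fintype n]
    (M : Matrix m n ℝ) : ℝ := ∑ i, ∑ j, (M i j) ^ 2

namespace FCB

/-- A symmetric positive semidefinite bilinear form. -/
structure PForm (V : Type*) [AddCommGroup V] [Module ℝ V] where
  b : V →ₗ[ℝ] V →ₗ[ℝ] ℝ
  symm : ∀ x y, b x y = b y x
  nonneg : ∀ x, 0 ≤ b x x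

section
variable {V : Type*} [AddCommGroup V] [Module ℝ V]

theorem PForm.cs (β : PForm V) (x y : V) : (β.b x y) ^ 2 ≤ β.b x x * β.b y y := by
  have h : ∀ t : ℝ, 0 ≤ β.b y y * (t * t) + (2 * β.b x y) * t + β.b x x := by
    intro t
    have := β.nonneg (x + t • y)
    simp only [map_add, map_smul, LinearMap.add_apply, LinearMap.smul_apply, smul_eq_mul] at this
    rw [β.symm y x] at this
    nlinarith
  have := discrim_le_zero h
  unfold discrim at this
  nlinarith

/-- symmetric operators with respect to a form. -/
def Sym (β : PForm V) (T : Module.End ℝ V) : Prop := ∀ x y, β.b (T x) y = β.b x (T y)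

theorem Sym.one (β : PForm V) : Sym β 1 := fun _ _ => rfl

theorem Sym.smul {β : PForm V} {T : Module.End ℝ V} (h : Sym β T) (c : ℝ) : Sym β (c • T) := by
  intro x y; simp [h x y]

theorem Sym.add {β : PForm V} {T S : Module.End ℝ V} (h : Sym β T) (h' : Sym β S) :
    Sym β (T + S) := by
  intro x y; simp [h x y, h' x y]

theorem Sym.sum {β : PForm V} {ι : Type*} (s : Finset ι) {T : ι → Module.End ℝ V}
    (h : ∀ i, Sym β (T i)) : Sym β (∑ i ∈ s, T i) := by
  intro x y
  simp [LinearMap.sum_apply, map_sum, h _ x y]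

theorem Sym.pow {β : PForm V} {T : Module.End ℝ V} (h : Sym β T) (n : ℕ) : Sym β (T ^ n) := by
  induction n with
  | zero => exact Sym.one β
  | succ n ih =>
    intro x y
    rw [pow_succ, Module.End.mul_apply, ih, h, ← Module.End.mul_apply, ← pow_succ', pow_succ]

theorem Sym.mul {β : PForm V} {T S : Module.End ℝ V} (h : Sym β T) (h' : Sym β S)
    (hc : Commute T S) : Sym β (T * S) := by
  intro x y
  rw [Module.End.mul_apply, h, h', ← Module.End.mul_apply, hc.eq]

/-- monomial in four operators -/
def mon (T : Fin 4 → Module.End ℝ V) (e : Fin 4 → ℕ) : Module.End ℝ V :=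
  T 0 ^ e 0 * T 1 ^ e 1 * T 2 ^ e 2 * T 3 ^ e 3

theorem mon_add (T : Fin 4 → Module.End ℝ V) (hc : ∀ i j, Commute (T i) (T j))
    (e e' : Fin 4 → ℕ) : mon T (e + e') = mon T e * mon T e' := by
  have h := fun i j a b => (((hc i j).pow_left a).pow_right b).eq
  simp only [mon, Pi.add_apply, pow_add]
  simp only [mul_assoc]
  congr 1
  rw [← mul_assoc (T 0 ^ e' 0) (T 1 ^ e 1), h 0 1, mul_assoc]
  congr 1
  rw [← mul_assoc (T 1 ^ e' 1) (T 2 ^ e 2), h 1 2]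
  rw [mul_assoc, ← mul_assoc (T 0 ^ e' 0) (T 2 ^ e 2), h 0 2, mul_assoc]
  congr 1
  rw [← mul_assoc (T 2 ^ e' 2) (T 3 ^ e 3), h 2 3, mul_assoc,
    ← mul_assoc (T 1 ^ e' 1) (T 3 ^ e 3), h 1 3, mul_assoc,
    ← mul_assoc (T 0 ^ e' 0) (T 3 ^ e 3), h 0 3, mul_assoc]

theorem mon_sym {β : PForm V} {T : Fin 4 → Module.End ℝ V} (hc : ∀ i j, Commute (T i) (T j))
    (hs : ∀ i, Sym β (T i)) (e : Fin 4 → ℕ) : Sym β (mon T e) := by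
  unfold mon
  have h := fun i j a b => (((hc i j).pow_left a).pow_right b)
  refine Sym.mul (Sym.mul (Sym.mul ((hs 0).pow _) ((hs 1).pow _) (h _ _ _ _)) ((hs 2).pow _) ?_)
    ((hs 3).pow _) ?_
  · exact (h _ _ _ _).mul_left (h _ _ _ _)
  · exact ((h _ _ _ _).mul_left (h _ _ _ _)).mul_left (h _ _ _ _)

theorem mon_single (T : Fin 4 → Module.End ℝ V) (k : Fin 4) (m : ℕ) :
    mon T (Pi.single k m) = T k ^ m := by
  fin_cases k <;> simp [mon, Pi.single_apply]

/-- Maximum principle for squares. -/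
theorem mon_even_le (β : PForm V) (T : Fin 4 → Module.End ℝ V) (hc : ∀ i j, Commute (T i) (T j))
    (hs : ∀ i, Sym β (T i)) (ξ : V) (R : ℝ) (hR : 0 ≤ R) (m : ℕ)
    (hv : ∀ k, β.b ξ ((T k ^ (2 * m)) ξ) ≤ R) (e : Fin 4 → ℕ) (he : ∑ i, e i = m) :
    β.b (mon T e ξ) (mon T e ξ) ≤ R := by
  classical
  let E : (Fin 4 → ℕ) → ℝ := fun e => β.b (mon T e ξ) (mon T e ξ)
  let S : Finset (Fin 4 → ℕ) := Finset.piAntidiag Finset.univ m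
  have memS : ∀ e : Fin 4 → ℕ, e ∈ S ↔ ∑ i, e i = m := by
    intro e; simp [S, Finset.mem_piAntidiag]
  obtain ⟨e1, h1S, h1⟩ := S.exists_max_image E ⟨e, (memS e).2 he⟩
  let S' := S.filter (fun e => E e = E e1)
  obtain ⟨e2, h2S, h2⟩ := S'.exists_max_image (fun e => ∑ i, e i ^ 2)
    ⟨e1, by simp [S', h1S]⟩
  have h2S' : e2 ∈ S ∧ E e2 = E e1 := by simpa [S'] using h2S
  have key : E e ≤ E e2 := by rw [h2S'.2]; exact h1 e ((memS e).2 he)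
  refine key.trans ?_
  by_contra hcon
  push Not at hcon
  have hpos : 0 < E e2 := lt_of_le_of_lt hR hcon
  -- if e2 is a vertex, done
  by_cases hvx : ∃ k, ∀ j, j ≠ k → e2 j = 0
  · obtain ⟨k, hk⟩ := hvx
    have hsum : e2 k = m := by
      have := (memS e2).1 h2S'.1
      rw [Finset.sum_eq_single k (fun j _ hj => hk j hj) (by simp)] at this
      exact this
    have he2 : e2 = Pi.single k m := by
      funext j
      by_cases hj : j = k
      · subst hj; simp [hsum]
      · simp [hj, hk j hj]
    have : E e2 = β.b ξ ((T k ^ (2 * m)) ξ) := by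
      simp only [E, he2, mon_single]
      rw [(hs k).pow m, ← Module.End.mul_apply, ← pow_add, two_mul]
    exact absurd (hv k) (by rw [← this]; exact not_le.2 hcon)
  · push Not at hvx
    obtain ⟨i, j, hij, hi, hj, hle⟩ : ∃ i j, i ≠ j ∧ e2 i ≠ 0 ∧ e2 j ≠ 0 ∧ e2 j ≤ e2 i := by
      obtain ⟨i, -, hi⟩ := hvx 0
      obtain ⟨j, hji, hj⟩ := hvx i
      rcases le_total (e2 i) (e2 j) with h | h
      · exact ⟨j, i, hji, hj, hi, h⟩
      · exact ⟨i, j, hji.symm, hi, hj, h⟩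
    let ep : Fin 4 → ℕ := Function.update (Function.update e2 i (e2 i + 1)) j (e2 j - 1)
    let em : Fin 4 → ℕ := Function.update (Function.update e2 i (e2 i - 1)) j (e2 j + 1)
    have hpm : ep + em = e2 + e2 := by
      funext k
      simp only [ep, em, Pi.add_apply, Function.update_apply]
      by_cases hkj : k = j
      · subst hkj; simp; omega
      · by_cases hki : k = i
        · subst hki; simp [hkj]; omega
        · simp [hkj, hki]
    have sumsplit : ∀ g : Fin 4 → ℕ, ∑ k, g k =
        g i + g j + ∑ k ∈ (Finset.univ.erase i).erase j, g k := by
      intro g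
      rw [← Finset.add_sum_erase _ g (Finset.mem_univ i),
        ← Finset.add_sum_erase (Finset.univ.erase i) g (a := j) (by simp [hij.symm]), add_assoc]
    have hrest : ∀ g : ℕ → ℕ, ∑ k ∈ (Finset.univ.erase i).erase j, g (ep k) =
        ∑ k ∈ (Finset.univ.erase i).erase j, g (e2 k) := by
      intro g
      refine Finset.sum_congr rfl fun k hk => ?_
      simp only [Finset.mem_erase] at hk
      simp [ep, Function.update_apply, hk.1, hk.2.1]
    have hrest' : ∀ g : ℕ → ℕ, ∑ k ∈ (Finset.univ.erase i).erase j, g (em k) =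
        ∑ k ∈ (Finset.univ.erase i).erase j, g (e2 k) := by
      intro g
      refine Finset.sum_congr rfl fun k hk => ?_
      simp only [Finset.mem_erase] at hk
      simp [em, Function.update_apply, hk.1, hk.2.1]
    have e2sum := (memS e2).1 h2S'.1
    rw [sumsplit] at e2sum
    have epi : ep i = e2 i + 1 := by simp [ep, Function.update_apply, hij]
    have epj : ep j = e2 j - 1 := by simp [ep]
    have emi : em i = e2 i - 1 := by simp [em, Function.update_apply, hij]
    have emj : em j = e2 j + 1 := by simp [em]
    have hpS : ep ∈ S := by
      rw [memS, sumsplit, hrest (fun x => x), epi, epj]; omega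
    have hmS : em ∈ S := by
      rw [memS, sumsplit, hrest' (fun x => x), emi, emj]; omega
    have hEp := h1 ep hpS
    have hEm := h1 em hmS
    have hcs : E e2 ^ 2 ≤ E ep * E em := by
      have h := β.cs (mon T ep ξ) (mon T em ξ)
      have h3 : β.b (mon T ep ξ) (mon T em ξ) = E e2 := by
        simp only [E]
        rw [mon_sym hc hs, mon_sym hc hs, ← Module.End.mul_apply, ← Module.End.mul_apply,
          ← mon_add T hc, ← mon_add T hc, hpm]
      rwa [h3] at h
    have hEmn : 0 ≤ E em := β.nonneg _
    have hEpeq : E ep = E e1 := by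
      rw [← h2S'.2] at hEp hEm ⊢
      have hEpn : 0 ≤ E ep := β.nonneg _
      refine le_antisymm hEp ?_
      by_contra h
      push Not at h
      nlinarith [mul_le_mul_of_nonneg_left hEm hEpn, mul_lt_mul_of_pos_right h hpos]
    have this : ∑ i, ep i ^ 2 ≤ ∑ i, e2 i ^ 2 := h2 ep (by simp [S', hpS, hEpeq])
    rw [sumsplit (fun k => ep k ^ 2), sumsplit (fun k => e2 k ^ 2), hrest (fun x => x ^ 2), epi, epj] at this
    obtain ⟨c, hc'⟩ : ∃ c, e2 j = c + 1 := ⟨e2 j - 1, by omega⟩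
    rw [hc'] at this hle
    simp only [Nat.add_sub_cancel] at this
    nlinarith

theorem exists_half (e : Fin 4 → ℕ) (m : ℕ) (he : ∑ i, e i = 2 * m) :
    ∃ α γ : Fin 4 → ℕ, α + γ = e ∧ ∑ i, α i = m ∧ ∑ i, γ i = m := by
  obtain ⟨α, h1, h2⟩ : ∃ α : Fin 4 → ℕ, α ≤ e ∧ ∑ i, α i = m := by
    have aux : ∀ k ≤ 2 * m, ∃ α : Fin 4 → ℕ, α ≤ e ∧ ∑ i, α i = k := by
      intro k
      induction k with
      | zero => intro _; exact ⟨0, fun i => Nat.zero_le _, by simp⟩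
      | succ k ih =>
        intro hk
        obtain ⟨α, h1, h2⟩ := ih (by omega)
        obtain ⟨i, hi⟩ : ∃ i, α i < e i := by
          by_contra hcon
          push Not at hcon
          have := Finset.sum_le_sum (fun i (_ : i ∈ Finset.univ) => hcon i)
          omega
        refine ⟨α + Pi.single i 1, ?_, ?_⟩
        · intro j
          by_cases hj : j = i
          · subst hj; simp; omega
          · simp [hj]; exact h1 j
        · simp [Finset.sum_add_distrib, h2]
    exact aux m (by omega)
  refine ⟨α, e - α, ?_, h2, ?_⟩
  · funext i; have : α i ≤ e i := h1 i; simp; omega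
  · have : ∑ i, (e - α) i + ∑ i, α i = ∑ i, e i := by
      rw [← Finset.sum_add_distrib]
      exact Finset.sum_congr rfl fun i _ => by have : α i ≤ e i := h1 i; simp; omega
    omega

theorem mon_le (β : PForm V) (T : Fin 4 → Module.End ℝ V) (hc : ∀ i j, Commute (T i) (T j))
    (hs : ∀ i, Sym β (T i)) (ξ ζ : V) (R : ℝ) (hR : 0 ≤ R) (m : ℕ)
    (hv : ∀ k, β.b ξ ((T k ^ (2 * m)) ξ) ≤ R) (hv' : ∀ k, β.b ζ ((T k ^ (2 * m)) ζ) ≤ R)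
    (e : Fin 4 → ℕ) (he : ∑ i, e i = 2 * m) :
    |β.b ξ (mon T e ζ)| ≤ R := by
  obtain ⟨α, γ, rfl, hα, hγ⟩ := exists_half e m he
  rw [mon_add T hc, Module.End.mul_apply, ← mon_sym hc hs]
  have h1 := mon_even_le β T hc hs ξ R hR m hv α hα
  have h2 := mon_even_le β T hc hs ζ R hR m hv' γ hγ
  have h3 := β.cs (mon T α ξ) (mon T γ ζ)
  apply abs_le_of_sq_le_sq _ hR
  calc _ ≤ _ := h3
    _ ≤ R * R := mul_le_mul h1 h2 (β.nonneg _) hR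
    _ = R ^ 2 := by ring

end
end FCB

namespace FCB
set_option linter.unusedSectionVars false
set_option linter.unusedSimpArgs false

/-- algebraic full Fock functor -/
abbrev Fk (ι E : Type*) [AddCommGroup E] := List ι →₀ E

section
variable {E : Type*} [AddCommGroup E] [Module ℝ E]
/-! forms -/
/-- form on the Fock space -/
noncomputable def fb (ι : Type*) (b : E →ₗ[ℝ] E →ₗ[ℝ] ℝ) : Fk ι E →ₗ[ℝ] Fk ι E →ₗ[ℝ] ℝ :=
  Finsupp.lsum ℝ (fun w => b.compl₂ (Finsupp.lapply w))

theorem fb_eq {ι : Type*} (b : E →ₗ[ℝ] E →ₗ[ℝ] ℝ) (f g : Fk ι E) :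
    fb ι b f g = f.sum (fun w x => b x (g w)) := by
  simp [fb, Finsupp.sum, LinearMap.sum_apply]

theorem fb_single {ι : Type*} (b : E →ₗ[ℝ] E →ₗ[ℝ] ℝ) (w : List ι) (x : E) (g : Fk ι E) :
    fb ι b (Finsupp.single w x) g = b x (g w) := by
  simp [fb]

/-- the Fock form -/
noncomputable def PForm.fock (ι : Type*) (β : PForm E) : PForm (Fk ι E) where
  b := fb ι β.b
  symm := by
    intro x y
    classical
    rw [fb_eq, fb_eq, Finsupp.sum_of_support_subset x (s := x.support ∪ y.support)
      Finset.subset_union_left _ (by simp),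
      Finsupp.sum_of_support_subset y (s := x.support ∪ y.support)
      Finset.subset_union_right _ (by simp)]
    exact Finset.sum_congr rfl fun w _ => β.symm _ _
  nonneg := by
    intro x
    rw [fb_eq]
    exact Finset.sum_nonneg fun w _ => β.nonneg _

end

section
variable {ι : Type*} [Fintype ι] [DecidableEq ι]
variable {E E' : Type*} [AddCommGroup E] [Module ℝ E] [AddCommGroup E'] [Module ℝ E']

/-- functor on maps -/
noncomputable def lift (ι : Type*) (j : E →ₗ[ℝ] E') : Fk ι E →ₗ[ℝ] Fk ι E' :=
  Finsupp.mapRange.linearMap j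

@[simp] theorem lift_apply (j : E →ₗ[ℝ] E') (f : Fk ι E) (w : List ι) :
    lift ι j f w = j (f w) := by simp [lift]

/-- left creation -/
noncomputable def lop (E : Type*) [AddCommGroup E] [Module ℝ E] (i : ι) : Module.End ℝ (Fk ι E) :=
  Finsupp.lmapDomain E ℝ (List.cons i)
/-- left annihilation -/
noncomputable def lsop (E : Type*) [AddCommGroup E] [Module ℝ E] (i : ι) :
    Module.End ℝ (Fk ι E) :=
  Finsupp.lcomapDomain (List.cons i) (List.cons_injective)
/-- right creation -/
noncomputable def rop (E : Type*) [AddCommGroup E] [Module ℝ E] (i : ι) : Module.End ℝ (Fk ι E) :=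
  Finsupp.lmapDomain E ℝ (fun w => w ++ [i])
/-- right annihilation -/
noncomputable def rsop (E : Type*) [AddCommGroup E] [Module ℝ E] (i : ι) :
    Module.End ℝ (Fk ι E) :=
  Finsupp.lcomapDomain (fun w => w ++ [i]) (fun _ _ h => List.append_cancel_right h)

/-- vacuum embedding -/
noncomputable def vac (ι : Type*) (E : Type*) [AddCommGroup E] [Module ℝ E] : E →ₗ[ℝ] Fk ι E :=
  Finsupp.lsingle []
/-- vacuum projection -/
noncomputable def vacs (ι : Type*) (E : Type*) [AddCommGroup E] [Module ℝ E] :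
    Fk ι E →ₗ[ℝ] E := Finsupp.lapply []

@[simp] theorem vacs_apply (f : Fk ι E) : vacs ι E f = f [] := rfl

@[simp] theorem vac_nil (e : E) : vac ι E e [] = e := by simp [vac]
@[simp] theorem vac_cons (e : E) (i : ι) (w : List ι) : vac ι E e (i :: w) = 0 := by simp [vac]
@[simp] theorem vac_snoc (e : E) (i : ι) (w : List ι) : vac ι E e (w ++ [i]) = 0 := by
  simp [vac, Finsupp.single_apply]

@[simp] theorem lop_nil (i : ι) (f : Fk ι E) : lop E i f [] = 0 := by
  simp only [lop, Finsupp.lmapDomain_apply]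
  exact Finsupp.mapDomain_of_notMem_range _ _ (by simp)
@[simp] theorem lop_cons (i k : ι) (f : Fk ι E) (w : List ι) :
    lop E i f (k :: w) = if k = i then f w else 0 := by
  simp only [lop, Finsupp.lmapDomain_apply]
  split_ifs with h
  · subst h
    exact Finsupp.mapDomain_apply List.cons_injective f w
  · exact Finsupp.mapDomain_of_notMem_range _ _ (by simp [Ne.symm h])
@[simp] theorem lsop_apply (i : ι) (f : Fk ι E) (w : List ι) : lsop E i f w = f (i :: w) := rfl
@[simp] theorem rsop_apply (i : ι) (f : Fk ι E) (w : List ι) : rsop E i f w = f (w ++ [i]) := rfl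
@[simp] theorem rop_nil (i : ι) (f : Fk ι E) : rop E i f [] = 0 := by
  simp only [rop, Finsupp.lmapDomain_apply]
  exact Finsupp.mapDomain_of_notMem_range _ _ (by simp)
@[simp] theorem rop_snoc (i k : ι) (f : Fk ι E) (w : List ι) :
    rop E i f (w ++ [k]) = if k = i then f w else 0 := by
  simp only [rop, Finsupp.lmapDomain_apply]
  split_ifs with h
  · subst h
    exact Finsupp.mapDomain_apply (fun _ _ h => List.append_cancel_right h) f w
  · exact Finsupp.mapDomain_of_notMem_range _ _ (by simp [Ne.symm h])
@[simp] theorem rop_single (i k : ι) (f : Fk ι E) :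
    rop E i f [k] = if k = i then f [] else 0 := rop_snoc i k f []

theorem cons_snoc (P : List ι → Prop) (h0 : P []) (h1 : ∀ w i, P (w ++ [i])) (w : List ι) : P w := by
  rcases List.eq_nil_or_concat w with h | ⟨v, i, h⟩
  · rw [h]; exact h0
  · rw [h]; simpa using h1 v i

theorem rop_cons_snoc (i k l : ι) (f : Fk ι E) (w : List ι) :
    rop E i f (k :: (w ++ [l])) = if l = i then f (k :: w) else 0 := rop_snoc i l f (k :: w)

theorem lop_rop (i j : ι) : lop E i * rop E j = rop E j * lop E i := by
  refine LinearMap.ext fun f => Finsupp.ext fun w => ?_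
  simp only [Module.End.mul_apply]
  cases w with
  | nil => simp
  | cons k w =>
    rcases List.eq_nil_or_concat w with h | ⟨v, l, h⟩
    · subst h; simp
    · rw [List.concat_eq_append] at h
      subst h; simp [rop_cons_snoc]; split_ifs <;> rfl

theorem lsop_rsop (i j : ι) : lsop E i * rsop E j = rsop E j * lsop E i := by
  refine LinearMap.ext fun f => Finsupp.ext fun w => ?_; simp

theorem lsop_rop (i j : ι) : lsop E i * rop E j =
    rop E j * lsop E i + (if i = j then (vac ι E ∘ₗ vacs ι E : Module.End ℝ (Fk ι E)) else 0) := by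
  refine LinearMap.ext fun f => Finsupp.ext fun w => ?_
  rcases List.eq_nil_or_concat w with h | ⟨v, l, h⟩
  · subst h; split_ifs <;> simp [*]
  · rw [List.concat_eq_append] at h
    subst h; split_ifs with hij <;> simp [rop_cons_snoc]

theorem rsop_lop (i j : ι) : rsop E i * lop E j =
    lop E j * rsop E i + (if i = j then (vac ι E ∘ₗ vacs ι E : Module.End ℝ (Fk ι E)) else 0) := by
  refine LinearMap.ext fun f => Finsupp.ext fun w => ?_
  cases w with
  | nil => split_ifs <;> simp [*]
  | cons k w => split_ifs with hij <;> simp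

/-- left semicircular -/
noncomputable def sop (E : Type*) [AddCommGroup E] [Module ℝ E] (i : ι) : Module.End ℝ (Fk ι E) :=
  lop E i + lsop E i
/-- right semicircular -/
noncomputable def top (E : Type*) [AddCommGroup E] [Module ℝ E] (i : ι) : Module.End ℝ (Fk ι E) :=
  rop E i + rsop E i

theorem sop_top (i j : ι) : sop E i * top E j = top E j * sop E i := by
  simp only [sop, top, mul_add, add_mul, lop_rop, lsop_rsop, lsop_rop, rsop_lop]
  by_cases h : i = j
  · subst h; simp; abel
  · simp [h, Ne.symm h]; abel

theorem rsop_sop (i j : ι) : rsop E i * sop E j =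
    sop E j * rsop E i + (if i = j then (vac ι E ∘ₗ vacs ι E : Module.End ℝ (Fk ι E)) else 0) := by
  simp only [sop, mul_add, add_mul, lsop_rsop, rsop_lop]; abel

theorem sop_rop (i j : ι) : sop E i * rop E j =
    rop E j * sop E i + (if i = j then (vac ι E ∘ₗ vacs ι E : Module.End ℝ (Fk ι E)) else 0) := by
  simp only [sop, mul_add, add_mul, lsop_rop, lop_rop]; abel

theorem vacs_rop (i : ι) : vacs ι E ∘ₗ rop E i = 0 := by refine LinearMap.ext fun f => ?_; simp
theorem rsop_vac (i : ι) : rsop E i ∘ₗ vac ι E = 0 := by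
  refine LinearMap.ext fun f => Finsupp.ext fun w => ?_
  simp only [LinearMap.comp_apply, rsop_apply, vac_snoc]; rfl

theorem vacs_vac : vacs ι E ∘ₗ vac ι E = LinearMap.id := by refine LinearMap.ext fun f => ?_; simp
theorem vacs_sop (i : ι) : vacs ι E ∘ₗ sop E i = vacs ι E ∘ₗ rsop E i := by
  refine LinearMap.ext fun f => ?_; simp [sop]
theorem vacs_top (i : ι) : vacs ι E ∘ₗ top E i = vacs ι E ∘ₗ rsop E i := by
  refine LinearMap.ext fun f => ?_; simp [top]
theorem sop_vac (i : ι) : sop E i ∘ₗ vac ι E = top E i ∘ₗ vac ι E := by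
  refine LinearMap.ext fun f => Finsupp.ext fun w => ?_
  rcases w with _ | ⟨k, w⟩
  · simp [sop, top]
  rcases List.eq_nil_or_concat w with h | ⟨v, l, h⟩
  · subst h
    simp [sop, top]
  · rw [List.concat_eq_append] at h
    subst h
    have h1 : (vac ι E f) (v ++ [l]) = 0 := vac_snoc _ _ _
    have h2 : rop E i (vac ι E f) (k :: (v ++ [l])) = 0 := by rw [rop_cons_snoc]; simp
    simp [sop, top, h1, h2]

theorem resolution : (1 : Module.End ℝ (Fk ι E)) =
    vac ι E ∘ₗ vacs ι E + ∑ j, rop E j * rsop E j := by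
  refine LinearMap.ext fun f => Finsupp.ext fun w => ?_
  rcases List.eq_nil_or_concat w with h | ⟨v, l, h⟩
  · subst h; simp
  · rw [List.concat_eq_append] at h
    subst h; simp

/-! lifts -/
theorem lift_comp {E'' : Type*} [AddCommGroup E''] [Module ℝ E''] (j : E →ₗ[ℝ] E')
    (k : E' →ₗ[ℝ] E'') : lift ι (k ∘ₗ j) = lift ι k ∘ₗ lift ι j := by
  refine LinearMap.ext fun f => Finsupp.ext fun w => ?_; simp
theorem lift_mul (j k : Module.End ℝ E) :
    (lift ι (j * k) : Module.End ℝ (Fk ι E)) = lift ι j * lift ι k := lift_comp _ _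
theorem lift_add (j k : E →ₗ[ℝ] E') : lift ι (j + k) = lift ι j + lift ι k := by
  refine LinearMap.ext fun f => Finsupp.ext fun w => ?_; simp
theorem lift_smul (c : ℝ) (j : E →ₗ[ℝ] E') : lift ι (c • j) = c • lift ι j := by
  refine LinearMap.ext fun f => Finsupp.ext fun w => ?_; simp
theorem lift_zero : lift ι (0 : E →ₗ[ℝ] E') = 0 := by
  refine LinearMap.ext fun f => Finsupp.ext fun w => ?_; simp
theorem lift_one : lift ι (1 : Module.End ℝ E) = 1 := by
  refine LinearMap.ext fun f => Finsupp.ext fun w => ?_; simp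
theorem lift_sum {κ : Type*} (s : Finset κ) (j : κ → E →ₗ[ℝ] E') :
    lift ι (∑ k ∈ s, j k) = ∑ k ∈ s, lift ι (j k) := by
  refine LinearMap.ext fun f => Finsupp.ext fun w => ?_; simp [LinearMap.sum_apply, Finsupp.finsetSum_apply]
theorem lift_pow (j : Module.End ℝ E) (n : ℕ) :
    (lift ι (j ^ n) : Module.End ℝ (Fk ι E)) = lift ι j ^ n := by
  induction n with
  | zero => exact lift_one
  | succ n ih => rw [pow_succ, lift_mul, ih, pow_succ]

theorem lift_vac (j : E →ₗ[ℝ] E') : lift ι j ∘ₗ vac ι E = vac ι E' ∘ₗ j := by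
  refine LinearMap.ext fun f => Finsupp.ext fun w => ?_; cases w <;> simp
theorem lift_vacs (j : E →ₗ[ℝ] E') : vacs ι E' ∘ₗ lift ι j = j ∘ₗ vacs ι E := by
  refine LinearMap.ext fun f => ?_; simp
theorem lift_sop (j : E →ₗ[ℝ] E') (i : ι) : lift ι j ∘ₗ sop E i = sop E' i ∘ₗ lift ι j := by
  refine LinearMap.ext fun f => Finsupp.ext fun w => ?_; cases w <;> simp [sop]
  split_ifs <;> simp
theorem lift_rsop (j : E →ₗ[ℝ] E') (i : ι) : lift ι j ∘ₗ rsop E i = rsop E' i ∘ₗ lift ι j := by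
  refine LinearMap.ext fun f => Finsupp.ext fun w => ?_; simp
theorem lift_rop (j : E →ₗ[ℝ] E') (i : ι) : lift ι j ∘ₗ rop E i = rop E' i ∘ₗ lift ι j := by
  refine LinearMap.ext fun f => Finsupp.ext fun w => ?_
  rcases List.eq_nil_or_concat w with h | ⟨v, l, h⟩
  · subst h; simp
  · rw [List.concat_eq_append] at h
    subst h; simp
    split_ifs <;> simp
theorem lift_top (j : E →ₗ[ℝ] E') (i : ι) : lift ι j ∘ₗ top E i = top E' i ∘ₗ lift ι j := by
  have := lift_rop j i
  have h2 := lift_rsop j i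
  simp only [top, LinearMap.comp_add, LinearMap.add_comp, this, h2]

theorem fock_vac (β : PForm E) (x : E) (g : Fk ι E) :
    (β.fock ι).b (vac ι E x) g = β.b x (vacs ι E g) := fb_single _ _ _ _

theorem fock_ext {b b' : Fk ι E →ₗ[ℝ] Fk ι E →ₗ[ℝ] ℝ}
    (h : ∀ w x g, b (Finsupp.single w x) g = b' (Finsupp.single w x) g) (f g) : b f g = b' f g := by
  have : b = b' := by
    apply Finsupp.lhom_ext; intro w x; refine LinearMap.ext fun g => ?_; exact h w x g
  rw [this]

theorem lop_adj (β : PForm E) (i : ι) (f g : Fk ι E) :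
    (β.fock ι).b (lop E i f) g = (β.fock ι).b f (lsop E i g) := by
  refine fock_ext (b := (β.fock ι).b ∘ₗ lop E i) (b' := (β.fock ι).b.compl₂ (lsop E i)) ?_ f g
  intro w x g
  simp [lop, PForm.fock, Finsupp.mapDomain_single, fb_single]

theorem rop_adj (β : PForm E) (i : ι) (f g : Fk ι E) :
    (β.fock ι).b (rop E i f) g = (β.fock ι).b f (rsop E i g) := by
  refine fock_ext (b := (β.fock ι).b ∘ₗ rop E i) (b' := (β.fock ι).b.compl₂ (rsop E i)) ?_ f g
  intro w x g
  simp [rop, PForm.fock, Finsupp.mapDomain_single, fb_single]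

theorem lift_adj (β : PForm E) {A A' : Module.End ℝ E} (h : ∀ x y, β.b (A x) y = β.b x (A' y))
    (f g : Fk ι E) :
    (β.fock ι).b (lift ι A f) g = (β.fock ι).b f (lift ι A' g) := by
  refine fock_ext (b := (β.fock ι).b ∘ₗ lift ι A) (b' := (β.fock ι).b.compl₂ (lift ι A')) ?_ f g
  intro w x g
  simp [lift, PForm.fock, fb_single, h]

theorem sop_symm (β : PForm E) (i : ι) : Sym (β.fock ι) (sop E i) := by
  intro x y
  simp only [sop, LinearMap.add_apply, map_add, lop_adj]
  rw [(β.fock ι).symm (lsop E i x), ← lop_adj, (β.fock ι).symm x, lop_adj β i y]; ring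

theorem top_symm (β : PForm E) (i : ι) : Sym (β.fock ι) (top E i) := by
  intro x y
  simp only [top, LinearMap.add_apply, map_add, rop_adj]
  rw [(β.fock ι).symm (rsop E i x), ← rop_adj, (β.fock ι).symm x, rop_adj β i y]; ring

theorem lift_symm (β : PForm E) {A : Module.End ℝ E} (h : Sym β A) : Sym (β.fock ι) (lift ι A) :=
  lift_adj β h

end
end FCB

namespace FCB
set_option linter.unusedSectionVars false
set_option linter.unusedSimpArgs false

section
variable {ι : Type*} [Fintype ι] [DecidableEq ι]
variable {E E' : Type*} [AddCommGroup E] [Module ℝ E] [AddCommGroup E'] [Module ℝ E']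

/-- `A ⊗ 1 + q ∑ B_i ⊗ s_i` -/
noncomputable def Yop (A : Module.End ℝ E) (B : ι → Module.End ℝ E) (q : ℝ) :
    Module.End ℝ (Fk ι E) := lift ι A + q • ∑ i, sop E i * lift ι (B i)
/-- `A ⊗ 1 + q ∑ B_i ⊗ t_i` -/
noncomputable def Ytop (A : Module.End ℝ E) (B : ι → Module.End ℝ E) (q : ℝ) :
    Module.End ℝ (Fk ι E) := lift ι A + q • ∑ i, top E i * lift ι (B i)

/-- moments -/
noncomputable def Mo (A : Module.End ℝ E) (B : ι → Module.End ℝ E) (q : ℝ) (m : ℕ) :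
    Module.End ℝ E := vacs ι E ∘ₗ (Yop A B q ^ m) ∘ₗ vac ι E

theorem Mo_apply (A : Module.End ℝ E) (B : ι → Module.End ℝ E) (q : ℝ) (m : ℕ) (e : E) :
    Mo A B q m e = vacs ι E ((Yop A B q ^ m) (vac ι E e)) := rfl

theorem Mo_zero (A : Module.End ℝ E) (B : ι → Module.End ℝ E) (q : ℝ) : Mo A B q 0 = 1 := by
  refine LinearMap.ext fun e => ?_
  simp [Mo_apply]

theorem lift_sop' (C : E →ₗ[ℝ] E') (i : ι) (f : Fk ι E) :
    lift ι C (sop E i f) = sop E' i (lift ι C f) := LinearMap.congr_fun (lift_sop C i) f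
theorem lift_top' (C : E →ₗ[ℝ] E') (i : ι) (f : Fk ι E) :
    lift ι C (top E i f) = top E' i (lift ι C f) := LinearMap.congr_fun (lift_top C i) f
theorem lift_rsop' (C : E →ₗ[ℝ] E') (i : ι) (f : Fk ι E) :
    lift ι C (rsop E i f) = rsop E' i (lift ι C f) := LinearMap.congr_fun (lift_rsop C i) f
theorem lift_rop' (C : E →ₗ[ℝ] E') (i : ι) (f : Fk ι E) :
    lift ι C (rop E i f) = rop E' i (lift ι C f) := LinearMap.congr_fun (lift_rop C i) f
theorem lift_vac' (C : E →ₗ[ℝ] E') (f : E) :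
    lift ι C (vac ι E f) = vac ι E' (C f) := LinearMap.congr_fun (lift_vac C) f
theorem lift_vacs' (C : E →ₗ[ℝ] E') (f : Fk ι E) :
    vacs ι E' (lift ι C f) = C (vacs ι E f) := LinearMap.congr_fun (lift_vacs C) f

theorem Yop_apply (A : Module.End ℝ E) (B : ι → Module.End ℝ E) (q : ℝ) (f : Fk ι E) :
    Yop A B q f = lift ι A f + q • ∑ i, sop E i (lift ι (B i) f) := by
  simp [Yop, LinearMap.sum_apply]
theorem Ytop_apply (A : Module.End ℝ E) (B : ι → Module.End ℝ E) (q : ℝ) (f : Fk ι E) :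
    Ytop A B q f = lift ι A f + q • ∑ i, top E i (lift ι (B i) f) := by
  simp [Ytop, LinearMap.sum_apply]

theorem rsop_Y (A : Module.End ℝ E) (B : ι → Module.End ℝ E) (q : ℝ) (j : ι) (f : Fk ι E) :
    rsop E j (Yop A B q f) = Yop A B q (rsop E j f) + q • vac ι E (B j (vacs ι E f)) := by
  have h : ∀ i g, rsop E j (sop E i g) = sop E i (rsop E j g) +
      if j = i then vac ι E (vacs ι E g) else 0 := by
    intro i g
    have := LinearMap.congr_fun (rsop_sop (E := E) j i) g
    rw [Module.End.mul_apply] at this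
    rw [this]; split_ifs <;> simp
  simp only [Yop_apply, map_add, map_smul, map_sum, h, lift_rsop', Finset.sum_add_distrib,
    Finset.sum_ite_eq, Finset.mem_univ, if_true, smul_add, lift_vacs', add_assoc]

theorem Y_rop (A : Module.End ℝ E) (B : ι → Module.End ℝ E) (q : ℝ) (j : ι) (f : Fk ι E) :
    Yop A B q (rop E j f) = rop E j (Yop A B q f) + q • vac ι E (B j (vacs ι E f)) := by
  have h : ∀ i g, sop E i (rop E j g) = rop E j (sop E i g) +
      if i = j then vac ι E (vacs ι E g) else 0 := by
    intro i g
    have := LinearMap.congr_fun (sop_rop (E := E) i j) g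
    rw [Module.End.mul_apply] at this
    rw [this]; split_ifs <;> simp
  simp only [Yop_apply, map_add, map_smul, map_sum, h, lift_rop', Finset.sum_add_distrib,
    Finset.sum_ite_eq', Finset.mem_univ, if_true, smul_add, lift_vacs', add_assoc]

theorem rsop_Ypow (A : Module.End ℝ E) (B : ι → Module.End ℝ E) (q : ℝ) (j : ι) (m : ℕ) (e : E) :
    rsop E j ((Yop A B q ^ m) (vac ι E e)) =
      q • ∑ b ∈ Finset.range m, (Yop A B q ^ (m - 1 - b)) (vac ι E (B j (Mo A B q b e))) := by
  induction m with
  | zero => simpa using LinearMap.congr_fun (rsop_vac (E := E) j) e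
  | succ m ih =>
    rw [pow_succ', Module.End.mul_apply, rsop_Y, ih, Finset.sum_range_succ, smul_add, ← Mo_apply,
      map_smul, map_sum]
    congr 2
    · refine Finset.sum_congr rfl fun b hb => ?_
      rw [Finset.mem_range] at hb
      rw [← Module.End.mul_apply, ← pow_succ']
      congr 2; omega
    · simp

theorem vacs_Ypow_rop (A : Module.End ℝ E) (B : ι → Module.End ℝ E) (q : ℝ) (j : ι) (m : ℕ)
    (f : Fk ι E) :
    vacs ι E ((Yop A B q ^ m) (rop E j f)) =
      q • ∑ a ∈ Finset.range m, Mo A B q a (B j (vacs ι E ((Yop A B q ^ (m - 1 - a)) f))) := by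
  induction m generalizing f with
  | zero => simpa using LinearMap.congr_fun (vacs_rop (E := E) j) f
  | succ m ih =>
    rw [pow_succ, Module.End.mul_apply, Y_rop, map_add, map_add, ih, Finset.sum_range_succ,
      smul_add, map_smul, map_smul, ← Mo_apply]
    congr 2
    · refine Finset.sum_congr rfl fun b hb => ?_
      rw [Finset.mem_range] at hb
      have : (Yop A B q ^ (m - 1 - b)) ((Yop A B q) f) = (Yop A B q ^ (m + 1 - 1 - b)) f := by
        rw [← Module.End.mul_apply, ← pow_succ]
        congr 2; omega
      rw [this]
    · simp

theorem Dformula (A : Module.End ℝ E) (B : ι → Module.End ℝ E) (q : ℝ) (C : Module.End ℝ E)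
    (a b : ℕ) (v : E) :
    vacs ι E ((Yop A B q ^ a) (lift ι C ((Yop A B q ^ b) (vac ι E v)))) =
      Mo A B q a (C (Mo A B q b v)) + q ^ 2 • ∑ j, ∑ a1 ∈ Finset.range a, ∑ b2 ∈ Finset.range b,
        Mo A B q a1 (B j (vacs ι E ((Yop A B q ^ (a - 1 - a1)) (lift ι C
          ((Yop A B q ^ (b - 1 - b2)) (vac ι E (B j (Mo A B q b2 v)))))))) := by
  set g := lift ι C ((Yop A B q ^ b) (vac ι E v)) with hg
  have hres : g = vac ι E (vacs ι E g) + ∑ j, rop E j (rsop E j g) := by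
    have := LinearMap.congr_fun (resolution (ι := ι) (E := E)) g
    simpa [LinearMap.sum_apply] using this
  rw [hres, map_add, map_add, ← Mo_apply, hg, lift_vacs', ← Mo_apply, map_sum, map_sum]
  congr 1
  rw [Finset.smul_sum]
  refine Finset.sum_congr rfl fun j _ => ?_
  rw [vacs_Ypow_rop, sq, mul_smul, ← lift_rsop', rsop_Ypow]
  congr 1
  simp only [map_smul, map_sum]
  rw [Finset.smul_sum]

theorem vacs_sop_Ypow (A : Module.End ℝ E) (B : ι → Module.End ℝ E) (q : ℝ) (j : ι) (m : ℕ)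
    (e : E) :
    vacs ι E (sop E j ((Yop A B q ^ m) (vac ι E e))) =
      q • ∑ b ∈ Finset.range m, Mo A B q (m - 1 - b) (B j (Mo A B q b e)) := by
  have := LinearMap.congr_fun (vacs_sop (E := E) j) ((Yop A B q ^ m) (vac ι E e))
  simp only [LinearMap.comp_apply] at this
  rw [this, rsop_Ypow, map_smul, map_sum]; rfl

/-! intertwining -/
theorem Yop_intertwine {A : Module.End ℝ E} {B : ι → Module.End ℝ E} {A' : Module.End ℝ E'}
    {B' : ι → Module.End ℝ E'} (q : ℝ) (j : E →ₗ[ℝ] E') (hA : ∀ e, j (A e) = A' (j e))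
    (hB : ∀ i e, j (B i e) = B' i (j e)) (f : Fk ι E) :
    lift ι j (Yop A B q f) = Yop A' B' q (lift ι j f) := by
  have h : ∀ (C : Module.End ℝ E) (C' : Module.End ℝ E') (_ : ∀ e, j (C e) = C' (j e)) g,
      lift ι j (lift ι C g) = lift ι C' (lift ι j g) := by
    intro C C' h g; ext w; simp [h]
  simp only [Yop_apply, map_add, map_smul, map_sum, lift_sop', h _ _ hA, h _ _ (hB _)]

theorem Ytop_intertwine {A : Module.End ℝ E} {B : ι → Module.End ℝ E} {A' : Module.End ℝ E'}
    {B' : ι → Module.End ℝ E'} (q : ℝ) (j : E →ₗ[ℝ] E') (hA : ∀ e, j (A e) = A' (j e))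
    (hB : ∀ i e, j (B i e) = B' i (j e)) (f : Fk ι E) :
    lift ι j (Ytop A B q f) = Ytop A' B' q (lift ι j f) := by
  have h : ∀ (C : Module.End ℝ E) (C' : Module.End ℝ E') (_ : ∀ e, j (C e) = C' (j e)) g,
      lift ι j (lift ι C g) = lift ι C' (lift ι j g) := by
    intro C C' h g; ext w; simp [h]
  simp only [Ytop_apply, map_add, map_smul, map_sum, lift_top', h _ _ hA, h _ _ (hB _)]

theorem pow_intertwine {V W : Type*} [AddCommGroup V] [Module ℝ V] [AddCommGroup W] [Module ℝ W]
    {T : Module.End ℝ V} {S : Module.End ℝ W} (J : V →ₗ[ℝ] W) (h : ∀ v, J (T v) = S (J v)) (n : ℕ)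
    (v : V) : J ((T ^ n) v) = (S ^ n) (J v) := by
  induction n generalizing v with
  | zero => simp
  | succ n ih => rw [pow_succ, Module.End.mul_apply, ih, h, pow_succ, Module.End.mul_apply]

theorem Mo_intertwine {A : Module.End ℝ E} {B : ι → Module.End ℝ E} {A' : Module.End ℝ E'}
    {B' : ι → Module.End ℝ E'} (q : ℝ) (j : E →ₗ[ℝ] E') (hA : ∀ e, j (A e) = A' (j e))
    (hB : ∀ i e, j (B i e) = B' i (j e)) (m : ℕ) (e : E) :
    j (Mo A B q m e) = Mo A' B' q m (j e) := by
  rw [Mo_apply, Mo_apply, ← lift_vacs', pow_intertwine _ (Yop_intertwine q j hA hB), lift_vac']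

/-! symmetry and commutation -/
theorem Yop_sym (β : PForm E) {A : Module.End ℝ E} {B : ι → Module.End ℝ E} (q : ℝ)
    (hA : Sym β A) (hB : ∀ i, Sym β (B i)) : Sym (β.fock ι) (Yop A B q) := by
  refine (lift_symm β hA).add (Sym.smul (Sym.sum _ fun i => ?_) q)
  refine (sop_symm β i).mul (lift_symm β (hB i)) ?_
  exact LinearMap.ext fun f => (lift_sop' (B i) i f).symm

theorem Ytop_sym (β : PForm E) {A : Module.End ℝ E} {B : ι → Module.End ℝ E} (q : ℝ)
    (hA : Sym β A) (hB : ∀ i, Sym β (B i)) : Sym (β.fock ι) (Ytop A B q) := by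
  refine (lift_symm β hA).add (Sym.smul (Sym.sum _ fun i => ?_) q)
  refine (top_symm β i).mul (lift_symm β (hB i)) ?_
  exact LinearMap.ext fun f => (lift_top' (B i) i f).symm

theorem lift_commute {C D : Module.End ℝ E} (h : Commute C D) :
    Commute (lift ι C : Module.End ℝ (Fk ι E)) (lift ι D) := by
  unfold Commute SemiconjBy
  rw [← lift_mul, ← lift_mul, h.eq]

theorem sop_lift_commute (i : ι) (C : Module.End ℝ E) :
    Commute (sop E i) (lift ι C : Module.End ℝ (Fk ι E)) :=
  LinearMap.ext fun f => (lift_sop' C i f).symm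
theorem top_lift_commute (i : ι) (C : Module.End ℝ E) :
    Commute (top E i) (lift ι C : Module.End ℝ (Fk ι E)) :=
  LinearMap.ext fun f => (lift_top' C i f).symm
theorem sop_top_commute (i j : ι) : Commute (sop E i) (top E j) := sop_top i j

theorem lift_Yop_commute {C A : Module.End ℝ E} {B : ι → Module.End ℝ E} (q : ℝ)
    (hA : Commute C A) (hB : ∀ i, Commute C (B i)) :
    Commute (lift ι C : Module.End ℝ (Fk ι E)) (Yop A B q) := by
  refine (lift_commute hA).add_right (Commute.smul_right (Commute.sum_right _ _ _ fun i _ => ?_) q)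
  exact (sop_lift_commute i C).symm.mul_right (lift_commute (hB i))

theorem top_Yop_commute (j : ι) (A : Module.End ℝ E) (B : ι → Module.End ℝ E) (q : ℝ) :
    Commute (top E j) (Yop A B q) := by
  refine (top_lift_commute j A).add_right
    (Commute.smul_right (Commute.sum_right _ _ _ fun i _ => ?_) q)
  exact (sop_top_commute i j).symm.mul_right (top_lift_commute j (B i))

theorem Yop_Ytop_commute {A A' : Module.End ℝ E} {B B' : ι → Module.End ℝ E} (q q' : ℝ)
    (h1 : Commute A A') (h2 : ∀ i, Commute A (B' i)) (h3 : ∀ i, Commute (B i) A')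
    (h4 : ∀ i j, Commute (B i) (B' j)) : Commute (Yop A B q) (Ytop A' B' q') := by
  refine Commute.add_right (lift_Yop_commute q h1.symm fun i => (h3 i).symm).symm
    (Commute.smul_right (Commute.sum_right _ _ _ fun i _ => ?_) q')
  exact (top_Yop_commute i A B q).symm.mul_right
    (lift_Yop_commute q (h2 i).symm fun j => (h4 j i).symm).symm

theorem Yop_vac (A : Module.End ℝ E) (B : ι → Module.End ℝ E) (q : ℝ) (e : E) :
    Yop A B q (vac ι E e) = vac ι E (A e) + q • ∑ i, top E i (vac ι E (B i e)) := by
  have : ∀ i x, sop E i (vac ι E x) = top E i (vac ι E x) := fun i x =>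
    LinearMap.congr_fun (sop_vac (E := E) i) x
  simp only [Yop_apply, lift_vac', this]

theorem Mo_form (β : PForm E) (A : Module.End ℝ E) (B : ι → Module.End ℝ E) (q : ℝ) (m : ℕ)
    (x y : E) : β.b x (Mo A B q m y) = (β.fock ι).b (vac ι E x) ((Yop A B q ^ m) (vac ι E y)) := by
  rw [fock_vac]; rfl

theorem Mo_sym (β : PForm E) {A : Module.End ℝ E} {B : ι → Module.End ℝ E} (q : ℝ)
    (hA : Sym β A) (hB : ∀ i, Sym β (B i)) (m : ℕ) : Sym β (Mo A B q m) := by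
  intro x y
  rw [β.symm, Mo_form, Mo_form, (β.fock ι).symm, (Yop_sym β q hA hB).pow m]

end
end FCB

namespace FCB
set_option linter.unusedSectionVars false
set_option linter.unusedSimpArgs false

section
variable {ι : Type*} [Fintype ι] [DecidableEq ι]
variable {E : Type*} [AddCommGroup E] [Module ℝ E]

theorem comm4 {M : Type*} [Monoid M] (T : Fin 4 → M) (c01 : Commute (T 0) (T 1))
    (c02 : Commute (T 0) (T 2)) (c03 : Commute (T 0) (T 3)) (c12 : Commute (T 1) (T 2))
    (c13 : Commute (T 1) (T 3)) (c23 : Commute (T 2) (T 3)) : ∀ i j, Commute (T i) (T j) := by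
  intro i j
  fin_cases i <;> fin_cases j <;>
    first
    | exact Commute.refl _
    | exact c01 | exact c02 | exact c03 | exact c12 | exact c13 | exact c23
    | exact c01.symm | exact c02.symm | exact c03.symm | exact c12.symm | exact c13.symm
    | exact c23.symm

set_option maxHeartbeats 1000000 in
theorem abstract_crossing (β : PForm E) (A : Fin 4 → Module.End ℝ E)
    (B : Fin 4 → ι → Module.End ℝ E) (q : ℝ)
    (hA : ∀ k, Sym β (A k)) (hB : ∀ k i, Sym β (B k i))
    (cAA : ∀ k l, k ≠ l → Commute (A k) (A l)) (cAB : ∀ k l, k ≠ l → ∀ i, Commute (A k) (B l i))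
    (cBB : ∀ k l, k ≠ l → ∀ i j, Commute (B k i) (B l j))
    (ξ ζ : E) (R : ℝ) (hR : 0 ≤ R) (m : ℕ)
    (h0 : ∀ k, k ≠ 3 → β.b ξ (Mo (A k) (B k) q (2 * m) ξ) ≤ R)
    (h0' : ∀ k, k ≠ 3 → β.b ζ (Mo (A k) (B k) q (2 * m) ζ) ≤ R)
    (h3 : β.b ξ (vacs ι E ((Ytop (A 3) (B 3) q ^ (2 * m)) (vac ι E ξ))) ≤ R)
    (h3' : β.b ζ (vacs ι E ((Ytop (A 3) (B 3) q ^ (2 * m)) (vac ι E ζ))) ≤ R)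
    (w w' a b : ℕ) (hs : w + w' + a + b = 2 * m) :
    |β.b (Mo (A 1) (B 1) q w' (Mo (A 0) (B 0) q w ξ))
      (vacs ι E ((Yop (A 2) (B 2) q ^ a) ((Ytop (A 3) (B 3) q ^ b) (vac ι E ζ))))| ≤ R := by
  let β1 := β.fock ι
  let β2 := β1.fock ι
  let β3 := β2.fock ι
  let Y2 : Module.End ℝ (Fk ι E) := Yop (A 2) (B 2) q
  let Y3 : Module.End ℝ (Fk ι E) := Ytop (A 3) (B 3) q
  let Y1 : Module.End ℝ (Fk ι (Fk ι E)) := Yop (lift ι (A 1)) (fun i => lift ι (B 1 i)) q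
  let Y0 : Module.End ℝ (Fk ι (Fk ι (Fk ι E))) := Yop (lift ι (lift ι (A 0)))
    (fun i => lift ι (lift ι (B 0 i))) q
  let T : Fin 4 → Module.End ℝ (Fk ι (Fk ι (Fk ι E))) :=
    ![Y0, lift ι Y1, lift ι (lift ι Y2), lift ι (lift ι Y3)]
  have T0 : T 0 = Y0 := rfl
  have T1 : T 1 = lift ι Y1 := rfl
  have T2 : T 2 = lift ι (lift ι Y2) := rfl
  have T3 : T 3 = lift ι (lift ι Y3) := rfl
  have sT : ∀ i, Sym β3 (T i) := by
    intro i
    fin_cases i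
    · exact Yop_sym β2 q (lift_symm _ (lift_symm _ (hA 0)))
        fun i => lift_symm _ (lift_symm _ (hB 0 i))
    · exact lift_symm _ (Yop_sym β1 q (lift_symm _ (hA 1)) fun i => lift_symm _ (hB 1 i))
    · exact lift_symm _ (lift_symm _ (Yop_sym β q (hA 2) (hB 2)))
    · exact lift_symm _ (lift_symm _ (Ytop_sym β q (hA 3) (hB 3)))
  -- commutation
  have cY2 : ∀ C : Module.End ℝ E, Commute C (A 2) → (∀ i, Commute C (B 2 i)) →
      Commute (lift ι C : Module.End ℝ (Fk ι E)) Y2 := fun C h h' => lift_Yop_commute q h h'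
  have cY3 : ∀ C : Module.End ℝ E, Commute C (A 3) → (∀ i, Commute C (B 3 i)) →
      Commute (lift ι C : Module.End ℝ (Fk ι E)) Y3 := by
    intro C h h'
    refine (lift_commute h).add_right
      (Commute.smul_right (Commute.sum_right _ _ _ fun i _ => ?_) q)
    exact (top_lift_commute i C).symm.mul_right (lift_commute (h' i))
  have cY1 : ∀ C : Module.End ℝ (Fk ι E), Commute C (lift ι (A 1)) →
      (∀ i, Commute C (lift ι (B 1 i))) →
      Commute (lift ι C : Module.End ℝ (Fk ι (Fk ι E))) Y1 := fun C h h' => lift_Yop_commute q h h'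
  have cY0 : ∀ C : Module.End ℝ (Fk ι (Fk ι E)), Commute C (lift ι (lift ι (A 0))) →
      (∀ i, Commute C (lift ι (lift ι (B 0 i)))) →
      Commute (lift ι C : Module.End ℝ (Fk ι (Fk ι (Fk ι E)))) Y0 :=
        fun C h h' => lift_Yop_commute q h h'
  have c01 : Commute (T 0) (T 1) := by
    refine (cY0 _ ?_ fun i => ?_).symm
    · exact (cY1 _ (lift_commute (cAA 0 1 (by decide)))
        fun i => lift_commute (cAB 0 1 (by decide) i)).symm
    · exact (cY1 _ (lift_commute (cAB 1 0 (by decide) i).symm)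
        fun j => lift_commute (cBB 0 1 (by decide) i j)).symm
  have c02 : Commute (T 0) (T 2) := by
    refine (cY0 _ ?_ fun i => ?_).symm
    · exact lift_commute (cY2 _ (cAA 0 2 (by decide)) fun i => cAB 0 2 (by decide) i).symm
    · exact lift_commute (cY2 _ (cAB 2 0 (by decide) i).symm
        fun j => cBB 0 2 (by decide) i j).symm
  have c03 : Commute (T 0) (T 3) := by
    refine (cY0 _ ?_ fun i => ?_).symm
    · exact lift_commute (cY3 _ (cAA 0 3 (by decide)) fun i => cAB 0 3 (by decide) i).symm
    · exact lift_commute (cY3 _ (cAB 3 0 (by decide) i).symm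
        fun j => cBB 0 3 (by decide) i j).symm
  have c12 : Commute (T 1) (T 2) := by
    refine lift_commute (cY1 _ ?_ fun i => ?_).symm
    · exact (cY2 _ (cAA 1 2 (by decide)) fun i => cAB 1 2 (by decide) i).symm
    · exact (cY2 _ (cAB 2 1 (by decide) i).symm fun j => cBB 1 2 (by decide) i j).symm
  have c13 : Commute (T 1) (T 3) := by
    refine lift_commute (cY1 _ ?_ fun i => ?_).symm
    · exact (cY3 _ (cAA 1 3 (by decide)) fun i => cAB 1 3 (by decide) i).symm
    · exact (cY3 _ (cAB 3 1 (by decide) i).symm fun j => cBB 1 3 (by decide) i j).symm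
  have c23 : Commute (T 2) (T 3) :=
    lift_commute (lift_commute (Yop_Ytop_commute q q (cAA 2 3 (by decide))
      (cAB 2 3 (by decide)) (fun i => (cAB 3 2 (by decide) i).symm) (cBB 2 3 (by decide))))
  have cT : ∀ i j, Commute (T i) (T j) := by
    exact comm4 T c01 c02 c03 c12 c13 c23
  -- evaluation
  have ev : ∀ (x y : E) (e : Fin 4 → ℕ),
      β3.b (vac ι _ (vac ι _ (vac ι E x))) (mon T e (vac ι _ (vac ι _ (vac ι E y)))) =
      β.b (Mo (A 1) (B 1) q (e 1) (Mo (A 0) (B 0) q (e 0) x))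
        (vacs ι E ((Y2 ^ e 2) ((Y3 ^ e 3) (vac ι E y)))) := by
    intro x y e
    simp only [mon, Module.End.mul_apply, T0, T1, T2, T3, ← lift_pow, lift_vac']
    set g := (Y2 ^ e 2) ((Y3 ^ e 3) (vac ι E y)) with hg
    set h := (Y1 ^ e 1) (vac ι _ g) with hh
    have i0 : ∀ z : E, Mo (lift ι (lift ι (A 0))) (fun i => lift ι (lift ι (B 0 i))) q (e 0)
        (vac ι _ (vac ι E z)) = vac ι _ (vac ι E (Mo (A 0) (B 0) q (e 0) z)) := by
      intro z
      have := Mo_intertwine (A := A 0) (B := B 0) (A' := lift ι (lift ι (A 0)))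
        (B' := fun i => lift ι (lift ι (B 0 i))) q (vac ι _ ∘ₗ vac ι E)
        (by intro e; simp [lift_vac']) (by intro i e; simp [lift_vac']) (e 0) z
      simpa using this.symm
    have i1 : ∀ z : E, Mo (lift ι (A 1)) (fun i => lift ι (B 1 i)) q (e 1)
        (vac ι _ z) = vac ι _ (Mo (A 1) (B 1) q (e 1) z) := by
      intro z
      have := Mo_intertwine (A := A 1) (B := B 1) (A' := lift ι (A 1))
        (B' := fun i => lift ι (B 1 i)) q (vac ι E)
        (by intro e; simp [lift_vac']) (by intro i e; simp [lift_vac']) (e 1) z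
      simpa using this.symm
    have s1 : β3.b (vac ι _ (vac ι _ (vac ι E x))) ((Y0 ^ e 0) (vac ι _ h)) =
        β2.b (vac ι _ (vac ι E (Mo (A 0) (B 0) q (e 0) x))) h := by
      rw [← Mo_form β2, ← Mo_sym β2 q (lift_symm _ (lift_symm _ (hA 0)))
        (fun i => lift_symm _ (lift_symm _ (hB 0 i))), i0]
    rw [s1, hh]
    have s2 : ∀ z : E, β2.b (vac ι _ (vac ι E z)) ((Y1 ^ e 1) (vac ι _ g)) =
        β1.b (vac ι E (Mo (A 1) (B 1) q (e 1) z)) g := by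
      intro z
      rw [← Mo_form β1, ← Mo_sym β1 q (lift_symm _ (hA 1))
        (fun i => lift_symm _ (hB 1 i)), i1]
    rw [s2, fock_vac]
  have vert : ∀ x : E, (∀ k, k ≠ 3 → β.b x (Mo (A k) (B k) q (2 * m) x) ≤ R) →
      β.b x (vacs ι E ((Ytop (A 3) (B 3) q ^ (2 * m)) (vac ι E x))) ≤ R →
      ∀ k, β3.b (vac ι _ (vac ι _ (vac ι E x))) ((T k ^ (2 * m))
        (vac ι _ (vac ι _ (vac ι E x)))) ≤ R := by
    intro x h h' k
    rw [← mon_single T k (2 * m), ev]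
    fin_cases k
    · have := h 0 (by decide)
      simp only [Fin.zero_eta, Pi.single_eq_same, ne_eq, Fin.reduceEq, not_false_eq_true,
        Pi.single_eq_of_ne, pow_zero, Module.End.one_apply, Mo_zero]
      rw [Mo_sym β q (hA 0) (hB 0)]
      simpa using this
    · have := h 1 (by decide)
      simp only [Fin.mk_one, Pi.single_eq_same, ne_eq, Fin.reduceEq, not_false_eq_true,
        Pi.single_eq_of_ne, pow_zero, Module.End.one_apply, Mo_zero]
      rw [Mo_sym β q (hA 1) (hB 1)]
      simpa using this
    · have := h 2 (by decide)
      simpa [Mo_zero, Mo_apply] using this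
    · simpa [Mo_zero] using h'
  have key := mon_le β3 T cT sT (vac ι _ (vac ι _ (vac ι E ξ))) (vac ι _ (vac ι _ (vac ι E ζ)))
    R hR m (vert ξ h0 h3) (vert ζ h0' h3') ![w, w', a, b] (by simp [Fin.sum_univ_four, hs])
  rw [ev] at key
  simpa using key

end
end FCB

namespace FCB
set_option linter.unusedSectionVars false
set_option linter.unusedSimpArgs false

section
variable {ι : Type*} [Fintype ι] [DecidableEq ι]
variable {D : Type*} [Fintype D] [DecidableEq D]

/-- dot product form -/
noncomputable def dform (D : Type*) [Fintype D] : PForm (D → ℝ) where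
  b := LinearMap.mk₂ ℝ (fun x y => ∑ k, x k * y k)
    (by intros; simp [add_mul, Finset.sum_add_distrib])
    (by intros; simp [Finset.mul_sum, mul_assoc])
    (by intros; simp [mul_add, Finset.sum_add_distrib])
    (by intros; simp [Finset.mul_sum, mul_left_comm])
  symm := by intro x y; simp [mul_comm]
  nonneg := by intro x; simpa using Finset.sum_nonneg fun k _ => mul_self_nonneg (x k)

theorem dform_apply (x y : D → ℝ) : (dform D).b x y = ∑ k, x k * y k := rfl

/-- Hilbert-Schmidt form -/
noncomputable def hs (D : Type*) [Fintype D] : PForm (Matrix D D ℝ) where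
  b := LinearMap.mk₂ ℝ (fun x y => ∑ k, ∑ l, x k l * y k l)
    (by intros; simp [add_mul, Finset.sum_add_distrib])
    (by intros; simp [Finset.mul_sum, mul_assoc])
    (by intros; simp [mul_add, Finset.sum_add_distrib])
    (by intros; simp [Finset.mul_sum, mul_left_comm])
  symm := by intro x y; simp [mul_comm]
  nonneg := by
    intro x
    simpa using Finset.sum_nonneg fun k _ => Finset.sum_nonneg fun l _ => mul_self_nonneg (x k l)

theorem hs_apply (x y : Matrix D D ℝ) : (hs D).b x y = ∑ k, ∑ l, x k l * y k l := rfl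

theorem hs_trace (x y : Matrix D D ℝ) : (hs D).b x y = (x.transpose * y).trace := by
  rw [hs_apply, Finset.sum_comm]
  simp [Matrix.trace, Matrix.mul_apply]

theorem hs_mulLeft (C x y : Matrix D D ℝ) :
    (hs D).b (C * x) y = (hs D).b x (C.transpose * y) := by
  rw [hs_trace, hs_trace, Matrix.transpose_mul, Matrix.mul_assoc]

theorem hs_mulRight (C x y : Matrix D D ℝ) :
    (hs D).b (x * C) y = (hs D).b x (y * C.transpose) := by
  rw [hs_trace, hs_trace, Matrix.transpose_mul, Matrix.mul_assoc, Matrix.trace_mul_comm,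
    Matrix.mul_assoc]

theorem dform_mulVec (C : Matrix D D ℝ) (x y : D → ℝ) :
    (dform D).b (C.mulVec x) y = (dform D).b x (C.transpose.mulVec y) := by
  change (C.mulVec x) ⬝ᵥ y = x ⬝ᵥ (C.transpose.mulVec y)
  rw [Matrix.mulVec_transpose, dotProduct_comm, Matrix.dotProduct_mulVec, dotProduct_comm]

/-- moment matrices -/
noncomputable def Ym (A : Matrix D D ℝ) (B : ι → Matrix D D ℝ) (q : ℝ) :
    Module.End ℝ (Fk ι (D → ℝ)) := Yop A.mulVecLin (fun i => (B i).mulVecLin) q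

theorem Ym_sym {A : Matrix D D ℝ} {B : ι → Matrix D D ℝ} (q : ℝ) (hA : A.transpose = A)
    (hB : ∀ i, (B i).transpose = B i) : Sym ((dform D).fock ι) (Ym A B q) := by
  refine Yop_sym _ q ?_ ?_
  · intro x y; simp [dform_mulVec, hA]
  · intro i x y; simp [dform_mulVec, hB i]

noncomputable def Mm (A : Matrix D D ℝ) (B : ι → Matrix D D ℝ) (q : ℝ) (m : ℕ) : Matrix D D ℝ :=
  LinearMap.toMatrix' (Mo A.mulVecLin (fun i => (B i).mulVecLin) q m)

noncomputable def Nm (A : Matrix D D ℝ) (B : ι → Matrix D D ℝ) (q : ℝ) (a b : ℕ)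
    (C : Matrix D D ℝ) : Matrix D D ℝ :=
  LinearMap.toMatrix' (vacs ι _ ∘ₗ (Ym A B q ^ a) ∘ₗ lift ι C.mulVecLin ∘ₗ (Ym A B q ^ b) ∘ₗ
    vac ι _)

theorem Mm_mulVec (A : Matrix D D ℝ) (B : ι → Matrix D D ℝ) (q : ℝ) (m : ℕ) (v : D → ℝ) :
    (Mm A B q m).mulVec v = vacs ι _ ((Ym A B q ^ m) (vac ι _ v)) := by
  rw [Mm, LinearMap.toMatrix'_mulVec]; rfl

theorem Mm_mulVec' (A : Matrix D D ℝ) (B : ι → Matrix D D ℝ) (q : ℝ) (m : ℕ) (v : D → ℝ) :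
    (Mm A B q m).mulVec v = Mo A.mulVecLin (fun i => (B i).mulVecLin) q m v := by
  rw [Mm, LinearMap.toMatrix'_mulVec]

theorem Nm_mulVec (A : Matrix D D ℝ) (B : ι → Matrix D D ℝ) (q : ℝ) (a b : ℕ)
    (C : Matrix D D ℝ) (v : D → ℝ) :
    (Nm A B q a b C).mulVec v = vacs ι _ ((Ym A B q ^ a) (lift ι C.mulVecLin
      ((Ym A B q ^ b) (vac ι _ v)))) := by
  rw [Nm, LinearMap.toMatrix'_mulVec]; rfl

theorem mat_ext {X Y : Matrix D D ℝ} (h : ∀ v, X.mulVec v = Y.mulVec v) : X = Y :=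
  Matrix.ext_of_mulVec_single fun i => h _

theorem Mm_zero (A : Matrix D D ℝ) (B : ι → Matrix D D ℝ) (q : ℝ) : Mm A B q 0 = 1 := by
  apply mat_ext; intro v; rw [Mm_mulVec', Mo_zero]; simp

theorem Mm_transpose {A : Matrix D D ℝ} {B : ι → Matrix D D ℝ} (q : ℝ) (hA : A.transpose = A)
    (hB : ∀ i, (B i).transpose = B i) (m : ℕ) : (Mm A B q m).transpose = Mm A B q m := by
  have h := Mo_sym (ι := ι) (dform D) (A := A.mulVecLin) (B := fun i => (B i).mulVecLin) q
    (by intro x y; simp [dform_mulVec, hA]) (by intro i x y; simp [dform_mulVec, hB i]) m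
  ext i j
  have := h (Pi.single i 1) (Pi.single j 1)
  rw [← Mm_mulVec', ← Mm_mulVec'] at this
  simpa [dform_apply, Pi.single_apply] using this

theorem Nm_zero_left (A : Matrix D D ℝ) (B : ι → Matrix D D ℝ) (q : ℝ) (b : ℕ)
    (C : Matrix D D ℝ) : Nm A B q 0 b C = C * Mm A B q b := by
  apply mat_ext; intro v
  rw [Nm_mulVec, ← Matrix.mulVec_mulVec, Mm_mulVec, pow_zero, Module.End.one_apply, lift_vacs']
  rfl

theorem Nm_add (A : Matrix D D ℝ) (B : ι → Matrix D D ℝ) (q : ℝ) (a b : ℕ)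
    (C C' : Matrix D D ℝ) : Nm A B q a b (C + C') = Nm A B q a b C + Nm A B q a b C' := by
  apply mat_ext; intro v
  rw [Matrix.add_mulVec]
  simp only [Nm_mulVec, Matrix.mulVecLin_add, lift_add, LinearMap.add_apply, map_add]
theorem Nm_smul (A : Matrix D D ℝ) (B : ι → Matrix D D ℝ) (q : ℝ) (a b : ℕ)
    (c : ℝ) (C : Matrix D D ℝ) : Nm A B q a b (c • C) = c • Nm A B q a b C := by
  apply mat_ext; intro v
  have : (c • C).mulVecLin = c • C.mulVecLin := by ext1; simp [Matrix.smul_mulVec]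
  rw [Matrix.smul_mulVec]
  simp only [Nm_mulVec, this, lift_smul, LinearMap.smul_apply, map_smul]
/-- linear version -/
noncomputable def NmL (A : Matrix D D ℝ) (B : ι → Matrix D D ℝ) (q : ℝ) (a b : ℕ) :
    Matrix D D ℝ →ₗ[ℝ] Matrix D D ℝ where
  toFun := Nm A B q a b
  map_add' := Nm_add A B q a b
  map_smul' := Nm_smul A B q a b

theorem Nm_Dformula (A : Matrix D D ℝ) (B : ι → Matrix D D ℝ) (q : ℝ) (a b : ℕ)
    (C : Matrix D D ℝ) : Nm A B q a b C = Mm A B q a * C * Mm A B q b +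
      q ^ 2 • ∑ j, ∑ a1 ∈ Finset.range a, ∑ b2 ∈ Finset.range b,
        Mm A B q a1 * B j * Nm A B q (a - 1 - a1) (b - 1 - b2) C * B j * Mm A B q b2 := by
  apply mat_ext; intro v
  rw [Nm_mulVec]
  refine (Dformula _ _ q C.mulVecLin a b v).trans ?_
  simp only [Matrix.add_mulVec, Matrix.smul_mulVec, Matrix.sum_mulVec, ← Matrix.mulVec_mulVec,
    Mm_mulVec', Nm_mulVec, Matrix.mulVecLin_apply]
  rfl

/-! left/right multiplication model -/
theorem T4_eval (A : Matrix D D ℝ) (B : ι → Matrix D D ℝ) (q : ℝ) (b : ℕ) (Z : Matrix D D ℝ)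
    (e : D → ℝ) :
    lift ι ((Matrix.mulVecBilin ℝ ℝ).flip e : Matrix D D ℝ →ₗ[ℝ] (D → ℝ))
      ((Ytop (LinearMap.mulRight ℝ A) (fun i => LinearMap.mulRight ℝ (B i)) q ^ b) (vac ι _ Z)) =
    lift ι Z.mulVecLin ((Ym A B q ^ b) (vac ι _ e)) := by
  induction b generalizing e with
  | zero => simp [lift_vac']
  | succ b ih =>
    rw [pow_succ', Module.End.mul_apply, Ytop_apply, map_add, map_smul, map_sum]
    have h : ∀ (C : Matrix D D ℝ) (g : Fk ι (Matrix D D ℝ)),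
        lift ι ((Matrix.mulVecBilin ℝ ℝ).flip e : Matrix D D ℝ →ₗ[ℝ] (D → ℝ))
          (lift ι (LinearMap.mulRight ℝ C) g) =
        lift ι ((Matrix.mulVecBilin ℝ ℝ).flip (C.mulVec e) : Matrix D D ℝ →ₗ[ℝ] (D → ℝ)) g := by
      intro C g; ext1 w; simp
    simp only [lift_top', h, ih]
    rw [pow_succ, Module.End.mul_apply]
    have hv : Ym A B q (vac ι _ e) = vac ι _ (A.mulVec e) +
        q • ∑ i, top _ i (vac ι _ ((B i).mulVec e)) := Yop_vac _ _ _ _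
    rw [hv]
    have hc : ∀ i g, (Ym A B q ^ b) (top _ i g) = top _ i ((Ym A B q ^ b) g) := by
      intro i g
      have := (top_Yop_commute i A.mulVecLin (fun i => (B i).mulVecLin) q).pow_right b
      exact (LinearMap.congr_fun this.eq g).symm
    simp only [map_add, map_smul, map_sum, hc, lift_top']

theorem T34_eval (A : Matrix D D ℝ) (B : ι → Matrix D D ℝ) (q : ℝ) (a b : ℕ) (Z : Matrix D D ℝ) :
    vacs ι _ ((Yop (LinearMap.mulLeft ℝ A) (fun i => LinearMap.mulLeft ℝ (B i)) q ^ a)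
      ((Ytop (LinearMap.mulRight ℝ A) (fun i => LinearMap.mulRight ℝ (B i)) q ^ b) (vac ι _ Z))) =
    Nm A B q a b Z := by
  apply mat_ext; intro e
  rw [Nm_mulVec, ← T4_eval]
  have := pow_intertwine (lift ι ((Matrix.mulVecBilin ℝ ℝ).flip e :
      Matrix D D ℝ →ₗ[ℝ] (D → ℝ))) (Yop_intertwine (ι := ι) (A := LinearMap.mulLeft ℝ A)
    (B := fun i => LinearMap.mulLeft ℝ (B i))
    (A' := A.mulVecLin) (B' := fun i => (B i).mulVecLin) q ((Matrix.mulVecBilin ℝ ℝ).flip e)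
    (by intro X; simp) (by intro i X; simp)) a
  rw [Ym, ← this, lift_vacs']
  rfl

end
end FCB

namespace FCB
set_option linter.unusedSectionVars false
set_option linter.unusedSimpArgs false

section
variable {ι : Type*} [Fintype ι] [DecidableEq ι]
variable {D : Type*} [Fintype D] [DecidableEq D]

/-- four-legged tensors -/
abbrev E0 (D : Type*) := D → D → Matrix D D ℝ

noncomputable def form0 (D : Type*) [Fintype D] : PForm (E0 D) where
  b := LinearMap.mk₂ ℝ (fun x y => ∑ k, ∑ l, (hs D).b (x k l) (y k l))
    (by intros; simp [Finset.sum_add_distrib])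
    (by intros; simp [Finset.mul_sum])
    (by intros; simp [Finset.sum_add_distrib])
    (by intros; simp [Finset.mul_sum])
  symm := by
    intro x y
    simp only [LinearMap.mk₂_apply]
    exact Finset.sum_congr rfl fun k _ => Finset.sum_congr rfl fun l _ => (hs D).symm _ _
  nonneg := by
    intro x
    simp only [LinearMap.mk₂_apply]
    exact Finset.sum_nonneg fun k _ => Finset.sum_nonneg fun l _ => (hs D).nonneg _

theorem form0_apply (x y : E0 D) : (form0 D).b x y = ∑ k, ∑ l, (hs D).b (x k l) (y k l) := rfl

noncomputable def leg1 (C : Matrix D D ℝ) : Module.End ℝ (E0 D) where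
  toFun Z := fun α β => ∑ α', C α α' • Z α' β
  map_add' := by intros; funext α β; simp [Finset.sum_add_distrib]
  map_smul' := by intros; funext α β; simp only [Pi.smul_apply, RingHom.id_apply, Finset.smul_sum]; exact Finset.sum_congr rfl fun _ _ => smul_comm _ _ _
noncomputable def leg2 (C : Matrix D D ℝ) : Module.End ℝ (E0 D) where
  toFun Z := fun α β => ∑ β', C β β' • Z α β'
  map_add' := by intros; funext α β; simp [Finset.sum_add_distrib]
  map_smul' := by intros; funext α β; simp only [Pi.smul_apply, RingHom.id_apply, Finset.smul_sum]; exact Finset.sum_congr rfl fun _ _ => smul_comm _ _ _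
noncomputable def leg3 (C : Matrix D D ℝ) : Module.End ℝ (E0 D) where
  toFun Z := fun α β => C * Z α β
  map_add' := by intros; funext α β; simp [Matrix.mul_add]
  map_smul' := by intros; funext α β; simp
noncomputable def leg4 (C : Matrix D D ℝ) : Module.End ℝ (E0 D) where
  toFun Z := fun α β => Z α β * C
  map_add' := by intros; funext α β; simp [Matrix.add_mul]
  map_smul' := by intros; funext α β; simp

theorem leg1_apply (C : Matrix D D ℝ) (Z : E0 D) (α β) : leg1 C Z α β = ∑ α', C α α' • Z α' β := rfl
theorem leg2_apply (C : Matrix D D ℝ) (Z : E0 D) (α β) : leg2 C Z α β = ∑ β', C β β' • Z α β' := rfl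
theorem leg3_apply (C : Matrix D D ℝ) (Z : E0 D) (α β) : leg3 C Z α β = C * Z α β := rfl
theorem leg4_apply (C : Matrix D D ℝ) (Z : E0 D) (α β) : leg4 C Z α β = Z α β * C := rfl

/-- all legs -/
noncomputable def legs (k : Fin 4) (C : Matrix D D ℝ) : Module.End ℝ (E0 D) :=
  match k with
  | 0 => leg1 C
  | 1 => leg2 C
  | 2 => leg3 C
  | 3 => leg4 C

theorem legs_sym (k : Fin 4) {C : Matrix D D ℝ} (hC : C.transpose = C) :
    Sym (form0 D) (legs k C) := by
  have hc : ∀ i j, C i j = C j i := fun i j => by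
    conv_lhs => rw [← hC]
    rfl
  intro x y
  fin_cases k
  · change (form0 D).b (leg1 C x) y = (form0 D).b x (leg1 C y)
    simp only [form0_apply, leg1_apply, map_sum, LinearMap.sum_apply, map_smul,
      LinearMap.smul_apply, smul_eq_mul]
    rw [Finset.sum_comm]
    conv_rhs => rw [Finset.sum_comm]
    refine Finset.sum_congr rfl fun l _ => ?_
    rw [Finset.sum_comm]
    exact Finset.sum_congr rfl fun k _ => Finset.sum_congr rfl fun k' _ => by rw [hc]
  · change (form0 D).b (leg2 C x) y = (form0 D).b x (leg2 C y)
    simp only [form0_apply, leg2_apply, map_sum, LinearMap.sum_apply, map_smul,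
      LinearMap.smul_apply, smul_eq_mul]
    refine Finset.sum_congr rfl fun l _ => ?_
    rw [Finset.sum_comm]
    exact Finset.sum_congr rfl fun k _ => Finset.sum_congr rfl fun k' _ => by rw [hc]
  · change (form0 D).b (leg3 C x) y = (form0 D).b x (leg3 C y)
    simp only [form0_apply, leg3_apply, hs_mulLeft, hC]
  · change (form0 D).b (leg4 C x) y = (form0 D).b x (leg4 C y)
    simp only [form0_apply, leg4_apply, hs_mulRight, hC]

theorem legs_commute (k l : Fin 4) (hkl : k ≠ l) (C C' : Matrix D D ℝ) :
    Commute (legs k C) (legs l C') := by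
  have c12 : ∀ C C' : Matrix D D ℝ, Commute (leg1 C) (leg2 C') := by
    intro C C'
    refine LinearMap.ext fun Z => ?_
    funext α β
    simp only [Module.End.mul_apply, leg1_apply, leg2_apply, Finset.smul_sum]
    rw [Finset.sum_comm]
    exact Finset.sum_congr rfl fun k _ => Finset.sum_congr rfl fun k' _ => smul_comm _ _ _
  have c13 : ∀ C C' : Matrix D D ℝ, Commute (leg1 C) (leg3 C') := by
    intro C C'
    refine LinearMap.ext fun Z => ?_
    funext α β
    simp only [Module.End.mul_apply, leg1_apply, leg3_apply, Matrix.mul_sum, Matrix.mul_smul]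
  have c14 : ∀ C C' : Matrix D D ℝ, Commute (leg1 C) (leg4 C') := by
    intro C C'
    refine LinearMap.ext fun Z => ?_
    funext α β
    simp only [Module.End.mul_apply, leg1_apply, leg4_apply, Matrix.sum_mul, Matrix.smul_mul]
  have c23 : ∀ C C' : Matrix D D ℝ, Commute (leg2 C) (leg3 C') := by
    intro C C'
    refine LinearMap.ext fun Z => ?_
    funext α β
    simp only [Module.End.mul_apply, leg2_apply, leg3_apply, Matrix.mul_sum, Matrix.mul_smul]
  have c24 : ∀ C C' : Matrix D D ℝ, Commute (leg2 C) (leg4 C') := by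
    intro C C'
    refine LinearMap.ext fun Z => ?_
    funext α β
    simp only [Module.End.mul_apply, leg2_apply, leg4_apply, Matrix.sum_mul, Matrix.smul_mul]
  have c34 : ∀ C C' : Matrix D D ℝ, Commute (leg3 C) (leg4 C') := by
    intro C C'
    refine LinearMap.ext fun Z => ?_
    funext α β
    simp only [Module.End.mul_apply, leg3_apply, leg4_apply, Matrix.mul_assoc]
  match k, l, hkl with
  | 0, 0, h | 1, 1, h | 2, 2, h | 3, 3, h => exact absurd rfl h
  | 0, 1, _ => exact c12 _ _
  | 0, 2, _ => exact c13 _ _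
  | 0, 3, _ => exact c14 _ _
  | 1, 2, _ => exact c23 _ _
  | 1, 3, _ => exact c24 _ _
  | 2, 3, _ => exact c34 _ _
  | 1, 0, _ => exact (c12 _ _).symm
  | 2, 0, _ => exact (c13 _ _).symm
  | 3, 0, _ => exact (c14 _ _).symm
  | 2, 1, _ => exact (c23 _ _).symm
  | 3, 1, _ => exact (c24 _ _).symm
  | 3, 2, _ => exact (c34 _ _).symm

theorem Mo_leg1 (A : Matrix D D ℝ) (B : ι → Matrix D D ℝ) (q : ℝ) (m : ℕ) :
    Mo (leg1 A) (fun i => leg1 (B i)) q m = leg1 (Mm A B q m) := by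
  refine LinearMap.ext fun Z => ?_
  funext α β
  ext γ δ
  let j : E0 D →ₗ[ℝ] (D → ℝ) :=
    { toFun := fun Z α => Z α β γ δ, map_add' := fun _ _ => rfl, map_smul' := fun _ _ => rfl }
  have h : ∀ C Z, j (leg1 C Z) = C.mulVecLin (j Z) := by
    intro C Z; funext α
    change (∑ x, C α x • Z x β) γ δ = ∑ x, C α x * Z x β γ δ
    simp [Matrix.sum_apply]
  have := Mo_intertwine (ι := ι) (A := leg1 A) (B := fun i => leg1 (B i)) (A' := A.mulVecLin)
    (B' := fun i => (B i).mulVecLin) q j (h A) (fun i => h (B i)) m Z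
  rw [← Mm_mulVec'] at this
  exact (congrFun this α).trans (congrFun (h _ Z) α).symm

theorem Mo_leg2 (A : Matrix D D ℝ) (B : ι → Matrix D D ℝ) (q : ℝ) (m : ℕ) :
    Mo (leg2 A) (fun i => leg2 (B i)) q m = leg2 (Mm A B q m) := by
  refine LinearMap.ext fun Z => ?_
  funext α β
  ext γ δ
  let j : E0 D →ₗ[ℝ] (D → ℝ) :=
    { toFun := fun Z β => Z α β γ δ, map_add' := fun _ _ => rfl, map_smul' := fun _ _ => rfl }
  have h : ∀ C Z, j (leg2 C Z) = C.mulVecLin (j Z) := by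
    intro C Z; funext β
    change (∑ x, C β x • Z α x) γ δ = ∑ x, C β x * Z α x γ δ
    simp [Matrix.sum_apply]
  have := Mo_intertwine (ι := ι) (A := leg2 A) (B := fun i => leg2 (B i)) (A' := A.mulVecLin)
    (B' := fun i => (B i).mulVecLin) q j (h A) (fun i => h (B i)) m Z
  rw [← Mm_mulVec'] at this
  exact (congrFun this β).trans (congrFun (h _ Z) β).symm

theorem Mo_leg3 (A : Matrix D D ℝ) (B : ι → Matrix D D ℝ) (q : ℝ) (m : ℕ) :
    Mo (leg3 A) (fun i => leg3 (B i)) q m = leg3 (Mm A B q m) := by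
  refine LinearMap.ext fun Z => ?_
  funext α β
  ext γ δ
  let j : E0 D →ₗ[ℝ] (D → ℝ) :=
    { toFun := fun Z γ => Z α β γ δ, map_add' := fun _ _ => rfl, map_smul' := fun _ _ => rfl }
  have h : ∀ C Z, j (leg3 C Z) = C.mulVecLin (j Z) := by
    intro C Z; funext γ
    change (C * Z α β) γ δ = ∑ x, C γ x * Z α β x δ
    simp [Matrix.mul_apply]
  have := Mo_intertwine (ι := ι) (A := leg3 A) (B := fun i => leg3 (B i)) (A' := A.mulVecLin)
    (B' := fun i => (B i).mulVecLin) q j (h A) (fun i => h (B i)) m Z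
  rw [← Mm_mulVec'] at this
  exact (congrFun this γ).trans (congrFun (h _ Z) γ).symm

theorem leg34_eval (A : Matrix D D ℝ) (B : ι → Matrix D D ℝ) (q : ℝ) (a b : ℕ) (Z : E0 D)
    (α β : D) :
    vacs ι _ ((Yop (leg3 A) (fun i => leg3 (B i)) q ^ a)
      ((Ytop (leg4 A) (fun i => leg4 (B i)) q ^ b) (vac ι _ Z))) α β = Nm A B q a b (Z α β) := by
  let j : E0 D →ₗ[ℝ] Matrix D D ℝ :=
    { toFun := fun Z => Z α β, map_add' := fun _ _ => rfl, map_smul' := fun _ _ => rfl }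
  rw [← T34_eval]
  have h3 := pow_intertwine (lift ι j) (Yop_intertwine (ι := ι) (A := leg3 A)
    (B := fun i => leg3 (B i)) (A' := LinearMap.mulLeft ℝ A)
    (B' := fun i => LinearMap.mulLeft ℝ (B i)) q j (fun _ => rfl) (fun _ _ => rfl)) a
  have h4 := pow_intertwine (lift ι j) (Ytop_intertwine (ι := ι) (A := leg4 A)
    (B := fun i => leg4 (B i)) (A' := LinearMap.mulRight ℝ A)
    (B' := fun i => LinearMap.mulRight ℝ (B i)) q j (fun _ => rfl) (fun _ _ => rfl)) b
  have h5 : vac ι _ (Z α β) = lift ι j (vac ι _ Z) := (lift_vac' j Z).symm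
  rw [h5, ← h4, ← h3, lift_vacs']
  rfl

/-- elementary tensors -/
noncomputable def el1 (P Q : Matrix D D ℝ) : E0 D := fun α β => P α β • Q
noncomputable def el2 (P Q : Matrix D D ℝ) : E0 D := fun α β => Matrix.of fun γ δ => P β γ * Q δ α

theorem el1_el1 (P Q P' Q' : Matrix D D ℝ) :
    (form0 D).b (el1 P Q) (el1 P' Q') = (hs D).b P P' * (hs D).b Q Q' := by
  simp only [form0_apply, el1, map_smul, LinearMap.smul_apply, smul_eq_mul]
  rw [hs_apply P P', Finset.sum_mul]
  refine Finset.sum_congr rfl fun k _ => ?_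
  rw [Finset.sum_mul]
  exact Finset.sum_congr rfl fun l _ => by ring

theorem el2_el2 (P Q P' Q' : Matrix D D ℝ) :
    (form0 D).b (el2 P Q) (el2 P' Q') = (hs D).b P P' * (hs D).b Q Q' := by
  simp only [form0_apply, el2, hs_apply, Matrix.of_apply]
  rw [Finset.sum_comm, Finset.sum_mul]
  refine Finset.sum_congr rfl fun β _ => ?_
  rw [Finset.sum_comm, Finset.sum_mul]
  refine Finset.sum_congr rfl fun γ _ => ?_
  rw [Finset.sum_comm, Finset.mul_sum]
  refine Finset.sum_congr rfl fun δ _ => ?_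
  rw [Finset.mul_sum]
  exact Finset.sum_congr rfl fun l _ => by ring

theorem el2_el1 (P Q P' Q' : Matrix D D ℝ) :
    (form0 D).b (el2 P Q) (el1 P' Q') = (P' * P * Q' * Q).trace := by
  simp only [form0_apply, el2, el1, hs_apply, Matrix.of_apply, Matrix.trace, Matrix.diag_apply,
    Matrix.mul_apply, Matrix.smul_apply, smul_eq_mul, Finset.sum_mul]
  refine Finset.sum_congr rfl fun α _ => ?_
  rw [Finset.sum_comm]
  conv_rhs => rw [Finset.sum_comm]
  conv_lhs => enter [2, γ]; rw [Finset.sum_comm]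
  refine Finset.sum_congr rfl fun γ _ => ?_
  refine Finset.sum_congr rfl fun δ _ => ?_
  exact Finset.sum_congr rfl fun l _ => by ring

theorem leg1_el1 (C P Q : Matrix D D ℝ) : leg1 C (el1 P Q) = el1 (C * P) Q := by
  funext α β
  simp [leg1_apply, el1, Matrix.mul_apply, Finset.sum_smul, smul_smul]
theorem leg2_el1 (C P Q : Matrix D D ℝ) : leg2 C (el1 P Q) = el1 (P * C.transpose) Q := by
  funext α β
  simp [leg2_apply, el1, Matrix.mul_apply, Finset.sum_smul, smul_smul, mul_comm]
theorem leg3_el1 (C P Q : Matrix D D ℝ) : leg3 C (el1 P Q) = el1 P (C * Q) := by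
  funext α β
  simp [leg3_apply, el1]
theorem leg4_el1 (C P Q : Matrix D D ℝ) : leg4 C (el1 P Q) = el1 P (Q * C) := by
  funext α β
  simp [leg4_apply, el1]
theorem leg1_el2 (C P Q : Matrix D D ℝ) : leg1 C (el2 P Q) = el2 P (Q * C.transpose) := by
  funext α β; ext γ δ
  simp [leg1_apply, el2, Matrix.mul_apply, Matrix.sum_apply, Finset.mul_sum]
  exact Finset.sum_congr rfl fun l _ => by ring
theorem leg2_el2 (C P Q : Matrix D D ℝ) : leg2 C (el2 P Q) = el2 (C * P) Q := by
  funext α β; ext γ δ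
  simp [leg2_apply, el2, Matrix.mul_apply, Matrix.sum_apply, Finset.sum_mul]
  exact Finset.sum_congr rfl fun l _ => by ring
theorem leg3_el2 (C P Q : Matrix D D ℝ) : leg3 C (el2 P Q) = el2 (P * C.transpose) Q := by
  funext α β; ext γ δ
  simp [leg3_apply, el2, Matrix.mul_apply, Finset.sum_mul]
  exact Finset.sum_congr rfl fun l _ => by ring
theorem leg4_el2 (C P Q : Matrix D D ℝ) : leg4 C (el2 P Q) = el2 P (C.transpose * Q) := by
  funext α β; ext γ δ
  simp [leg4_apply, el2, Matrix.mul_apply, Finset.mul_sum]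
  exact Finset.sum_congr rfl fun l _ => by ring

end
end FCB

namespace FCB
set_option linter.unusedSectionVars false
set_option linter.unusedSimpArgs false

section
variable {ι : Type*} [Fintype ι] [DecidableEq ι]
variable {D : Type*} [Fintype D] [DecidableEq D]

theorem Mm_quad {A : Matrix D D ℝ} {B : ι → Matrix D D ℝ} (q : ℝ) (m : ℕ) (x y : D → ℝ) :
    (dform D).b x ((Mm A B q m).mulVec y) =
      ((dform D).fock ι).b (vac ι _ x) ((Ym A B q ^ m) (vac ι _ y)) := by
  rw [Mm_mulVec', Mo_form]; rfl

theorem Mm_psd {A : Matrix D D ℝ} {B : ι → Matrix D D ℝ} (q : ℝ) (hA : A.transpose = A)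
    (hB : ∀ i, (B i).transpose = B i) (m : ℕ) (x : D → ℝ) :
    0 ≤ (dform D).b x ((Mm A B q (2 * m)).mulVec x) := by
  rw [Mm_quad, two_mul, pow_add, Module.End.mul_apply, ← (Ym_sym q hA hB).pow m]
  exact PForm.nonneg _ _

open scoped MatrixOrder in
theorem psd_factor {M : Matrix D D ℝ} (hM : M.transpose = M)
    (h : ∀ x, 0 ≤ (dform D).b x (M.mulVec x)) : ∃ R : Matrix D D ℝ, M = R.transpose * R := by
  have : M.PosSemidef := by
    refine Matrix.PosSemidef.of_dotProduct_mulVec_nonneg ?_ ?_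
    · simpa [Matrix.IsHermitian] using hM
    · intro x
      have := h x
      rw [dform_apply] at this
      simpa [dotProduct] using this
  refine ⟨CFC.sqrt M, ?_⟩
  have h1 := (Matrix.nonneg_iff_posSemidef.1 (CFC.sqrt_nonneg M)).isHermitian
  have h2 : (CFC.sqrt M).transpose = CFC.sqrt M := by simpa [Matrix.IsHermitian] using h1
  rw [h2, CFC.sqrt_mul_sqrt_self M this.nonneg]

theorem hs_col (X Y : Matrix D D ℝ) :
    (hs D).b X Y = ∑ l, (dform D).b (fun k => X k l) (fun k => Y k l) := by
  simp only [hs_apply, dform_apply]; rw [Finset.sum_comm]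

theorem psd_hs_nonneg {M : Matrix D D ℝ} 
    (h : ∀ x, 0 ≤ (dform D).b x (M.mulVec x)) (X : Matrix D D ℝ) : 0 ≤ (hs D).b X (M * X) := by
  rw [hs_col]
  exact Finset.sum_nonneg fun l _ => h (fun k => X k l)

theorem lambda_bound {B : ι → Matrix D D ℝ} 
    (hB : ∀ i, (B i).transpose = B i) {M : Matrix D D ℝ} (hM : M.transpose = M)
    (h : ∀ x, 0 ≤ (dform D).b x (M.mulVec x)) (c : ι → ℝ) (Λ : ℝ)
    (hΛ : ∀ z, ∑ i, c i * (dform D).b ((B i).mulVec z) ((B i).mulVec z) ≤ Λ * (dform D).b z z) :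
    ∑ i, c i * (hs D).b (B i) (M * B i) ≤ Λ * M.trace := by
  obtain ⟨R, rfl⟩ := psd_factor hM h
  have h1 : ∀ i, (hs D).b (B i) (R.transpose * R * B i) =
      ∑ k, (dform D).b ((B i).mulVec (R k)) ((B i).mulVec (R k)) := by
    intro i
    rw [Matrix.mul_assoc, ← hs_mulLeft, hs_apply]
    refine Finset.sum_congr rfl fun k _ => ?_
    rw [dform_apply]
    refine Finset.sum_congr rfl fun l _ => ?_
    have : (R * B i) k l = (B i).mulVec (R k) l := by
      conv_rhs => rw [← hB i]
      rw [Matrix.mulVec_transpose]; rfl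
    rw [this]
  have h2 : (R.transpose * R).trace = ∑ k, (dform D).b (R k) (R k) := by
    rw [← hs_trace, hs_apply]; rfl
  simp only [h1, h2, Finset.mul_sum]
  rw [Finset.sum_comm]
  exact Finset.sum_le_sum fun k _ => hΛ (R k)

theorem crossing {A : Matrix D D ℝ} {B : ι → Matrix D D ℝ} (q : ℝ) (hA : A.transpose = A)
    (hB : ∀ i, (B i).transpose = B i) (orth : ∀ i j, i ≠ j → (hs D).b (B i) (B j) = 0) (Λ : ℝ)
    (hΛ : ∀ z, ∑ i, (hs D).b (B i) (B i) * (dform D).b ((B i).mulVec z) ((B i).mulVec z) ≤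
      Λ * (dform D).b z z) (w w' a b m : ℕ) (hs' : w + w' + a + b = 2 * m) :
    |∑ i, ∑ j, (Mm A B q w * B i * Mm A B q w' * B j * Nm A B q a b (B i) * B j).trace| ≤
      Λ * (Mm A B q (2 * m)).trace := by
  set M := Mm A B q (2 * m) with hM
  have hMt : M.transpose = M := Mm_transpose q hA hB _
  have hMp : ∀ x, 0 ≤ (dform D).b x (M.mulVec x) := Mm_psd q hA hB m
  set R := ∑ i, (hs D).b (B i) (B i) * (hs D).b (B i) (M * B i) with hR
  have hRΛ : R ≤ Λ * M.trace := lambda_bound hB hMt hMp _ Λ hΛ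
  have hR0 : 0 ≤ R := Finset.sum_nonneg fun i _ =>
    mul_nonneg ((hs D).nonneg _) (psd_hs_nonneg hMp _)
  have hsw : ∀ i, (hs D).b (B i) (B i * M) = (hs D).b (B i) (M * B i) := by
    intro i
    rw [hs_trace, hs_trace, hB, Matrix.trace_mul_comm (B i) (M * B i), Matrix.mul_assoc,
      Matrix.trace_mul_comm M, ← Matrix.mul_assoc]
  let ξ : E0 D := ∑ j, el2 (B j) (B j)
  let ζ : E0 D := ∑ i, el1 (B i) (B i)
  have diag : ∀ g : ι → ι → ℝ, ∑ i, ∑ j, (hs D).b (B i) (B j) * g i j =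
      ∑ i, (hs D).b (B i) (B i) * g i i := by
    intro g
    refine Finset.sum_congr rfl fun i _ => ?_
    refine Finset.sum_eq_single i (fun j _ hj => ?_) (by simp)
    rw [orth i j (Ne.symm hj), zero_mul]
  have diag' : ∀ g : ι → ι → ℝ, ∑ i, ∑ j, g i j * (hs D).b (B i) (B j) =
      ∑ i, (hs D).b (B i) (B i) * g i i := by
    intro g; rw [← diag]
    exact Finset.sum_congr rfl fun i _ => Finset.sum_congr rfl fun j _ => mul_comm _ _
  have v1 : ∀ k, k ≠ 3 → (form0 D).b ξ
      (Mo (legs k A) (fun i => legs k (B i)) q (2 * m) ξ) ≤ R := by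
    intro k hk
    match k, hk with
    | 0, _ =>
      simp only [legs, Mo_leg1, ξ, map_sum, LinearMap.sum_apply, leg1_el2, el2_el2, ← hM, hMt]
      rw [Finset.sum_comm, diag]
      simp only [hsw]; exact le_rfl
    | 1, _ =>
      simp only [legs, Mo_leg2, ξ, map_sum, LinearMap.sum_apply, leg2_el2, el2_el2, ← hM, hMt]
      rw [Finset.sum_comm, diag']
    | 2, _ =>
      simp only [legs, Mo_leg3, ξ, map_sum, LinearMap.sum_apply, leg3_el2, el2_el2, ← hM, hMt]
      rw [Finset.sum_comm, diag']
      simp only [hsw]; exact le_rfl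
    | 3, h => exact absurd rfl h
  have v1' : ∀ k, k ≠ 3 → (form0 D).b ζ
      (Mo (legs k A) (fun i => legs k (B i)) q (2 * m) ζ) ≤ R := by
    intro k hk
    match k, hk with
    | 0, _ =>
      simp only [legs, Mo_leg1, ζ, map_sum, LinearMap.sum_apply, leg1_el1, el1_el1, ← hM, hMt]
      rw [Finset.sum_comm, diag']
    | 1, _ =>
      simp only [legs, Mo_leg2, ζ, map_sum, LinearMap.sum_apply, leg2_el1, el1_el1, ← hM, hMt]
      rw [Finset.sum_comm, diag']
      simp only [hsw]; exact le_rfl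
    | 2, _ =>
      simp only [legs, Mo_leg3, ζ, map_sum, LinearMap.sum_apply, leg3_el1, el1_el1, ← hM, hMt]
      rw [Finset.sum_comm, diag]
    | 3, h => exact absurd rfl h
  have h4 : ∀ Z : E0 D, vacs ι _ ((Ytop (legs 3 A) (fun i => legs 3 (B i)) q ^ (2 * m))
      (vac ι _ Z)) = leg4 M Z := by
    intro Z
    funext α β
    have := leg34_eval A B q 0 (2 * m) Z α β
    rw [pow_zero, Module.End.one_apply, Nm_zero_left] at this
    exact this
  have v2 : (form0 D).b ξ (vacs ι _ ((Ytop (legs 3 A) (fun i => legs 3 (B i)) q ^ (2 * m))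
      (vac ι _ ξ))) ≤ R := by
    rw [h4]
    simp only [ξ, map_sum, LinearMap.sum_apply, leg4_el2, el2_el2, hMt]
    rw [Finset.sum_comm, diag]
  have v2' : (form0 D).b ζ (vacs ι _ ((Ytop (legs 3 A) (fun i => legs 3 (B i)) q ^ (2 * m))
      (vac ι _ ζ))) ≤ R := by
    rw [h4]
    simp only [ζ, map_sum, LinearMap.sum_apply, leg4_el1, el1_el1, hMt]
    rw [Finset.sum_comm, diag]
    simp only [hsw]; exact le_rfl
  have key := abstract_crossing (ι := ι) (form0 D) (fun k => legs k A)
    (fun k i => legs k (B i)) q (fun k => legs_sym k hA) (fun k i => legs_sym k (hB i))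
    (fun k l h => legs_commute k l h _ _) (fun k l h i => legs_commute k l h _ _)
    (fun k l h i j => legs_commute k l h _ _) ξ ζ R hR0 m v1 v1' v2 v2' w w' a b hs'
  refine le_trans (le_of_eq ?_) (key.trans hRΛ)
  congr 1
  have hN : vacs ι _ ((Yop (legs 2 A) (fun i => legs 2 (B i)) q ^ a)
      ((Ytop (legs 3 A) (fun i => legs 3 (B i)) q ^ b) (vac ι _ ζ))) =
      ∑ i, el1 (B i) (Nm A B q a b (B i)) := by
    funext α β
    refine (leg34_eval A B q a b ζ α β).trans ?_
    simp only [ζ, Finset.sum_apply, el1]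
    have := map_sum (NmL A B q a b) (fun i => B i α β • B i) Finset.univ
    simp only [map_smul] at this
    exact this
  rw [hN]
  have hw : Mo (legs 1 A) (fun i => legs 1 (B i)) q w' (Mo (legs 0 A)
      (fun i => legs 0 (B i)) q w ξ) = ∑ j, el2 (Mm A B q w' * B j) (B j * Mm A B q w) := by
    simp only [legs, Mo_leg1, Mo_leg2, ξ, map_sum, leg1_el2, leg2_el2, Mm_transpose q hA hB]
  rw [hw]
  simp only [map_sum, LinearMap.sum_apply, el2_el1]
  refine Finset.sum_congr rfl fun i _ => Finset.sum_congr rfl fun j _ => ?_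
  simp only [Matrix.mul_assoc]
  rw [Matrix.trace_mul_comm]
  simp only [Matrix.mul_assoc]

end
end FCB

namespace FCB
set_option linter.unusedSectionVars false
set_option linter.unusedSimpArgs false

section
variable {ι : Type*} [Fintype ι] [DecidableEq ι]
variable {D : Type*} [Fintype D] [DecidableEq D]

/-- vacuum compression, as a matrix -/
noncomputable def tmat : Module.End ℝ (Fk ι (D → ℝ)) →ₗ[ℝ] Matrix D D ℝ where
  toFun T := LinearMap.toMatrix' (vacs ι _ ∘ₗ T ∘ₗ vac ι _)
  map_add' T S := by rw [LinearMap.add_comp, LinearMap.comp_add, map_add]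
  map_smul' c T := by rw [LinearMap.smul_comp, LinearMap.comp_smul, map_smul]; rfl

theorem tmat_mulVec (T : Module.End ℝ (Fk ι (D → ℝ))) (v : D → ℝ) :
    (tmat T).mulVec v = vacs ι _ (T (vac ι _ v)) :=
  LinearMap.toMatrix'_mulVec (vacs ι _ ∘ₗ T ∘ₗ vac ι _) v

/-- vacuum trace -/
noncomputable def tr : Module.End ℝ (Fk ι (D → ℝ)) →ₗ[ℝ] ℝ :=
  Matrix.traceLinearMap D ℝ ℝ ∘ₗ tmat

theorem tr_apply (T : Module.End ℝ (Fk ι (D → ℝ))) : tr T = (tmat T).trace := rfl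

/-- operators commuting with the right semicirculars -/
def TC (T : Module.End ℝ (Fk ι (D → ℝ))) : Prop := ∀ j, Commute (top (D → ℝ) j) T

theorem TC.mul {T S : Module.End ℝ (Fk ι (D → ℝ))} (h : TC T) (h' : TC S) : TC (T * S) :=
  fun j => (h j).mul_right (h' j)
theorem TC.pow {T : Module.End ℝ (Fk ι (D → ℝ))} (h : TC T) (n : ℕ) : TC (T ^ n) :=
  fun j => (h j).pow_right n
theorem TC.lift (C : Module.End ℝ (D → ℝ)) : TC (FCB.lift ι C) :=
  fun j => top_lift_commute j C
theorem TC.sop (i : ι) : TC (sop (D → ℝ) i) := fun j => (sop_top_commute i j).symm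
theorem TC.Ym (A : Matrix D D ℝ) (B : ι → Matrix D D ℝ) (q : ℝ) : TC (Ym A B q) :=
  fun j => top_Yop_commute j _ _ q

theorem tmat_mul_lift (T : Module.End ℝ (Fk ι (D → ℝ))) (C : Matrix D D ℝ) :
    tmat (T * lift ι C.mulVecLin) = tmat T * C := by
  apply mat_ext; intro v
  rw [tmat_mulVec, ← Matrix.mulVec_mulVec, tmat_mulVec, Module.End.mul_apply, lift_vac']; rfl
theorem tmat_lift_mul (T : Module.End ℝ (Fk ι (D → ℝ))) (C : Matrix D D ℝ) :
    tmat (lift ι C.mulVecLin * T) = C * tmat T := by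
  apply mat_ext; intro v
  rw [tmat_mulVec, ← Matrix.mulVec_mulVec, tmat_mulVec, Module.End.mul_apply, lift_vacs']; rfl
theorem tmat_mul_sop {T : Module.End ℝ (Fk ι (D → ℝ))} (h : TC T) (i : ι) :
    tmat (T * sop _ i) = tmat (sop _ i * T) := by
  apply mat_ext; intro v
  rw [tmat_mulVec, tmat_mulVec, Module.End.mul_apply, Module.End.mul_apply]
  have h1 : sop (D → ℝ) i (vac ι _ v) = top (D → ℝ) i (vac ι _ v) :=
    LinearMap.congr_fun (sop_vac (E := D → ℝ) i) v
  have h2 : ∀ f, vacs ι _ (sop (D → ℝ) i f) = vacs ι _ (top (D → ℝ) i f) := fun f =>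
    (LinearMap.congr_fun (vacs_sop (E := D → ℝ) i) f).trans
      (LinearMap.congr_fun (vacs_top (E := D → ℝ) i) f).symm
  have h3 : T (top (D → ℝ) i (vac ι _ v)) = top (D → ℝ) i (T (vac ι _ v)) :=
    (LinearMap.congr_fun (h i).eq (vac ι _ v)).symm
  rw [h1, h2, h3]

theorem tr_lift_comm (T : Module.End ℝ (Fk ι (D → ℝ))) (C : Matrix D D ℝ) :
    tr (T * lift ι C.mulVecLin) = tr (lift ι C.mulVecLin * T) := by
  rw [tr_apply, tr_apply, tmat_mul_lift, tmat_lift_mul, Matrix.trace_mul_comm]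

theorem tr_sop_comm {T : Module.End ℝ (Fk ι (D → ℝ))} (h : TC T) (i : ι) (C : Matrix D D ℝ) :
    tr (T * (sop _ i * lift ι C.mulVecLin)) = tr (sop _ i * lift ι C.mulVecLin * T) := by
  rw [← mul_assoc, tr_lift_comm, tr_apply, tr_apply, tmat_lift_mul, tmat_mul_sop h,
    ← tmat_lift_mul, ← mul_assoc, (sop_lift_commute i C.mulVecLin).eq]

/-- the semicircular series -/
noncomputable def Xm (B : ι → Matrix D D ℝ) : Module.End ℝ (Fk ι (D → ℝ)) :=
  ∑ i, sop (D → ℝ) i * lift ι (B i).mulVecLin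

theorem Ym_eq (A : Matrix D D ℝ) (B : ι → Matrix D D ℝ) (q : ℝ) :
    Ym A B q = lift ι A.mulVecLin + q • Xm B := rfl

theorem tr_Xm_comm {T : Module.End ℝ (Fk ι (D → ℝ))} (h : TC T) (B : ι → Matrix D D ℝ) :
    tr (T * Xm B) = tr (Xm B * T) := by
  simp only [Xm, Finset.mul_sum, Finset.sum_mul, map_sum, tr_sop_comm h]

theorem tr_Ym_comm {T : Module.End ℝ (Fk ι (D → ℝ))} (h : TC T) (A : Matrix D D ℝ)
    (B : ι → Matrix D D ℝ) (q : ℝ) : tr (T * Ym A B q) = tr (Ym A B q * T) := by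
  rw [Ym_eq, mul_add, add_mul, map_add, map_add, tr_lift_comm, mul_smul_comm, smul_mul_assoc,
    map_smul, map_smul, tr_Xm_comm h]

theorem tr_Ypow_comm {T : Module.End ℝ (Fk ι (D → ℝ))} (h : TC T) (A : Matrix D D ℝ)
    (B : ι → Matrix D D ℝ) (q : ℝ) (n : ℕ) :
    tr (Ym A B q ^ n * T) = tr (T * Ym A B q ^ n) := by
  induction n generalizing T with
  | zero => simp
  | succ n ih =>
    rw [pow_succ, mul_assoc, ih ((TC.Ym A B q).mul h), mul_assoc,
      ← tr_Ym_comm (h.mul ((TC.Ym A B q).pow n)), mul_assoc, ← pow_succ]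

theorem tmat_Ypow (A : Matrix D D ℝ) (B : ι → Matrix D D ℝ) (q : ℝ) (n : ℕ) :
    tmat (Ym A B q ^ n) = Mm A B q n := rfl

theorem tr_Ypow (A : Matrix D D ℝ) (B : ι → Matrix D D ℝ) (q : ℝ) (n : ℕ) :
    tr (Ym A B q ^ n) = (Mm A B q n).trace := rfl

theorem tr_SYSY (A : Matrix D D ℝ) (B : ι → Matrix D D ℝ) (q : ℝ) (a b : ℕ) (S : Matrix D D ℝ)
    (hS : S.transpose = S) :
    tr (lift ι S.mulVecLin * (Ym A B q ^ a * lift ι S.mulVecLin * Ym A B q ^ b)) =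
      (hs D).b S (Nm A B q a b S) := by
  rw [tr_apply, tmat_lift_mul, hs_trace, hS]; rfl

theorem tr_XY (A : Matrix D D ℝ) (B : ι → Matrix D D ℝ) (q : ℝ) (m : ℕ) :
    tr (Xm B * Ym A B q ^ m) =
      q * ∑ i, ∑ b ∈ Finset.range m,
        (B i * Mm A B q (m - 1 - b) * B i * Mm A B q b).trace := by
  have : tmat (Xm B * Ym A B q ^ m) = q • ∑ i, ∑ b ∈ Finset.range m,
        (B i * Mm A B q (m - 1 - b) * B i * Mm A B q b) := by
    apply mat_ext; intro v
    rw [tmat_mulVec, Module.End.mul_apply, Xm, LinearMap.sum_apply, map_sum]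
    simp only [Matrix.smul_mulVec, Matrix.sum_mulVec, Finset.smul_sum]
    refine Finset.sum_congr rfl fun i _ => ?_
    rw [(sop_lift_commute i _).eq, Module.End.mul_apply, lift_vacs']
    have := vacs_sop_Ypow A.mulVecLin (fun i => (B i).mulVecLin) q i m v
    rw [← Ym] at this
    rw [this, map_smul, map_sum, Finset.smul_sum]
    refine Finset.sum_congr rfl fun b _ => ?_
    simp only [← Matrix.mulVec_mulVec, Mm_mulVec', Matrix.mulVecLin_apply]
  rw [tr_apply, this, Matrix.trace_smul, Matrix.trace_sum]
  simp only [Matrix.trace_sum, smul_eq_mul]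

/-! the quadratic form `Q` -/

theorem sum_pair (u : ℕ → ℝ) (k : ℕ) : 2 * ∑ b ∈ Finset.range (2 * k + 1), u b =
    u 0 + u (2 * k) + ∑ i ∈ Finset.range k, (u (2 * i) + 2 * u (2 * i + 1) + u (2 * i + 2)) := by
  induction k with
  | zero => simp; ring
  | succ k ih =>
    rw [show 2 * (k + 1) + 1 = (2 * k + 1) + 1 + 1 by ring, Finset.sum_range_succ,
      Finset.sum_range_succ, mul_add, mul_add, ih, Finset.sum_range_succ,
      show 2 * (k + 1) = 2 * k + 2 by ring]
    ring

theorem sos_nonneg {V : Type*} [AddCommGroup V] [Module ℝ V] (β : PForm V) {X Y : Module.End ℝ V}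
    (hX : Sym β X) (hY : Sym β Y) (hc : Commute X Y) (ξ : V) (k : ℕ) :
    0 ≤ ∑ b ∈ Finset.range (2 * k + 1), β.b ξ ((X ^ b) ((Y ^ (2 * k - b)) ξ)) := by
  have key : ∀ (S : Module.End ℝ V), Sym β S → ∀ i j,
      Commute S X → Commute S Y → 0 ≤ β.b ξ ((X ^ (2 * i)) ((Y ^ (2 * j)) (S (S ξ)))) := by
    intro S hS i j h1 h2
    have e : (X ^ (2 * i)) ((Y ^ (2 * j)) (S (S ξ))) =
        (X ^ i * Y ^ j * S) ((X ^ i * Y ^ j * S) ξ) := by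
      simp only [← Module.End.mul_apply]
      congr 1
      have a1 : Commute (X ^ i * Y ^ j) S :=
        ((h1.pow_right i).mul_right (h2.pow_right j)).symm
      have a2 : Commute (X ^ i) (Y ^ j) := hc.pow_pow i j
      calc X ^ (2 * i) * (Y ^ (2 * j) * (S * S)) = X ^ i * (X ^ i * Y ^ j) * Y ^ j * S * S := by
            rw [two_mul, two_mul, pow_add, pow_add]; simp only [mul_assoc]
        _ = (X ^ i * Y ^ j) * ((X ^ i * Y ^ j) * S) * S := by
            have a3 : X ^ i * Y ^ j = Y ^ j * X ^ i := a2.eq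
            rw [show X ^ i * (X ^ i * Y ^ j) = X ^ i * (Y ^ j * X ^ i) from congrArg _ a3]
            simp only [mul_assoc]
        _ = (X ^ i * Y ^ j) * (S * (X ^ i * Y ^ j)) * S := by rw [a1.eq]
        _ = _ := by simp only [mul_assoc]
    have s : Sym β (X ^ i * Y ^ j * S) :=
      ((hX.pow i).mul (hY.pow j) (hc.pow_pow i j)).mul hS
        ((h1.pow_right i).mul_right (h2.pow_right j)).symm
    rw [e, ← s]
    exact β.nonneg _
  set u : ℕ → ℝ := fun b => β.b ξ ((X ^ b) ((Y ^ (2 * k - b)) ξ)) with hu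
  have h2 := sum_pair u k
  have hz : 0 ≤ u 0 := by
    have := key 1 (Sym.one β) 0 k (Commute.one_left _) (Commute.one_left _)
    simpa [hu] using this
  have hk : 0 ≤ u (2 * k) := by
    have := key 1 (Sym.one β) k 0 (Commute.one_left _) (Commute.one_left _)
    simpa [hu] using this
  have hm : ∀ i ∈ Finset.range k, 0 ≤ u (2 * i) + 2 * u (2 * i + 1) + u (2 * i + 2) := by
    intro i hi
    have hik : i < k := Finset.mem_range.1 hi
    have := key (X + Y) (hX.add hY) i (k - 1 - i) ((Commute.refl X).add_left hc.symm)
      (hc.add_left (Commute.refl Y))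
    refine this.trans (le_of_eq ?_)
    have e1 : 2 * k - 2 * i = 2 * (k - 1 - i) + 2 := by omega
    have e2 : 2 * k - (2 * i + 1) = 2 * (k - 1 - i) + 1 := by omega
    have e3 : 2 * k - (2 * i + 2) = 2 * (k - 1 - i) := by omega
    simp only [hu, e1, e2, e3]
    set j := 2 * (k - 1 - i)
    have a : Y (X ξ) = X (Y ξ) := (LinearMap.congr_fun hc.eq ξ).symm
    have b' : ∀ z, (Y ^ j) (X z) = X ((Y ^ j) z) := fun z =>
      (LinearMap.congr_fun (hc.pow_right j).eq z).symm
    simp only [LinearMap.add_apply, map_add, a, b', pow_succ, Module.End.mul_apply]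
    ring
  have := Finset.sum_nonneg hm
  linarith

/-- left and right operators -/
noncomputable def T3 (A : Matrix D D ℝ) (B : ι → Matrix D D ℝ) (q : ℝ) :
    Module.End ℝ (Fk ι (Matrix D D ℝ)) :=
  Yop (LinearMap.mulLeft ℝ A) (fun i => LinearMap.mulLeft ℝ (B i)) q
/-- right operators -/
noncomputable def T4 (A : Matrix D D ℝ) (B : ι → Matrix D D ℝ) (q : ℝ) :
    Module.End ℝ (Fk ι (Matrix D D ℝ)) :=
  Ytop (LinearMap.mulRight ℝ A) (fun i => LinearMap.mulRight ℝ (B i)) q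

theorem T3_sym {A : Matrix D D ℝ} {B : ι → Matrix D D ℝ} (q : ℝ) (hA : A.transpose = A)
    (hB : ∀ i, (B i).transpose = B i) : Sym ((hs D).fock ι) (T3 A B q) := by
  refine Yop_sym _ q ?_ ?_
  · intro x y; simp [hs_mulLeft, hA]
  · intro i x y; simp [hs_mulLeft, hB]
theorem T4_sym {A : Matrix D D ℝ} {B : ι → Matrix D D ℝ} (q : ℝ) (hA : A.transpose = A)
    (hB : ∀ i, (B i).transpose = B i) : Sym ((hs D).fock ι) (T4 A B q) := by
  refine Ytop_sym _ q ?_ ?_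
  · intro x y; simp [hs_mulRight, hA]
  · intro i x y; simp [hs_mulRight, hB]
theorem T3_T4 (A : Matrix D D ℝ) (B : ι → Matrix D D ℝ) (q : ℝ) :
    Commute (T3 A B q) (T4 A B q) := by
  have h : ∀ X Y : Matrix D D ℝ, Commute (LinearMap.mulLeft ℝ X) (LinearMap.mulRight ℝ Y) :=
    fun X Y => LinearMap.commute_mulLeft_right X Y
  exact Yop_Ytop_commute q q (h _ _) (fun _ => h _ _) (fun _ => h _ _) (fun _ _ => h _ _)

theorem hs_Nm (A : Matrix D D ℝ) (B : ι → Matrix D D ℝ) (q : ℝ) (a b : ℕ) (X Z : Matrix D D ℝ) :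
    (hs D).b X (Nm A B q a b Z) = ((hs D).fock ι).b (vac ι _ X)
      ((T3 A B q ^ a) ((T4 A B q ^ b) (vac ι _ Z))) := by
  rw [fock_vac, T3, T4, T34_eval]

/-- the second-order form -/
noncomputable def Qf {A : Matrix D D ℝ} {B : ι → Matrix D D ℝ} (q : ℝ) (hA : A.transpose = A)
    (hB : ∀ i, (B i).transpose = B i) (k : ℕ) : PForm (Matrix D D ℝ) where
  b := ∑ b ∈ Finset.range (2 * k + 1), (hs D).b.compl₂ (NmL A B q b (2 * k - b))
  symm := by
    intro x y
    simp only [LinearMap.sum_apply, LinearMap.compl₂_apply]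
    refine Finset.sum_congr rfl fun b _ => ?_
    change (hs D).b x (Nm A B q _ _ y) = (hs D).b y (Nm A B q _ _ x)
    rw [hs_Nm, hs_Nm, ← (T3_sym q hA hB).pow, ← (T4_sym q hA hB).pow, PForm.symm]
    have := LinearMap.congr_fun ((T3_T4 A B q).pow_pow b (2 * k - b)).eq (vac ι _ x)
    rw [Module.End.mul_apply, Module.End.mul_apply] at this
    rw [this]
  nonneg := by
    intro x
    simp only [LinearMap.sum_apply, LinearMap.compl₂_apply]
    have := sos_nonneg ((hs D).fock ι) (T3_sym q hA hB) (T4_sym q hA hB) (T3_T4 A B q)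
      (vac ι _ x) k
    simp only [← hs_Nm] at this
    exact this

theorem Qf_apply {A : Matrix D D ℝ} {B : ι → Matrix D D ℝ} (q : ℝ) (hA : A.transpose = A)
    (hB : ∀ i, (B i).transpose = B i) (k : ℕ) (x y : Matrix D D ℝ) :
    (Qf q hA hB k).b x y = ∑ b ∈ Finset.range (2 * k + 1), (hs D).b x (Nm A B q b (2 * k - b) y) := by
  simp only [Qf, LinearMap.sum_apply, LinearMap.compl₂_apply]
  rfl

end
end FCB

namespace FCB
set_option linter.unusedSectionVars false
set_option linter.unusedSimpArgs false

section
variable {ι : Type*} [Fintype ι] [DecidableEq ι]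
variable {D : Type*} [Fintype D] [DecidableEq D]

theorem trace_sum_dform (M : Matrix D D ℝ) :
    M.trace = ∑ k, (dform D).b (Pi.single k 1) (M.mulVec (Pi.single k 1)) := by
  simp [dform_apply, Matrix.trace, Pi.single_apply, Finset.sum_ite_eq]

theorem Mm_trace_nonneg {A : Matrix D D ℝ} {B : ι → Matrix D D ℝ} (q : ℝ) (hA : A.transpose = A)
    (hB : ∀ i, (B i).transpose = B i) (m : ℕ) : 0 ≤ (Mm A B q (2 * m)).trace := by
  rw [trace_sum_dform]
  exact Finset.sum_nonneg fun k _ => Mm_psd q hA hB m _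

/-- main term -/
noncomputable def Main (A : Matrix D D ℝ) (B : ι → Matrix D D ℝ) (q : ℝ) (k : ℕ) : ℝ :=
  ∑ i, ∑ b ∈ Finset.range (2 * k + 1), (B i * Mm A B q b * B i * Mm A B q (2 * k - b)).trace

theorem tr_XY_Main (A : Matrix D D ℝ) (B : ι → Matrix D D ℝ) (q : ℝ) (k : ℕ) :
    tr (Xm B * Ym A B q ^ (2 * k + 1)) = q * Main A B q k := by
  rw [tr_XY, Main]
  refine congrArg (fun t => q * t) ?_
  refine Finset.sum_congr rfl fun i _ => Finset.sum_congr rfl fun b _ => ?_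
  rw [Nat.add_sub_cancel, Matrix.mul_assoc, Matrix.trace_mul_comm, ← Matrix.mul_assoc]

theorem QH_le {A : Matrix D D ℝ} {B : ι → Matrix D D ℝ} (q : ℝ) (hA : A.transpose = A)
    (hB : ∀ i, (B i).transpose = B i) (orth : ∀ i j, i ≠ j → (hs D).b (B i) (B j) = 0) (Λ : ℝ)
    (hΛ0 : 0 ≤ Λ)
    (hΛ : ∀ z, ∑ i, (hs D).b (B i) (B i) * (dform D).b ((B i).mulVec z) ((B i).mulVec z) ≤
      Λ * (dform D).b z z) (k : ℕ) :
    ∑ i, (Qf q hA hB (k + 1)).b (B i) (B i) ≤ Main A B q (k + 1) +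
      q ^ 2 * ((2 * (k + 2) : ℕ) : ℝ) ^ 3 * (Λ * (Mm A B q (2 * k)).trace) := by
  set μ := Λ * (Mm A B q (2 * k)).trace with hμ
  have hμ0 : 0 ≤ μ := mul_nonneg hΛ0 (Mm_trace_nonneg q hA hB k)
  have hexp : ∀ b, ∀ i, (hs D).b (B i) (Nm A B q b (2 * (k + 1) - b) (B i)) =
      (B i * Mm A B q b * B i * Mm A B q (2 * (k + 1) - b)).trace +
      q ^ 2 * ∑ j, ∑ a1 ∈ Finset.range b, ∑ b2 ∈ Finset.range (2 * (k + 1) - b),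
        (Mm A B q b2 * B i * Mm A B q a1 * B j *
          Nm A B q (b - 1 - a1) (2 * (k + 1) - b - 1 - b2) (B i) * B j).trace := by
    intro b i
    rw [hs_trace, hB, Nm_Dformula, Matrix.mul_add, Matrix.trace_add, Matrix.mul_smul,
      Matrix.trace_smul, smul_eq_mul]
    congr 1
    · simp only [Matrix.mul_assoc]
    · congr 1
      simp only [Finset.mul_sum, Matrix.trace_sum]
      refine Finset.sum_congr rfl fun j _ => Finset.sum_congr rfl fun a1 _ =>
        Finset.sum_congr rfl fun b2 _ => ?_
      rw [← Matrix.mul_assoc, Matrix.trace_mul_comm]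
      simp only [Matrix.mul_assoc]
  simp only [Qf_apply]
  rw [Finset.sum_comm]
  have hb : ∀ b ∈ Finset.range (2 * (k + 1) + 1),
      ∑ i, (hs D).b (B i) (Nm A B q b (2 * (k + 1) - b) (B i)) ≤
      ∑ i, (B i * Mm A B q b * B i * Mm A B q (2 * (k + 1) - b)).trace +
        q ^ 2 * (((2 * (k + 2) : ℕ) : ℝ) ^ 2 * μ) := by
    intro b hb
    have hb' : b ≤ 2 * (k + 1) := by have := Finset.mem_range.1 hb; omega
    simp only [hexp, Finset.sum_add_distrib]
    rw [← Finset.mul_sum]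
    gcongr
    have e : ∑ i, ∑ j, ∑ a1 ∈ Finset.range b, ∑ b2 ∈ Finset.range (2 * (k + 1) - b),
        (Mm A B q b2 * B i * Mm A B q a1 * B j *
          Nm A B q (b - 1 - a1) (2 * (k + 1) - b - 1 - b2) (B i) * B j).trace =
        ∑ a1 ∈ Finset.range b, ∑ b2 ∈ Finset.range (2 * (k + 1) - b), ∑ i, ∑ j,
        (Mm A B q b2 * B i * Mm A B q a1 * B j *
          Nm A B q (b - 1 - a1) (2 * (k + 1) - b - 1 - b2) (B i) * B j).trace := by
      simp only [Finset.sum_comm (s := (Finset.univ : Finset ι)) (t := Finset.range _)]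
    rw [e]
    calc _ ≤ ∑ a1 ∈ Finset.range b, ∑ b2 ∈ Finset.range (2 * (k + 1) - b), μ := by
          refine Finset.sum_le_sum fun a1 h1 => Finset.sum_le_sum fun b2 h2 => ?_
          refine (le_abs_self _).trans (crossing q hA hB orth Λ hΛ b2 a1 _ _ k ?_)
          have := Finset.mem_range.1 h1; have := Finset.mem_range.1 h2; omega
      _ = (b : ℝ) * ((2 * (k + 1) - b : ℕ) : ℝ) * μ := by
          simp only [Finset.sum_const, Finset.card_range, nsmul_eq_mul]; ring
      _ ≤ _ := by
          gcongr
          rw [sq]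
          gcongr <;> omega
  refine (Finset.sum_le_sum hb).trans ?_
  rw [Finset.sum_add_distrib, Main]
  rw [Finset.sum_comm (s := Finset.range _)]
  gcongr
  rw [Finset.sum_const, Finset.card_range, nsmul_eq_mul]
  have : ((2 * (k + 1) + 1 : ℕ) : ℝ) ≤ ((2 * (k + 2) : ℕ) : ℝ) := by
    exact_mod_cast (by omega : 2 * (k + 1) + 1 ≤ 2 * (k + 2))
  calc _ ≤ ((2 * (k + 2) : ℕ) : ℝ) * (q ^ 2 * (((2 * (k + 2) : ℕ) : ℝ) ^ 2 * μ)) := by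
        gcongr
    _ = _ := by ring

theorem two_pow {V : Type*} [AddCommGroup V] [Module ℝ V] (β : PForm V) {Y : Module.End ℝ V}
    (hY : Sym β Y) (ξ : V) (c R : ℝ) (hR : 0 ≤ R) (m j : ℕ) (hj : j ≤ 2 * m)
    (h1 : β.b ξ ((Y ^ (2 * m)) ξ) ≤ R) (h2 : c ^ (2 * m) * β.b ξ ξ ≤ R) :
    |c ^ j * β.b ξ ((Y ^ (2 * m - j)) ξ)| ≤ R := by
  let T : Fin 4 → Module.End ℝ V := ![Y, c • 1, Y, Y]
  have cc : Commute Y (c • (1 : Module.End ℝ V)) := (Commute.one_right Y).smul_right c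
  have hc : ∀ i k, Commute (T i) (T k) := by
    intro i k
    fin_cases i <;> fin_cases k <;>
      first | exact Commute.refl _ | exact cc | exact cc.symm
  have hs' : ∀ i, Sym β (T i) := by
    intro i
    fin_cases i <;> first | exact hY | exact (Sym.one β).smul c
  have hv : ∀ k, β.b ξ ((T k ^ (2 * m)) ξ) ≤ R := by
    intro k
    have h2' : β.b ξ (((c • (1 : Module.End ℝ V)) ^ (2 * m)) ξ) ≤ R := by
      rw [smul_pow, one_pow, LinearMap.smul_apply, Module.End.one_apply, map_smul]; exact h2
    fin_cases k <;> first | exact h1 | exact h2'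
  have := mon_le β T hc hs' ξ ξ R hR m hv hv ![2 * m - j, j, 0, 0]
    (by simp [Fin.sum_univ_four]; omega)
  refine le_trans (le_of_eq ?_) this
  congr 1
  simp [mon, T, smul_pow]

theorem kappa_ineq {A : Matrix D D ℝ} {B : ι → Matrix D D ℝ} (q : ℝ) (hA : A.transpose = A)
    (hB : ∀ i, (B i).transpose = B i) (κ : ℝ) (k : ℕ) :
    κ ^ 4 * (Mm A B q (2 * k)).trace ≤ (Mm A B q (2 * (k + 2))).trace +
      Fintype.card D * κ ^ (2 * (k + 2)) := by
  simp only [trace_sum_dform, Finset.mul_sum]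
  have hd : (Fintype.card D : ℝ) * κ ^ (2 * (k + 2)) = ∑ _ : D, κ ^ (2 * (k + 2)) := by simp
  rw [hd, ← Finset.sum_add_distrib]
  refine Finset.sum_le_sum fun l _ => ?_
  set e : D → ℝ := Pi.single l 1
  have he : (dform D).b e e = 1 := by simp [e, dform_apply, Pi.single_apply]
  have hp := Mm_psd q hA hB (k + 2) e
  have hκ : 0 ≤ κ ^ (2 * (k + 2)) := by rw [pow_mul]; positivity
  have := two_pow ((dform D).fock ι) (Ym_sym q hA hB) (vac ι _ e) κ
    ((dform D).b e ((Mm A B q (2 * (k + 2))).mulVec e) + κ ^ (2 * (k + 2)))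
    (by linarith) (k + 2) 4 (by omega) (by rw [← Mm_quad]; linarith)
    (by rw [fock_vac, show vacs ι _ (vac ι _ e) = e from LinearMap.congr_fun vacs_vac e, he]
        linarith)
  rw [← Mm_quad, show 2 * (k + 2) - 4 = 2 * k by omega] at this
  exact (le_abs_self _).trans this

theorem dform_cs (x y : D → ℝ) :
    ((dform D).b x y) ^ 2 ≤ (dform D).b x x * (dform D).b y y := PForm.cs _ _ _

theorem psd_le_trace {M : Matrix D D ℝ} (hM : M.transpose = M)
    (h : ∀ x, 0 ≤ (dform D).b x (M.mulVec x)) (v : D → ℝ) :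
    (dform D).b v (M.mulVec v) ≤ M.trace * (dform D).b v v := by
  obtain ⟨R, rfl⟩ := psd_factor hM h
  rw [← Matrix.mulVec_mulVec, ← dform_mulVec, dform_apply]
  have h2 : (R.transpose * R).trace = ∑ k, (dform D).b (R k) (R k) := by
    rw [← hs_trace, hs_apply]; rfl
  rw [h2, Finset.sum_mul]
  refine Finset.sum_le_sum fun k _ => ?_
  have : R.mulVec v k = (dform D).b (R k) v := rfl
  rw [this, ← sq]
  exact dform_cs _ _

theorem lower_bound {A : Matrix D D ℝ} {B : ι → Matrix D D ℝ} (q : ℝ) (hA : A.transpose = A)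
    (hB : ∀ i, (B i).transpose = B i) (c : ℝ) (hc : 0 < c) (m : ℕ)
    (h : (Mm A B q (2 * (m + 1))).trace ≤ c ^ (2 * (m + 1))) (v : D → ℝ) :
    (dform D).b (A.mulVec v) (A.mulVec v) ≤ c ^ 2 * (dform D).b v v := by
  set ξ := vac ι _ v
  have hv0 := (dform D).nonneg v
  have hξ : ((dform D).fock ι).b ξ ξ = (dform D).b v v := by
    rw [fock_vac, show vacs ι _ (vac ι _ v) = v from LinearMap.congr_fun vacs_vac v]
  have h1 : ((dform D).fock ι).b ξ ((Ym A B q ^ (2 * (m + 1))) ξ) ≤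
      c ^ (2 * (m + 1)) * (dform D).b v v := by
    rw [← Mm_quad]
    refine (psd_le_trace (Mm_transpose q hA hB _) (Mm_psd q hA hB _) v).trans ?_
    gcongr
  have h2 := two_pow ((dform D).fock ι) (Ym_sym q hA hB) ξ c (c ^ (2 * (m + 1)) * (dform D).b v v)
    (by positivity) (m + 1) (2 * m) (by omega) h1 (by rw [hξ])
  have h3 := (le_abs_self _).trans h2
  rw [show 2 * (m + 1) - 2 * m = 2 by omega, show 2 * (m + 1) = 2 * m + 2 by ring, pow_add,
    mul_assoc] at h3
  have h4 := le_of_mul_le_mul_left h3 (by positivity)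
  refine le_trans ?_ h4
  rw [sq, Module.End.mul_apply, ← Ym_sym q hA hB]
  have h5 : vacs ι _ (Ym A B q ξ) = A.mulVec v := by
    have e : ∀ i x, vacs ι _ (sop (D → ℝ) i (vac ι _ x)) = 0 := by
      intro i x
      have a1 := LinearMap.congr_fun (vacs_sop (ι := ι) (E := D → ℝ) i) (vac ι _ x)
      have a2 := LinearMap.congr_fun (rsop_vac (ι := ι) (E := D → ℝ) i) x
      simp only [LinearMap.comp_apply] at a1 a2
      rw [a1, a2]; simp
    rw [Ym, Yop_apply, map_add, map_smul, map_sum]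
    simp only [lift_vacs', ξ, lift_vac', e]
    rw [show vacs ι _ (vac ι _ (A.mulVecLin v)) = A.mulVecLin v from
      LinearMap.congr_fun vacs_vac _]
    simp
  have h6 := PForm.cs ((dform D).fock ι) (vac ι _ (A.mulVec v)) (Ym A B q ξ)
  rw [fock_vac, h5, fock_vac,
    show vacs ι _ (vac ι _ (A.mulVec v)) = A.mulVec v from LinearMap.congr_fun vacs_vac _] at h6
  set t := (dform D).b (A.mulVec v) (A.mulVec v)
  have ht : 0 ≤ t := (dform D).nonneg _
  rcases ht.eq_or_lt with h0 | h0
  · rw [← h0]; exact PForm.nonneg _ _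
  · rw [sq] at h6; exact le_of_mul_le_mul_left h6 h0

/-! initial bound -/
theorem lsop_lop (i j : ι) (f : Fk ι (D → ℝ)) :
    lsop (D → ℝ) i (lop (D → ℝ) j f) = if i = j then f else 0 := by
  refine Finsupp.ext fun w => ?_
  by_cases h : i = j
  · subst h; simp
  · have h' : j ≠ i := fun h' => h h'.symm
    simp [h, h']

/-- creation part -/
noncomputable def Lc (B : ι → Matrix D D ℝ) : Module.End ℝ (Fk ι (D → ℝ)) :=
  ∑ i, lop (D → ℝ) i * lift ι (B i).mulVecLin
/-- annihilation part -/
noncomputable def Ls (B : ι → Matrix D D ℝ) : Module.End ℝ (Fk ι (D → ℝ)) :=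
  ∑ i, lift ι (B i).mulVecLin * lsop (D → ℝ) i

theorem Xm_split (B : ι → Matrix D D ℝ) (f) : Xm B f = Lc B f + Ls B f := by
  simp only [Xm, Lc, Ls, LinearMap.sum_apply, ← Finset.sum_add_distrib]
  refine Finset.sum_congr rfl fun i _ => ?_
  rw [Module.End.mul_apply, sop, LinearMap.add_apply, Module.End.mul_apply, Module.End.mul_apply]
  congr 1
  refine Finsupp.ext fun w => ?_
  simp only [lsop_apply, lift_apply]

theorem Lc_adj {B : ι → Matrix D D ℝ} (hB : ∀ i, (B i).transpose = B i) (f g) :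
    ((dform D).fock ι).b (Lc B f) g = ((dform D).fock ι).b f (Ls B g) := by
  simp only [Lc, Ls, LinearMap.sum_apply, map_sum, Module.End.mul_apply]
  refine Finset.sum_congr rfl fun i _ => ?_
  rw [lop_adj]
  refine lift_adj _ ?_ _ _
  intro x y; simp [dform_mulVec, hB]

theorem Lc_norm {B : ι → Matrix D D ℝ} (s : ℝ)
    (hσ : ∀ z, ∑ i, (dform D).b ((B i).mulVec z) ((B i).mulVec z) ≤ s * (dform D).b z z) (f) :
    ((dform D).fock ι).b (Lc B f) (Lc B f) ≤ s * ((dform D).fock ι).b f f := by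
  have e : ((dform D).fock ι).b (Lc B f) (Lc B f) =
      ∑ i, ((dform D).fock ι).b (lift ι (B i).mulVecLin f) (lift ι (B i).mulVecLin f) := by
    simp only [Lc, LinearMap.sum_apply, map_sum, Module.End.mul_apply]
    rw [Finset.sum_comm]
    refine Finset.sum_congr rfl fun i _ => ?_
    simp only [lop_adj, lsop_lop]
    simp [apply_ite]
  rw [e]
  have e2 : ∀ i, ((dform D).fock ι).b (lift ι (B i).mulVecLin f) (lift ι (B i).mulVecLin f) =
      ∑ w ∈ f.support, (dform D).b ((B i).mulVec (f w)) ((B i).mulVec (f w)) := by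
    intro i
    change fb ι (dform D).b _ _ = _
    rw [fb_eq, Finsupp.sum_of_support_subset _ (s := f.support) _ _ (by simp)]
    · refine Finset.sum_congr rfl fun w _ => ?_
      rw [lift_apply]; rfl
    · intro w hw
      rw [Finsupp.mem_support_iff] at hw ⊢
      intro h; apply hw; rw [lift_apply, h, map_zero]
  have e3 : ((dform D).fock ι).b f f = ∑ w ∈ f.support, (dform D).b (f w) (f w) := by
    change fb ι (dform D).b _ _ = _
    rw [fb_eq]; rfl
  simp only [e2, e3, Finset.mul_sum]
  rw [Finset.sum_comm]
  exact Finset.sum_le_sum fun w _ => hσ (f w)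

theorem Ls_norm {B : ι → Matrix D D ℝ} (hB : ∀ i, (B i).transpose = B i) (s : ℝ)
    (hs0 : 0 ≤ s)
    (hσ : ∀ z, ∑ i, (dform D).b ((B i).mulVec z) ((B i).mulVec z) ≤ s * (dform D).b z z) (f) :
    ((dform D).fock ι).b (Ls B f) (Ls B f) ≤ s * ((dform D).fock ι).b f f := by
  have h1 := PForm.cs ((dform D).fock ι) (Lc B (Ls B f)) f
  rw [Lc_adj hB] at h1
  have h2 := Lc_norm s hσ (Ls B f)
  set t := ((dform D).fock ι).b (Ls B f) (Ls B f)
  have ht : 0 ≤ t := PForm.nonneg _ _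
  have hf : 0 ≤ ((dform D).fock ι).b f f := PForm.nonneg _ _
  rcases ht.eq_or_lt with h0 | h0
  · rw [← h0]; positivity
  · have : t * t ≤ t * (s * ((dform D).fock ι).b f f) := by
      calc t * t = t ^ 2 := (sq t).symm
        _ ≤ _ := h1
        _ ≤ (s * t) * ((dform D).fock ι).b f f := by gcongr
        _ = _ := by ring
    exact le_of_mul_le_mul_left this h0

theorem Xm_norm {B : ι → Matrix D D ℝ} (hB : ∀ i, (B i).transpose = B i) (s : ℝ)
    (hs0 : 0 ≤ s)
    (hσ : ∀ z, ∑ i, (dform D).b ((B i).mulVec z) ((B i).mulVec z) ≤ s * (dform D).b z z) (f) :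
    ((dform D).fock ι).b (Xm B f) (Xm B f) ≤ 4 * s * ((dform D).fock ι).b f f := by
  rw [Xm_split]
  have h1 := Lc_norm s hσ f
  have h2 := Ls_norm hB s hs0 hσ f
  have h3 := PForm.nonneg ((dform D).fock ι) (Lc B f - Ls B f)
  simp only [map_sub, map_add, LinearMap.sub_apply, LinearMap.add_apply] at h3 ⊢
  linarith

theorem init_bound {B : ι → Matrix D D ℝ} (hB : ∀ i, (B i).transpose = B i) (s q : ℝ)
    (hs0 : 0 ≤ s)
    (hσ : ∀ z, ∑ i, (dform D).b ((B i).mulVec z) ((B i).mulVec z) ≤ s * (dform D).b z z) (m : ℕ) :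
    (Mm 0 B q (2 * m)).trace ≤ Fintype.card D * (4 * q ^ 2 * s) ^ m := by
  have hA : (0 : Matrix D D ℝ).transpose = 0 := Matrix.transpose_zero
  have hp : ∀ m f, ((dform D).fock ι).b ((Ym 0 B q ^ m) f) ((Ym 0 B q ^ m) f) ≤
      (4 * q ^ 2 * s) ^ m * ((dform D).fock ι).b f f := by
    intro m f
    induction m with
    | zero => simp
    | succ m ih =>
      rw [pow_succ', Module.End.mul_apply]
      set g := (Ym 0 B q ^ m) f
      have : Ym 0 B q g = q • Xm B g := by
        rw [Ym_eq]; simp [Matrix.mulVecLin_zero, lift_zero]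
      rw [this, map_smul, map_smul, LinearMap.smul_apply, smul_eq_mul, smul_eq_mul]
      have h1 := Xm_norm hB s hs0 hσ g
      calc q * (q * _) = q ^ 2 * ((dform D).fock ι).b (Xm B g) (Xm B g) := by ring
        _ ≤ q ^ 2 * (4 * s * ((dform D).fock ι).b g g) := by gcongr
        _ = (4 * q ^ 2 * s) * ((dform D).fock ι).b g g := by ring
        _ ≤ (4 * q ^ 2 * s) * ((4 * q ^ 2 * s) ^ m * ((dform D).fock ι).b f f) := by gcongr
        _ = _ := by ring
  rw [trace_sum_dform]
  have hd : (Fintype.card D : ℝ) * (4 * q ^ 2 * s) ^ m = ∑ _ : D, (4 * q ^ 2 * s) ^ m := by simp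
  rw [hd]
  refine Finset.sum_le_sum fun l _ => ?_
  set e : D → ℝ := Pi.single l 1
  have he : (dform D).b e e = 1 := by simp [e, dform_apply, Pi.single_apply]
  rw [Mm_quad, two_mul, pow_add, Module.End.mul_apply, ← (Ym_sym q hA hB).pow m]
  refine (hp m _).trans ?_
  rw [fock_vac, show vacs ι _ (vac ι _ e) = e from LinearMap.congr_fun vacs_vac e, he, mul_one]

end
end FCB

namespace FCB
set_option linter.unusedSectionVars false
set_option linter.unusedSimpArgs false

section
variable {ι : Type*} [Fintype ι] [DecidableEq ι]
variable {D : Type*} [Fintype D] [DecidableEq D]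

theorem hd_congr {f g : ℝ → ℝ} {f' g' x : ℝ} (h : HasDerivAt f f' x) (h1 : ∀ s, g s = f s)
    (h2 : g' = f') : HasDerivAt g g' x := by
  have : g = f := funext h1
  rw [this, h2]; exact h

/-- weak derivative -/
def WD {W : Type*} [AddCommGroup W] [Module ℝ W] (F : ℝ → W) (F' : W) (t : ℝ) : Prop :=
  ∀ L : W →ₗ[ℝ] ℝ, HasDerivAt (fun s => L (F s)) (L F') t

/-- the path -/
noncomputable def Yp (A : Matrix D D ℝ) (B : ι → Matrix D D ℝ) (q : ℝ) (S : Matrix D D ℝ) (c s : ℝ) :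
    Module.End ℝ (Fk ι (D → ℝ)) := Ym (A + s • S) B (q + c * s ^ 2)

/-- derivative of the path -/
noncomputable def Yp' (B : ι → Matrix D D ℝ) (S : Matrix D D ℝ) (c s : ℝ) :
    Module.End ℝ (Fk ι (D → ℝ)) := lift ι S.mulVecLin + (2 * c * s) • Xm B

theorem mulVecLin_smul' (s : ℝ) (S : Matrix D D ℝ) : (s • S).mulVecLin = s • S.mulVecLin := by
  ext v; simp [Matrix.smul_mulVec]

theorem Yp_eq (A : Matrix D D ℝ) (B : ι → Matrix D D ℝ) (q : ℝ) (S : Matrix D D ℝ) (c s : ℝ) :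
    Yp A B q S c s = Ym A B q + s • lift ι S.mulVecLin + (c * s ^ 2) • Xm B := by
  rw [Yp, Ym_eq, Ym_eq, Matrix.mulVecLin_add, mulVecLin_smul', lift_add, lift_smul, add_smul]
  abel

theorem WD_mul {A : Matrix D D ℝ} {B : ι → Matrix D D ℝ} {q : ℝ} {S : Matrix D D ℝ} {c t : ℝ}
    {F : ℝ → Module.End ℝ (Fk ι (D → ℝ))} {F' : Module.End ℝ (Fk ι (D → ℝ))} (h : WD F F' t) :
    WD (fun s => Yp A B q S c s * F s) (Yp' B S c t * F t + Yp A B q S c t * F') t := by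
  intro L
  have h1 := h (L ∘ₗ LinearMap.mulLeft ℝ (Ym A B q))
  have h2 := (hasDerivAt_id t).mul (h (L ∘ₗ LinearMap.mulLeft ℝ (lift ι S.mulVecLin)))
  have h3 := (((hasDerivAt_id t).pow 2).const_mul c).mul (h (L ∘ₗ LinearMap.mulLeft ℝ (Xm B)))
  have := (h1.add h2).add h3
  refine hd_congr this ?_ ?_
  · intro s
    simp only [Yp_eq, add_mul, smul_mul_assoc, map_add, map_smul, smul_eq_mul, Pi.add_apply,
      Pi.mul_apply, LinearMap.comp_apply, LinearMap.mulLeft_apply, id, Pi.pow_apply]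
  · simp only [Yp_eq, Yp', add_mul, smul_mul_assoc, map_add, map_smul, smul_eq_mul, Pi.add_apply,
      Pi.mul_apply, LinearMap.comp_apply, LinearMap.mulLeft_apply, id, Pi.pow_apply]
    push_cast
    ring

theorem WD_pow (A : Matrix D D ℝ) (B : ι → Matrix D D ℝ) (q : ℝ) (S : Matrix D D ℝ) (c t : ℝ)
    (n : ℕ) : WD (fun s => Yp A B q S c s ^ n) (∑ b ∈ Finset.range n,
      Yp A B q S c t ^ b * (Yp' B S c t * Yp A B q S c t ^ (n - 1 - b))) t := by
  induction n with
  | zero => intro L; simpa using hasDerivAt_const t _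
  | succ n ih =>
    have := WD_mul (A := A) (B := B) (q := q) (S := S) (c := c) ih
    simp only [← pow_succ'] at this
    convert this using 1
    rw [Finset.sum_range_succ', add_comm, Finset.mul_sum]
    refine congrArg₂ (· + ·) (by simp) ?_
    refine Finset.sum_congr rfl fun b hb => ?_
    rw [← mul_assoc (Yp A B q S c t) (Yp A B q S c t ^ b), ← pow_succ',
      show n + 1 - 1 - (b + 1) = n - 1 - b by omega]

theorem TC_Yp' (B : ι → Matrix D D ℝ) (S : Matrix D D ℝ) (c s : ℝ) : TC (Yp' B S c s) := by
  intro j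
  refine (TC.lift _ j).add_right (Commute.smul_right ?_ _)
  exact Commute.sum_right _ _ _ fun i _ => (TC.sop i).mul (TC.lift _) j

theorem tr_pow_deriv (A : Matrix D D ℝ) (B : ι → Matrix D D ℝ) (q : ℝ) (S : Matrix D D ℝ) (c t : ℝ)
    (n : ℕ) : HasDerivAt (fun s => tr (Yp A B q S c s ^ (n + 1)))
      ((n + 1) * tr (Yp' B S c t * Yp A B q S c t ^ n)) t := by
  have := WD_pow A B q S c t (n + 1) tr
  refine hd_congr this (fun s => rfl) ?_
  rw [map_sum]
  have e : ∀ b ∈ Finset.range (n + 1),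
      tr (Yp A B q S c t ^ b * (Yp' B S c t * Yp A B q S c t ^ (n + 1 - 1 - b))) =
      tr (Yp' B S c t * Yp A B q S c t ^ n) := by
    intro b hb
    have hb' := Finset.mem_range.1 hb
    rw [Yp, tr_Ypow_comm ((TC_Yp' B S c t).mul ((TC.Ym _ _ _).pow _)), mul_assoc, ← pow_add]
    congr 3; omega
  rw [Finset.sum_congr rfl e]; simp

theorem second_order {φ φ' : ℝ → ℝ} {φ2 C : ℝ} (h1 : ∀ s, HasDerivAt φ (φ' s) s)
    (h2 : HasDerivAt φ' φ2 0) (h0 : φ' 0 = 0) (hC : φ2 < 2 * C) :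
    ∃ ε0 > 0, ∀ s, 0 < s → s < ε0 → φ s ≤ φ 0 + C * s ^ 2 := by
  have h3 : ∀ᶠ s in nhdsWithin (0 : ℝ) (Set.Ioi 0), φ' s < 2 * C * s := by
    have := (hasDerivAt_iff_tendsto_slope.1 h2).eventually_lt_const hC
    have h4 : nhdsWithin (0 : ℝ) (Set.Ioi 0) ≤ nhdsWithin 0 {0}ᶜ :=
      nhdsWithin_mono _ (fun x hx => ne_of_gt hx)
    filter_upwards [h4 this, self_mem_nhdsWithin] with s hs hpos
    have hp : 0 < s := hpos
    rw [slope_def_field, h0, sub_zero, sub_zero, div_lt_iff₀ hp] at hs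
    exact hs
  obtain ⟨ε0, he, hε⟩ := mem_nhdsGT_iff_exists_Ioo_subset.1 h3
  refine ⟨ε0, he, fun s hs hs' => ?_⟩
  have hd : ∀ x, HasDerivAt (fun x => φ x - C * x ^ 2) (φ' x - C * (2 * x)) x := by
    intro x
    have := (h1 x).sub (((hasDerivAt_id x).pow 2).const_mul C)
    exact hd_congr this (fun s => by simp) (by simp)
  have hanti : AntitoneOn (fun x => φ x - C * x ^ 2) (Set.Icc 0 s) := by
    refine antitoneOn_of_deriv_nonpos (convex_Icc 0 s)
      (fun x _ => (hd x).continuousAt.continuousWithinAt)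
      (fun x _ => (hd x).differentiableAt.differentiableWithinAt) ?_
    intro x hx
    rw [interior_Icc] at hx
    rw [(hd x).deriv]
    have : φ' x < 2 * C * x := hε ⟨hx.1, hx.2.trans hs'⟩
    linarith
  have := hanti (Set.left_mem_Icc.2 hs.le) (Set.right_mem_Icc.2 hs.le) hs.le
  simp only at this
  nlinarith

theorem taylor {A : Matrix D D ℝ} {B : ι → Matrix D D ℝ} (q : ℝ) (hA : A.transpose = A)
    (hB : ∀ i, (B i).transpose = B i) (S : Matrix D D ℝ) (hS : S.transpose = S) (c : ℝ) (k : ℕ)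
    (h0 : (S * Mm A B q (2 * k + 1)).trace = 0) (C : ℝ)
    (hC : ((2 * k + 2 : ℕ) : ℝ) * ((Qf q hA hB k).b S S + 2 * c * (q * Main A B q k)) < 2 * C) :
    ∃ ε0 > 0, ∀ s, 0 < s → s < ε0 → (Mm (A + s • S) B (q + c * s ^ 2) (2 * k + 2)).trace ≤
      (Mm A B q (2 * k + 2)).trace + C * s ^ 2 := by
  have e0 : Yp A B q S c 0 = Ym A B q := by simp [Yp]
  have h1 : ∀ t, HasDerivAt (fun s => (Mm (A + s • S) B (q + c * s ^ 2) (2 * k + 2)).trace)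
      (((2 * k + 1 : ℕ) + 1 : ℝ) * tr (Yp' B S c t * Yp A B q S c t ^ (2 * k + 1))) t :=
    fun t => tr_pow_deriv A B q S c t (2 * k + 1)
  have h2 : HasDerivAt (fun t => ((2 * k + 1 : ℕ) + 1 : ℝ) *
      tr (Yp' B S c t * Yp A B q S c t ^ (2 * k + 1)))
      (((2 * k + 2 : ℕ) : ℝ) * ((Qf q hA hB k).b S S + 2 * c * (q * Main A B q k))) 0 := by
    have a1 := WD_pow A B q S c 0 (2 * k + 1) (tr ∘ₗ LinearMap.mulLeft ℝ (lift ι S.mulVecLin))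
    have a2 := ((hasDerivAt_id (0 : ℝ)).const_mul (2 * c)).mul
      (WD_pow A B q S c 0 (2 * k + 1) (tr ∘ₗ LinearMap.mulLeft ℝ (Xm B)))
    have := (a1.add a2).const_mul (((2 * k + 1 : ℕ) + 1 : ℝ))
    refine hd_congr this ?_ ?_
    · intro t
      simp only [Yp', add_mul, smul_mul_assoc, map_add, map_smul, smul_eq_mul, Pi.add_apply,
        Pi.mul_apply, LinearMap.comp_apply, LinearMap.mulLeft_apply, id]
    · have e1 : (tr ∘ₗ LinearMap.mulLeft ℝ (lift ι S.mulVecLin))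
          (∑ b ∈ Finset.range (2 * k + 1), Yp A B q S c 0 ^ b *
            (Yp' B S c 0 * Yp A B q S c 0 ^ (2 * k + 1 - 1 - b))) = (Qf q hA hB k).b S S := by
        rw [map_sum, Qf_apply]
        refine Finset.sum_congr rfl fun b _ => ?_
        rw [← tr_SYSY A B q _ _ S hS, e0]
        simp [Yp', mul_assoc]
      rw [e1]
      simp only [id, mul_zero, zero_mul, add_zero, e0, LinearMap.comp_apply,
        LinearMap.mulLeft_apply, tr_XY_Main, mul_one]
      push_cast
      ring
  have h0' : (((2 * k + 1 : ℕ) + 1 : ℝ) *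
      tr (Yp' B S c 0 * Yp A B q S c 0 ^ (2 * k + 1))) = 0 := by
    rw [e0]
    simp only [Yp', mul_zero, zero_smul, add_zero]
    rw [tr_apply, tmat_lift_mul, tmat_Ypow, h0, mul_zero]
  obtain ⟨ε0, he, h⟩ := second_order h1 h2 h0' hC
  refine ⟨ε0, he, fun s hs hs' => (h s hs hs').trans (le_of_eq ?_)⟩
  simp

/-! continuity -/
theorem lift_entries (A : Matrix D D ℝ) :
    (lift ι A.mulVecLin : Module.End ℝ (Fk ι (D → ℝ))) =
      ∑ i, ∑ j, A i j • lift ι (Matrix.single i j (1 : ℝ)).mulVecLin := by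
  have h : A.mulVecLin = ∑ i, ∑ j, A i j • (Matrix.single i j (1 : ℝ)).mulVecLin := by
    conv_lhs => rw [Matrix.matrix_eq_sum_single A]
    refine LinearMap.ext fun v => ?_
    simp only [Matrix.mulVecLin_apply, Matrix.sum_mulVec, LinearMap.sum_apply,
      LinearMap.smul_apply]
    refine Finset.sum_congr rfl fun i _ => Finset.sum_congr rfl fun j _ => ?_
    rw [← Matrix.smul_mulVec, Matrix.smul_single, smul_eq_mul, mul_one]
  rw [h, lift_sum]
  simp only [lift_sum, lift_smul]

theorem Mm_continuous {X : Type*} [TopologicalSpace X] {A : X → Matrix D D ℝ}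
    {B : ι → Matrix D D ℝ} {q : X → ℝ} (hA : ∀ i j, Continuous fun x => A x i j)
    (hq : Continuous q) (n : ℕ) : Continuous fun x => (Mm (A x) B (q x) n).trace := by
  have key : ∀ n (L : Module.End ℝ (Fk ι (D → ℝ)) →ₗ[ℝ] ℝ),
      Continuous fun x => L (Ym (A x) B (q x) ^ n) := by
    intro n
    induction n with
    | zero => intro L; simpa using continuous_const
    | succ n ih =>
      intro L
      have e : ∀ x, L (Ym (A x) B (q x) ^ (n + 1)) =
          ∑ i, ∑ j, A x i j * (L ∘ₗ LinearMap.mulLeft ℝ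
            (lift ι (Matrix.single i j (1 : ℝ)).mulVecLin)) (Ym (A x) B (q x) ^ n) +
          q x * (L ∘ₗ LinearMap.mulLeft ℝ (Xm B)) (Ym (A x) B (q x) ^ n) := by
        intro x
        rw [pow_succ']
        nth_rewrite 1 [Ym_eq]
        rw [lift_entries]
        simp only [add_mul, Finset.sum_mul, smul_mul_assoc, map_add, map_sum, map_smul,
          smul_eq_mul, LinearMap.comp_apply, LinearMap.mulLeft_apply]
      simp only [e]
      refine Continuous.add ?_ (hq.mul (ih _))
      exact continuous_finsetSum _ fun i _ => continuous_finsetSum _ fun j _ =>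
        (hA i j).mul (ih _)
  exact key n tr

end
end FCB

namespace FCB
set_option linter.unusedSectionVars false
set_option linter.unusedSimpArgs false

section
variable {ι : Type*} [Fintype ι] [DecidableEq ι]
variable {D : Type*} [Fintype D] [DecidableEq D]
variable {υ : Type*} [Fintype υ] [DecidableEq υ]

/-- linear combination of matrices -/
noncomputable def lc (Au : υ → Matrix D D ℝ) : (υ → ℝ) →ₗ[ℝ] Matrix D D ℝ where
  toFun y := ∑ u, y u • Au u
  map_add' x y := by simp [add_smul, Finset.sum_add_distrib]
  map_smul' c x := by simp [mul_smul, Finset.smul_sum]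

theorem lc_apply (Au : υ → Matrix D D ℝ) (y : υ → ℝ) : lc Au y = ∑ u, y u • Au u := rfl

theorem lc_transpose {Au : υ → Matrix D D ℝ} (h : ∀ u, (Au u).transpose = Au u) (y : υ → ℝ) :
    (lc Au y).transpose = lc Au y := by
  simp [lc_apply, Matrix.transpose_sum, Matrix.transpose_smul, h]

/-- weighted squared length -/
noncomputable def Pw (α : υ → ℝ) (x : υ → ℝ) : ℝ := ∑ u, α u * x u ^ 2

theorem cube_step (x y : υ → ℝ) (hx : ∀ u, |x u| ≤ 1) (hy : ∀ u, ¬ |x u| < 1 → y u = 0) :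
    ∃ ε : ℝ, 0 < ε ∧ ∀ s : ℝ, 0 < s → s < ε → ∀ u, |(x + s • y) u| ≤ 1 := by
  have : ∀ u, ∀ᶠ s in nhdsWithin (0 : ℝ) (Set.Ioi 0), |(x + s • y) u| ≤ 1 := by
    intro u
    by_cases h : |x u| < 1
    · have hc : Continuous fun s : ℝ => |(x + s • y) u| := by
        simp only [Pi.add_apply, Pi.smul_apply, smul_eq_mul]; fun_prop
      have h1 : ∀ᶠ s in nhds (0 : ℝ), |(x + s • y) u| < 1 :=
        hc.continuousAt.eventually_lt continuousAt_const (by simpa using h)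
      exact (h1.filter_mono nhdsWithin_le_nhds).mono fun s hs => hs.le
    · refine Filter.Eventually.of_forall fun s => ?_
      simp [hy u h, hx u]
  obtain ⟨ε, he, hε⟩ := mem_nhdsGT_iff_exists_Ioo_subset.1 (Filter.eventually_all.2 this)
  exact ⟨ε, he, fun s hs hs' => hε ⟨hs, hs'⟩⟩

set_option maxHeartbeats 3200000 in
theorem round_analytic [Nonempty D] {Au : υ → Matrix D D ℝ} (hAu : ∀ u, (Au u).transpose = Au u)
    {α : υ → ℝ} (hα : ∀ u, 0 < α u) {N : ℝ} (hN : 0 < N) (hαN : ∑ u, α u ≤ N)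
    {B : ι → Matrix D D ℝ} (hB : ∀ i, (B i).transpose = B i)
    (orth : ∀ i j, i ≠ j → (hs D).b (B i) (B j) = 0) (Λ : ℝ) (hΛ0 : 0 ≤ Λ)
    (hΛ : ∀ z, ∑ i, (hs D).b (B i) (B i) * (dform D).b ((B i).mulVec z) ((B i).mulVec z) ≤
      Λ * (dform D).b z z) (σ : ℝ) (hσ0 : 0 ≤ σ)
    (hσ : ∀ z, ∑ i, (dform D).b ((B i).mulVec z) ((B i).mulVec z) ≤ σ ^ 2 * (dform D).b z z)
    (k : ℕ) (κ : ℝ) (hκ : 0 < κ) (hκΛ : ((2 * (k + 2) : ℕ) : ℝ) ^ 3 * Λ ≤ κ ^ 4)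
    (hd : (Fintype.card D : ℝ) ≤ Real.exp (2 * (k + 2 : ℝ)))
    (hdir : ∀ S : Finset υ, N / 2 < ∑ u ∈ S, α u → ∀ (Q : PForm (Matrix D D ℝ))
      (l1 l2 : (υ → ℝ) →ₗ[ℝ] ℝ), ∃ y : υ → ℝ, y ≠ 0 ∧ (∀ u, u ∉ S → y u = 0) ∧ l1 y = 0 ∧ l2 y = 0 ∧
        Q.b (lc Au y) (lc Au y) ≤ 64 * (Pw α y / N) * ∑ i, Q.b (B i) (B i))
    (x0 : υ → ℝ) (hx0 : ∀ u, |x0 u| ≤ 1) :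
    ∃ x : υ → ℝ, (∀ u, |x u| ≤ 1) ∧ ∑ u with |x u| < 1, α u ≤ N / 2 ∧
      ∀ v, (dform D).b ((lc Au (x - x0)).mulVec v) ((lc Au (x - x0)).mulVec v) ≤
        ((66 * σ + κ) * Real.exp (1 + (2 * 33 ^ 3 + 1) / 2)) ^ 2 * (dform D).b v v := by
  set cube : Set (υ → ℝ) := {x | ∀ u, |x u| ≤ 1} with hcube
  have cube_c : IsCompact cube := by
    have : cube = Set.univ.pi fun _ => Set.Icc (-1 : ℝ) 1 := by
      ext x
      simp only [hcube, Set.mem_setOf_eq, Set.mem_pi, Set.mem_univ, true_implies, Set.mem_Icc, abs_le]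
    rw [this]
    exact isCompact_univ_pi fun _ => isCompact_Icc
  set qx : (υ → ℝ) → ℝ := fun x => 33 - Pw α x / N with hqx
  set dd : ℝ := Fintype.card D * κ ^ (2 * (k + 2)) with hdd
  have hcard : (0 : ℝ) < Fintype.card D := by exact_mod_cast Fintype.card_pos
  have hdd0 : 0 < dd := by positivity
  set φ : (υ → ℝ) → ℝ := fun x => (Mm (lc Au (x - x0)) B (qx x) (2 * (k + 2))).trace with hφ
  have hsym : ∀ x, (lc Au (x - x0)).transpose = lc Au (x - x0) := fun x => lc_transpose hAu _
  have hφ0 : ∀ x, 0 ≤ φ x := fun x => Mm_trace_nonneg _ (hsym x) hB _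
  set γ : ℝ := (2 * 33 ^ 3 + 1) * (k + 2) / N with hγ
  have hγ0 : 0 < γ := by positivity
  set G : (υ → ℝ) → ℝ := fun x => (φ x + dd) * Real.exp (-γ * Pw α x) with hG
  have hPc : Continuous (Pw α) := by unfold Pw; fun_prop
  have hqc : Continuous qx := by simp only [hqx]; fun_prop
  have hφc : Continuous φ := by
    refine Mm_continuous (fun i j => ?_) hqc _
    simp only [lc_apply, Matrix.sum_apply, Matrix.smul_apply, Pi.sub_apply, smul_eq_mul]
    fun_prop
  have hGc : Continuous G := by simp only [hG]; fun_prop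
  have hK : IsCompact (cube ∩ {x | G x ≤ G x0}) :=
    cube_c.inter_right (isClosed_le hGc continuous_const)
  obtain ⟨x, ⟨hxc, hxG⟩, hmax⟩ := hK.exists_isMaxOn ⟨x0, hx0, le_refl (G x0)⟩ hPc.continuousOn
  have hP0 : ∀ x, 0 ≤ Pw α x := fun x =>
    Finset.sum_nonneg fun u _ => mul_nonneg (hα u).le (sq_nonneg _)
  have hPN : ∀ x ∈ cube, Pw α x ≤ N := by
    intro x hx
    refine le_trans (Finset.sum_le_sum fun u _ => ?_) hαN
    have : x u ^ 2 ≤ 1 := by rw [← sq_abs]; exact pow_le_one₀ (abs_nonneg _) (hx u)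
    nlinarith [hα u]
  have hq1 : ∀ x ∈ cube, 32 ≤ qx x ∧ qx x ≤ 33 := by
    intro x hx
    have h1 : Pw α x / N ≤ 1 := (div_le_one hN).2 (hPN x hx)
    have h2 : 0 ≤ Pw α x / N := div_nonneg (hP0 x) hN.le
    simp only [hqx]; constructor <;> linarith
  refine ⟨x, hxc, ?_, ?_⟩
  · by_contra hcon
    push Not at hcon
    obtain ⟨hq32, hq33⟩ := hq1 x hxc
    set A := lc Au (x - x0) with hA
    set q := qx x with hq
    have hAs : A.transpose = A := hsym x
    obtain ⟨y, hy0, hyS, hl1, hl2, hQ⟩ := hdir (Finset.univ.filter fun u => |x u| < 1) hcon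
      (Qf q hAs hB (k + 1))
      (∑ u, (α u * x u) • LinearMap.proj u)
      (Matrix.traceLinearMap D ℝ ℝ ∘ₗ LinearMap.mulRight ℝ (Mm A B q (2 * (k + 1) + 1)) ∘ₗ lc Au)
    have hyS' : ∀ u, ¬ |x u| < 1 → y u = 0 := fun u hu => hyS u (by simpa using hu)
    have hl1' : ∑ u, α u * x u * y u = 0 := by simpa using hl1
    have hPy : 0 < Pw α y := by
      obtain ⟨u, hu⟩ := Function.ne_iff.1 hy0
      refine Finset.sum_pos' (fun u _ => mul_nonneg (hα u).le (sq_nonneg _))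
        ⟨u, Finset.mem_univ u, mul_pos (hα u) (by have : y u ≠ 0 := hu; positivity)⟩
    have hPs : ∀ s : ℝ, Pw α (x + s • y) = Pw α x + s ^ 2 * Pw α y := by
      intro s
      have : Pw α (x + s • y) = Pw α x + 2 * s * (∑ u, α u * x u * y u) + s ^ 2 * Pw α y := by
        simp only [Pw, Finset.mul_sum, ← Finset.sum_add_distrib, Pi.add_apply, Pi.smul_apply,
          smul_eq_mul]
        exact Finset.sum_congr rfl fun u _ => by ring
      rw [this, hl1']; ring
    set Ψ := φ x + dd with hΨ
    have hΨ0 : 0 < Ψ := by have := hφ0 x; linarith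
    set QH := ∑ i, (Qf q hAs hB (k + 1)).b (B i) (B i) with hQH
    have hQH0 : 0 ≤ QH := Finset.sum_nonneg fun i _ => PForm.nonneg _ _
    have hle := QH_le q hAs hB orth Λ hΛ0 hΛ k
    rw [← hQH] at hle
    have hkap := kappa_ineq q hAs hB κ k
    have hμ : 0 ≤ (Mm A B q (2 * k)).trace := Mm_trace_nonneg q hAs hB k
    have hle2 : QH - Main A B q (k + 1) ≤ 33 ^ 2 * Ψ := by
      have e1 : ((2 * (k + 2) : ℕ) : ℝ) ^ 3 * (Λ * (Mm A B q (2 * k)).trace) ≤ Ψ := by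
        calc _ = (((2 * (k + 2) : ℕ) : ℝ) ^ 3 * Λ) * (Mm A B q (2 * k)).trace := by ring
          _ ≤ κ ^ 4 * (Mm A B q (2 * k)).trace := by gcongr
          _ ≤ _ := hkap
      calc QH - Main A B q (k + 1) ≤
          q ^ 2 * (((2 * (k + 2) : ℕ) : ℝ) ^ 3 * (Λ * (Mm A B q (2 * k)).trace)) := by linarith
        _ ≤ 33 ^ 2 * Ψ := by gcongr
    set r := Pw α y / N with hr
    have hr0 : 0 < r := div_pos hPy hN
    have hC : ((2 * (k + 1) + 2 : ℕ) : ℝ) * ((Qf q hAs hB (k + 1)).b (lc Au y) (lc Au y) +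
        2 * (-r) * (q * Main A B q (k + 1))) < 2 * (γ * Pw α y * Ψ) := by
      have e1 : (Qf q hAs hB (k + 1)).b (lc Au y) (lc Au y) ≤ 2 * q * r * QH := by
        refine hQ.trans ?_
        have : 64 * r * QH ≤ (2 * q) * r * QH := by gcongr; linarith
        linarith
      have e2 : (Qf q hAs hB (k + 1)).b (lc Au y) (lc Au y) +
          2 * (-r) * (q * Main A B q (k + 1)) ≤ 2 * 33 ^ 3 * r * Ψ := by
        have h3 : 2 * q * r * (QH - Main A B q (k + 1)) ≤ 2 * q * r * (33 ^ 2 * Ψ) := by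
          gcongr
        have h4 : 2 * q * r * (33 ^ 2 * Ψ) ≤ 2 * 33 * r * (33 ^ 2 * Ψ) := by gcongr
        nlinarith
      have e3 : 2 * (γ * Pw α y * Ψ) = ((2 * (k + 1) + 2 : ℕ) : ℝ) * ((2 * 33 ^ 3 + 1) * r * Ψ) := by
        rw [hγ, hr]; push_cast; field_simp; ring
      rw [e3]
      have : 0 < r * Ψ := mul_pos hr0 hΨ0
      refine mul_lt_mul_of_pos_left (lt_of_le_of_lt e2 ?_) (by positivity)
      nlinarith
    obtain ⟨ε1, hε1, ht⟩ := taylor q hAs hB (lc Au y) (lc_transpose hAu y) (-r) (k + 1) hl2 _ hC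
    obtain ⟨ε2, hε2, hc2⟩ := cube_step x y hxc hyS'
    set s := min ε1 ε2 / 2 with hs
    have hmin : 0 < min ε1 ε2 := lt_min hε1 hε2
    have hs0 : 0 < s := by positivity
    have hs1 : s < ε1 := by have := min_le_left ε1 ε2; simp only [hs]; linarith
    have hs2 : s < ε2 := by have := min_le_right ε1 ε2; simp only [hs]; linarith
    have hxs := hc2 s hs0 hs2
    have htt := ht s hs0 hs1
    have hφs : φ (x + s • y) ≤ φ x + γ * Pw α y * Ψ * s ^ 2 := by
      have a1 : A + s • lc Au y = lc Au (x + s • y - x0) := by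
        rw [hA, ← map_smul, ← map_add]; congr 1; abel
      have a2 : q + -r * s ^ 2 = qx (x + s • y) := by
        simp only [hq, hqx, hPs, hr]; field_simp; ring
      rw [a1, a2] at htt
      exact htt
    have hGs : G (x + s • y) ≤ G x := by
      have e1 : φ (x + s • y) + dd ≤ Ψ * Real.exp (γ * (s ^ 2 * Pw α y)) := by
        have := Real.add_one_le_exp (γ * (s ^ 2 * Pw α y))
        have h2 := mul_le_mul_of_nonneg_left this hΨ0.le
        have h3 : φ (x + s • y) + dd ≤ Ψ * (γ * (s ^ 2 * Pw α y) + 1) := by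
          rw [hΨ] at hφs ⊢; linarith
        exact h3.trans h2
      calc G (x + s • y) = (φ (x + s • y) + dd) * Real.exp (-γ * Pw α (x + s • y)) := rfl
        _ ≤ Ψ * Real.exp (γ * (s ^ 2 * Pw α y)) * Real.exp (-γ * Pw α (x + s • y)) := by
            gcongr
        _ = Ψ * Real.exp (-γ * Pw α x) := by
            rw [mul_assoc, ← Real.exp_add, hPs]; congr 2; ring
        _ = G x := rfl
    have := hmax (show x + s • y ∈ cube ∩ {x | G x ≤ G x0} from ⟨hxs, hGs.trans hxG⟩)
    simp only [Set.mem_setOf_eq] at this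
    rw [hPs] at this
    have : 0 < s ^ 2 * Pw α y := by positivity
    linarith
  · intro v
    have hc0 : 0 < (66 * σ + κ) * Real.exp (1 + (2 * 33 ^ 3 + 1) / 2) := by positivity
    refine lower_bound (qx x) (hsym x) hB _ hc0 (k + 1) ?_ v
    change φ x ≤ _
    have h1 : φ x + dd ≤ (φ x0 + dd) * Real.exp (γ * N) := by
      have hxG' : (φ x + dd) * Real.exp (-γ * Pw α x) ≤ (φ x0 + dd) * Real.exp (-γ * Pw α x0) := hxG
      have h2 : (φ x + dd) * Real.exp (-(γ * N)) ≤ φ x0 + dd := by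
        calc (φ x + dd) * Real.exp (-(γ * N)) ≤ (φ x + dd) * Real.exp (-γ * Pw α x) := by
              have := hφ0 x
              have h5 := mul_le_mul_of_nonneg_left (hPN x hxc) hγ0.le
              gcongr
              linarith
          _ ≤ _ := hxG'
          _ ≤ (φ x0 + dd) * 1 := by
              have := hφ0 x0
              have h5 := mul_nonneg hγ0.le (hP0 x0)
              gcongr
              rw [Real.exp_le_one_iff]; linarith
          _ = _ := mul_one _
      rw [Real.exp_neg, ← div_eq_mul_inv, div_le_iff₀ (Real.exp_pos _)] at h2
      exact h2
    have h2 : φ x0 ≤ Fintype.card D * (66 * σ) ^ (2 * (k + 2)) := by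
      have e1 : φ x0 = (Mm 0 B (qx x0) (2 * (k + 2))).trace := by simp [hφ]
      rw [e1]
      refine (init_bound hB (σ ^ 2) (qx x0) (sq_nonneg _) hσ _).trans ?_
      have hq := (hq1 x0 hx0)
      rw [pow_mul (66 * σ) 2]
      have : 4 * qx x0 ^ 2 * σ ^ 2 ≤ (66 * σ) ^ 2 := by
        have : qx x0 ^ 2 ≤ 33 ^ 2 := by gcongr; linarith [hq.1]; exact hq.2
        nlinarith [sq_nonneg σ]
      gcongr
    have h3 : (66 * σ) ^ (2 * (k + 2)) + κ ^ (2 * (k + 2)) ≤ (66 * σ + κ) ^ (2 * (k + 2)) :=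
      pow_add_pow_le (by positivity) hκ.le (by omega)
    have hγN : γ * N = (2 * 33 ^ 3 + 1) * (k + 2) := by rw [hγ]; field_simp
    calc φ x ≤ φ x + dd := by linarith
      _ ≤ (φ x0 + dd) * Real.exp (γ * N) := h1
      _ ≤ (Fintype.card D * (66 * σ + κ) ^ (2 * (k + 2))) * Real.exp (γ * N) := by
          gcongr
          calc φ x0 + dd ≤ Fintype.card D * (66 * σ) ^ (2 * (k + 2)) + dd := by linarith
            _ = Fintype.card D * ((66 * σ) ^ (2 * (k + 2)) + κ ^ (2 * (k + 2))) := by rw [hdd]; ring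
            _ ≤ _ := by gcongr
      _ ≤ (Real.exp (2 * (k + 2 : ℝ)) * (66 * σ + κ) ^ (2 * (k + 2))) * Real.exp (γ * N) := by
          gcongr
      _ = ((66 * σ + κ) * Real.exp (1 + (2 * 33 ^ 3 + 1) / 2)) ^ (2 * (k + 1 + 1)) := by
          rw [mul_pow, ← Real.exp_nat_mul, hγN, mul_right_comm, ← Real.exp_add, mul_comm]
          congr 1
          congr 1
          push_cast; ring

end
end FCB

namespace FCB
set_option linter.unusedSectionVars false
set_option linter.unusedSimpArgs false

section
variable {V W : Type*} [AddCommGroup V] [Module ℝ V] [AddCommGroup W] [Module ℝ W]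

/-- pullback of a form -/
noncomputable def PForm.comap (Q : PForm W) (φ : V →ₗ[ℝ] W) : PForm V where
  b := Q.b.compl₁₂ φ φ
  symm x y := by simp [Q.symm (φ x) (φ y)]
  nonneg x := by simpa using Q.nonneg (φ x)

@[simp] theorem PForm.comap_b (Q : PForm W) (φ : V →ₗ[ℝ] W) (x y : V) :
    (Q.comap φ).b x y = Q.b (φ x) (φ y) := by simp [PForm.comap]
end

section
variable {E : Type*} [NormedAddCommGroup E] [InnerProductSpace ℝ E]

theorem bessel_form {ι ι' : Type*} [Fintype ι] [Fintype ι'] [DecidableEq ι] (Q : PForm E)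
    (h : ι → E) (g : ι' → E)
    (hh : Orthonormal ℝ h) (hg : ∀ i, ∑ j, (inner ℝ (h i) (g j) : ℝ) • g j = h i) :
    ∑ i, Q.b (h i) (h i) ≤ ∑ j, Q.b (g j) (g j) := by
  have hc : ∀ i i', ∑ j, (inner ℝ (h i) (g j) : ℝ) * inner ℝ (h i') (g j) =
      if i = i' then 1 else 0 := by
    intro i i'
    have : (inner ℝ (h i') (h i) : ℝ) = ∑ j, (inner ℝ (h i) (g j) : ℝ) * inner ℝ (h i') (g j) := by
      conv_lhs => rw [← hg i]
      rw [inner_sum]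
      exact Finset.sum_congr rfl fun j _ => by rw [inner_smul_right]
    rw [← this, orthonormal_iff_ite.1 hh]
    simp [eq_comm]
  set r : ι' → E := fun j => g j - ∑ i, (inner ℝ (h i) (g j) : ℝ) • h i with hr
  have h0 : 0 ≤ ∑ j, Q.b (r j) (r j) := Finset.sum_nonneg fun j _ => Q.nonneg _
  have e1 : ∀ j, Q.b (r j) (r j) = Q.b (g j) (g j)
      - 2 * ∑ i, (inner ℝ (h i) (g j) : ℝ) * Q.b (h i) (g j)
      + ∑ i, ∑ i', ((inner ℝ (h i) (g j) : ℝ) * inner ℝ (h i') (g j)) * Q.b (h i) (h i') := by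
    intro j
    have s1 : Q.b (∑ i, (inner ℝ (h i) (g j) : ℝ) • h i) (g j) =
        ∑ i, (inner ℝ (h i) (g j) : ℝ) * Q.b (h i) (g j) := by
      simp [map_sum, LinearMap.sum_apply]
    have s2 : Q.b (∑ i, (inner ℝ (h i) (g j) : ℝ) • h i) (∑ i, (inner ℝ (h i) (g j) : ℝ) • h i) =
        ∑ i, ∑ i', ((inner ℝ (h i) (g j) : ℝ) * inner ℝ (h i') (g j)) * Q.b (h i) (h i') := by
      simp only [map_sum, LinearMap.sum_apply, map_smul, LinearMap.smul_apply, smul_eq_mul,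
        Finset.mul_sum]
      rw [Finset.sum_comm]
      exact Finset.sum_congr rfl fun i _ => Finset.sum_congr rfl fun i' _ => by ring
    simp only [hr, map_sub, LinearMap.sub_apply]
    rw [Q.symm (g j) (∑ i, _), s1, s2]; ring
  have e2 : ∑ j, ∑ i, (inner ℝ (h i) (g j) : ℝ) * Q.b (h i) (g j) = ∑ i, Q.b (h i) (h i) := by
    rw [Finset.sum_comm]
    refine Finset.sum_congr rfl fun i _ => ?_
    have : Q.b (h i) (∑ j, (inner ℝ (h i) (g j) : ℝ) • g j) =
        ∑ j, (inner ℝ (h i) (g j) : ℝ) * Q.b (h i) (g j) := by simp [map_sum]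
    rw [← this, hg]
  have e3 : ∑ j, ∑ i, ∑ i', ((inner ℝ (h i) (g j) : ℝ) * inner ℝ (h i') (g j)) * Q.b (h i) (h i') =
      ∑ i, Q.b (h i) (h i) := by
    rw [Finset.sum_comm]
    refine Finset.sum_congr rfl fun i _ => ?_
    rw [Finset.sum_comm]
    simp_rw [← Finset.sum_mul, hc]
    simp
  simp_rw [e1, Finset.sum_add_distrib, Finset.sum_sub_distrib, ← Finset.mul_sum, e2, e3] at h0
  linarith

theorem ortho_expand {ι' : Type*} [Fintype ι'] (g : ι' → E) (hg : Orthonormal ℝ g) (x : E)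
    (hx : x ∈ Submodule.span ℝ (Set.range g)) : ∑ j, (inner ℝ x (g j) : ℝ) • g j = x := by
  classical
  obtain ⟨c, rfl⟩ := (Submodule.mem_span_range_iff_exists_fun ℝ).1 hx
  refine Finset.sum_congr rfl fun j _ => ?_
  rw [sum_inner]
  simp [inner_smul_left, orthonormal_iff_ite.1 hg]

theorem pick_unit [FiniteDimensional ℝ E] {ι' : Type*} [Fintype ι'] (Q : PForm E) (g : ι' → E)
    (hg : Orthonormal ℝ g) (W : Submodule ℝ E) (hW : W ≤ Submodule.span ℝ (Set.range g))
    (hr : 0 < Module.finrank ℝ W) :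
    ∃ y ∈ W, ‖y‖ = 1 ∧ (Module.finrank ℝ W : ℝ) * Q.b y y ≤ ∑ j, Q.b (g j) (g j) := by
  classical
  set b := stdOrthonormalBasis ℝ W
  have hb : Orthonormal ℝ (fun i => (b i : E)) := b.orthonormal.comp_linearIsometry W.subtypeₗᵢ
  have h1 := bessel_form Q (fun i => (b i : E)) g hb
    (fun i => ortho_expand g hg _ (hW (b i).2))
  have : ∃ i, (Module.finrank ℝ W : ℝ) * Q.b (b i : E) (b i) ≤ ∑ j, Q.b (g j) (g j) := by
    by_contra hcon
    push Not at hcon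
    haveI : Nonempty (Fin (Module.finrank ℝ W)) := ⟨⟨0, hr⟩⟩
    have h2 : ∑ _i : Fin (Module.finrank ℝ W), ∑ j, Q.b (g j) (g j) <
        ∑ i, (Module.finrank ℝ W : ℝ) * Q.b (b i : E) (b i) :=
      Finset.sum_lt_sum_of_nonempty Finset.univ_nonempty fun i _ => hcon i
    rw [← Finset.mul_sum] at h2
    simp only [Finset.sum_const, Finset.card_univ, Fintype.card_fin, nsmul_eq_mul] at h2
    have h3 : (0 : ℝ) < Module.finrank ℝ W := by exact_mod_cast hr
    have := lt_of_mul_lt_mul_left h2 h3.le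
    linarith
  obtain ⟨i, hi⟩ := this
  exact ⟨b i, (b i).2, hb.1 i, hi⟩

theorem finrank_inf_ker [FiniteDimensional ℝ E] {F : Type*} [AddCommGroup F] [Module ℝ F]
    [FiniteDimensional ℝ F] (W : Submodule ℝ E) (ψ : E →ₗ[ℝ] F) :
    Module.finrank ℝ W ≤ Module.finrank ℝ (W ⊓ LinearMap.ker ψ : Submodule ℝ E) +
      Module.finrank ℝ F := by
  have h1 := LinearMap.finrank_range_add_finrank_ker (ψ.domRestrict W)
  have h2 : Module.finrank ℝ (LinearMap.range (ψ.domRestrict W)) ≤ Module.finrank ℝ F :=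
    Submodule.finrank_le _
  have h3 : Module.finrank ℝ (LinearMap.ker (ψ.domRestrict W)) ≤
      Module.finrank ℝ (W ⊓ LinearMap.ker ψ : Submodule ℝ E) := by
    have : (LinearMap.ker (ψ.domRestrict W)).map W.subtype ≤ W ⊓ LinearMap.ker ψ := by
      rintro _ ⟨x, hx, rfl⟩
      exact ⟨x.2, by simpa using hx⟩
    have h4 := Submodule.finrank_mono this
    rwa [Submodule.finrank_map_subtype_eq] at h4
  omega

theorem diag_basis [FiniteDimensional ℝ E] (Q : PForm E) :
    ∃ b : OrthonormalBasis (Fin (Module.finrank ℝ E)) ℝ E, ∀ i j, i ≠ j → Q.b (b i) (b j) = 0 := by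
  set e := stdOrthonormalBasis ℝ E
  set T : E →ₗ[ℝ] E := ∑ i, (Q.b (e i)).smulRight (e i) with hT
  have hTi : ∀ x y, (inner ℝ (T x) y : ℝ) = Q.b x y := by
    intro x y
    have h1 : y = ∑ i, (inner ℝ (e i) y : ℝ) • e i := (e.sum_repr' y).symm
    conv_rhs => rw [h1]
    simp only [hT, LinearMap.sum_apply, LinearMap.smulRight_apply, sum_inner, inner_smul_left,
      map_sum, map_smul, smul_eq_mul]
    exact Finset.sum_congr rfl fun i _ => by rw [Q.symm (e i) x]; simp [mul_comm]
  have hs : T.IsSymmetric := by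
    intro x y
    rw [hTi, real_inner_comm, hTi, Q.symm]
  refine ⟨hs.eigenvectorBasis rfl, fun i j hij => ?_⟩
  rw [← hTi, hs.apply_eigenvectorBasis, inner_smul_left]
  rw [orthonormal_iff_ite.1 (hs.eigenvectorBasis rfl).orthonormal, if_neg hij, mul_zero]
end
end FCB

namespace FCB
set_option linter.unusedSectionVars false
set_option linter.unusedSimpArgs false

section
variable {D : Type*} [Fintype D] [DecidableEq D]
variable {υ : Type*} [Fintype υ] [DecidableEq υ]

/-- linear combination on Euclidean space -/
noncomputable def lcE (Au : υ → Matrix D D ℝ) : EuclideanSpace ℝ υ →ₗ[ℝ] Matrix D D ℝ :=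
  lc Au ∘ₗ (WithLp.linearEquiv 2 ℝ (υ → ℝ)).toLinearMap

theorem lcE_apply (Au : υ → Matrix D D ℝ) (y : EuclideanSpace ℝ υ) :
    lcE Au y = ∑ u, y u • Au u := by simp [lcE, lc_apply]

theorem lcE_single (Au : υ → Matrix D D ℝ) (u : υ) :
    lcE Au (EuclideanSpace.single u 1) = Au u := by
  rw [lcE_apply, Finset.sum_eq_single u]
  · simp
  · intro v _ hv; simp [hv]
  · simp

/-- unit vectors of a class -/
noncomputable def ev (U : Finset υ) : U → EuclideanSpace ℝ υ := fun u => EuclideanSpace.single u.1 1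

theorem ev_orth (U : Finset υ) : Orthonormal ℝ (ev U) :=
  (EuclideanSpace.orthonormal_single (𝕜 := ℝ) (ι := υ)).comp _ Subtype.val_injective

theorem mem_span_ev (U : Finset υ) (y : EuclideanSpace ℝ υ) :
    y ∈ Submodule.span ℝ (Set.range (ev U)) ↔ ∀ u, u ∉ U → y u = 0 := by
  constructor
  · intro hy u hu
    obtain ⟨c, rfl⟩ := (Submodule.mem_span_range_iff_exists_fun ℝ).1 hy
    have : ∀ v : U, ((ev U v : EuclideanSpace ℝ υ) u) = 0 := by
      rintro ⟨v, hv⟩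
      have : u ≠ v := fun h => hu (h ▸ hv)
      simp [ev, this]
    simp [this]
  · intro hy
    refine (Submodule.mem_span_range_iff_exists_fun ℝ).2 ⟨fun u => y u, ?_⟩
    ext v
    by_cases hv : v ∈ U
    · simp only [ev, PiLp.smul_apply, WithLp.ofLp_sum, Finset.sum_apply, WithLp.ofLp_smul, Pi.smul_apply, smul_eq_mul]
      rw [Finset.sum_eq_single (⟨v, hv⟩ : U)]
      · simp
      · rintro ⟨w, hw⟩ _ hne
        have : v ≠ w := fun h => hne (by simp [h])
        simp [this]
      · simp
    · rw [hy v hv]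
      have : ∀ w : U, ((ev U w : EuclideanSpace ℝ υ) v) = 0 := by
        rintro ⟨w, hw⟩
        have : v ≠ w := fun h => hv (h ▸ hw)
        simp [ev, this]
      simp [this]

theorem fin_sub {α : Type*} (J : Finset α) :
    ∃ e : Fin J.card → α, Function.Injective e ∧ ∀ i, e i ∈ J :=
  ⟨fun i => (J.equivFin.symm i : α), Subtype.val_injective.comp J.equivFin.symm.injective,
    fun i => (J.equivFin.symm i).2⟩

set_option maxHeartbeats 600000 in
theorem class_lemma (Au : υ → Matrix D D ℝ) (U L : Finset υ) (c : ℝ) (hc : 0 < c)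
    (hU : ∀ u ∈ U, (hs D).b (Au u) (Au u) ≤ c) :
    ∃ (r : ℕ) (h : Fin r → EuclideanSpace ℝ υ), Orthonormal ℝ h ∧
      (∀ i, ∀ u, u ∉ U → h i u = 0) ∧
      (∀ i j, i ≠ j → (hs D).b (lcE Au (h i)) (lcE Au (h j)) = 0) ∧
      (∀ i, ∀ l ∈ L, (hs D).b (lcE Au (h i)) (Au l) = 0) ∧
      (∀ i, (hs D).b (lcE Au (h i)) (lcE Au (h i)) ≤ 24 * c) ∧
      (U.card : ℝ) ≤ r + L.card + U.card / 24 := by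
  classical
  set ψ : EuclideanSpace ℝ υ →ₗ[ℝ] (L → ℝ) :=
    LinearMap.pi fun l => ((hs D).b (Au l)) ∘ₗ lcE Au with hψ
  set Z : Submodule ℝ (EuclideanSpace ℝ υ) :=
    Submodule.span ℝ (Set.range (ev U)) ⊓ LinearMap.ker ψ with hZ
  have hdim := finrank_inf_ker (Submodule.span ℝ (Set.range (ev U))) ψ
  rw [finrank_span_eq_card (ev_orth U).linearIndependent, ← hZ] at hdim
  simp only [Fintype.card_coe, Module.finrank_fintype_fun_eq_card] at hdim
  set Q := (hs D).comap (lcE Au) with hQ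
  obtain ⟨b, hb⟩ := diag_basis (Q.comap Z.subtype)
  have hbo : Orthonormal ℝ (fun i => (b i : EuclideanSpace ℝ υ)) :=
    b.orthonormal.comp_linearIsometry Z.subtypeₗᵢ
  have hbes := bessel_form Q (fun i => (b i : EuclideanSpace ℝ υ)) (ev U) hbo
    (fun i => ortho_expand _ (ev_orth U) _ (b i).2.1)
  have hsumU : ∑ u, Q.b (ev U u) (ev U u) ≤ U.card * c := by
    calc _ ≤ ∑ _u : U, c := Finset.sum_le_sum fun u _ => by
            simpa [hQ, ev, lcE_single] using hU u.1 u.2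
      _ = _ := by simp
  set J := Finset.univ.filter fun i => Q.b (b i : EuclideanSpace ℝ υ) (b i) ≤ 24 * c with hJ
  have hJc : ((Finset.univ.filter fun i => ¬ Q.b (b i : EuclideanSpace ℝ υ) (b i) ≤ 24 * c).card : ℝ) *
      (24 * c) ≤ U.card * c := by
    refine le_trans ?_ (hbes.trans hsumU)
    rw [← nsmul_eq_mul, ← Finset.sum_const]
    refine le_trans (Finset.sum_le_sum fun i hi => ?_)
      (Finset.sum_le_sum_of_subset_of_nonneg (Finset.filter_subset _ _) fun i _ _ => Q.nonneg _)
    have := (Finset.mem_filter.1 hi).2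
    exact (not_le.1 this).le
  have hJJ := Finset.card_filter_add_card_filter_not (s := Finset.univ)
    (fun i => Q.b (b i : EuclideanSpace ℝ υ) (b i) ≤ 24 * c)
  rw [← hJ, Finset.card_univ, Fintype.card_fin] at hJJ
  clear_value J
  obtain ⟨e, he, heJ⟩ := fin_sub J
  refine ⟨J.card, fun i => (b (e i) : EuclideanSpace ℝ υ), ?_, ?_, ?_, ?_, ?_, ?_⟩
  · exact hbo.comp e he
  · intro i
    exact (mem_span_ev U _).1 (b (e i)).2.1
  · intro i j hij
    have := hb (e i) (e j) (fun h => hij (he h))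
    simpa [hQ] using this
  · intro i l hl
    have h1 : ψ (b (e i) : EuclideanSpace ℝ υ) = 0 := (b (e i)).2.2
    have := congrFun h1 ⟨l, hl⟩
    rw [(hs D).symm]
    simpa [hψ] using this
  · intro i
    have := heJ i
    rw [hJ] at this
    simpa [hQ] using (Finset.mem_filter.1 this).2
  · have h1 : ((Finset.univ.filter fun i => ¬ Q.b (b i : EuclideanSpace ℝ υ) (b i) ≤ 24 * c).card : ℝ)
        ≤ U.card / 24 := by
      rw [le_div_iff₀ (by norm_num)]
      nlinarith
    have h2 : (J.card : ℝ) + ((Finset.univ.filter fun i => ¬ Q.b (b i : EuclideanSpace ℝ υ) (b i) ≤ 24 * c).card : ℝ)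
        = Module.finrank ℝ Z := by exact_mod_cast hJJ
    have h3 : (U.card : ℝ) ≤ Module.finrank ℝ Z + L.card := by exact_mod_cast hdim
    linarith

end
end FCB

namespace FCB
set_option linter.unusedSectionVars false
set_option linter.unusedSimpArgs false

section
variable {D : Type*} [Fintype D] [DecidableEq D]
variable {υ : Type*} [Fintype υ] [DecidableEq υ]

theorem avg_class {T : ℕ} (d : Fin T → ℕ) (w Q : Fin T → ℝ) (hw : ∀ k, 0 < w k)
    (hQ : ∀ k, 0 ≤ Q k) {N : ℝ} (hN : 0 < N) (h : N / 64 ≤ ∑ k, w k * d k) :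
    ∃ k, 0 < d k ∧ N * Q k ≤ 64 * w k * d k * ∑ k, Q k := by
  by_contra hcon
  push Not at hcon
  set q := ∑ k, Q k with hq
  have hq0 : 0 ≤ q := Finset.sum_nonneg fun k _ => hQ k
  have hle : ∀ k, 64 * w k * d k * q ≤ N * Q k := by
    intro k
    rcases Nat.eq_zero_or_pos (d k) with h0 | h0
    · rw [h0]; have := hQ k; simp; positivity
    · exact (hcon k h0).le
  obtain ⟨k, hk⟩ : ∃ k, 0 < d k := by
    by_contra h0
    push Not at h0
    have : ∑ k, w k * d k = 0 := Finset.sum_eq_zero fun k _ => by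
      have := Nat.le_zero.1 (h0 k)
      simp [this]
    rw [this] at h
    linarith
  have hlt : ∑ k, 64 * w k * d k * q < ∑ k, N * Q k :=
    Finset.sum_lt_sum (fun k _ => hle k) ⟨k, Finset.mem_univ k, hcon k hk⟩
  rw [← Finset.mul_sum, ← hq, ← Finset.sum_mul] at hlt
  have e : ∑ k, 64 * w k * (d k : ℝ) = 64 * ∑ k, w k * d k := by
    rw [Finset.mul_sum]; exact Finset.sum_congr rfl fun k _ => by ring
  rw [e] at hlt
  have : N * q ≤ 64 * (∑ k, w k * d k) * q := by
    refine mul_le_mul_of_nonneg_right ?_ hq0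
    linarith
  linarith

theorem geom16 (n : ℕ) : 15 * ∑ k ∈ Finset.range n, (16 : ℝ) ^ k ≤ 16 ^ n := by
  induction n with
  | zero => simp
  | succ n ih => rw [Finset.sum_range_succ, pow_succ]; linarith

theorem sum_fib {T : ℕ} (κ : υ → Fin T) (g : υ → ℝ) :
    ∑ k, ∑ u with κ u = k, g u = ∑ u, g u := Finset.sum_fiberwise _ _ _

theorem num_class {T : ℕ} (κ : υ → Fin T) (S : Finset υ) (N : ℝ) (d r : Fin T → ℕ)
    (hαN : ∑ u, (16 : ℝ) ^ (κ u : ℕ) ≤ N) (hT : (16 : ℝ) ^ T ≤ N)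
    (hS : N / 2 < ∑ u ∈ S, (16 : ℝ) ^ (κ u : ℕ))
    (h1 : ∀ k, ((Finset.univ.filter fun u => κ u = k).card : ℝ) ≤
      r k + (Finset.univ.filter fun u => k < κ u).card + (Finset.univ.filter fun u => κ u = k).card / 24)
    (h2 : ∀ k, r k ≤ d k + (((Finset.univ.filter fun u => κ u = k) \ S).card + 2)) :
    N / 64 ≤ ∑ k : Fin T, (16 : ℝ) ^ (k : ℕ) * d k := by
  have key : ∀ k : Fin T, (16 : ℝ) ^ (k : ℕ) * ∑ u with κ u = k, (if u ∈ S then 1 else 0) ≤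
      (16 : ℝ) ^ (k : ℕ) * d k + 2 * 16 ^ (k : ℕ) +
      16 ^ (k : ℕ) * (Finset.univ.filter fun u => k < κ u).card +
      (16 ^ (k : ℕ) * (Finset.univ.filter fun u => κ u = k).card) / 24 := by
    intro k
    have h3 : ∑ u with κ u = k, (if u ∈ S then (1 : ℝ) else 0) +
        ((Finset.univ.filter fun u => κ u = k) \ S).card = (Finset.univ.filter fun u => κ u = k).card := by
      have := Finset.card_inter_add_card_sdiff (Finset.univ.filter fun u => κ u = k) S
      rw [Finset.sum_ite_mem]
      simp only [Finset.sum_const, nsmul_eq_mul, mul_one]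
      exact_mod_cast this
    have h4 : (r k : ℝ) ≤ d k + (((Finset.univ.filter fun u => κ u = k) \ S).card + 2) := by
      exact_mod_cast h2 k
    have h5 := h1 k
    have h6 : ∑ u with κ u = k, (if u ∈ S then (1 : ℝ) else 0) ≤ d k + 2 +
      (Finset.univ.filter fun u => k < κ u).card + (Finset.univ.filter fun u => κ u = k).card / 24 := by
      linarith
    have := mul_le_mul_of_nonneg_left h6 (show (0 : ℝ) ≤ 16 ^ (k : ℕ) by positivity)
    linarith
  have hsum := Finset.sum_le_sum fun k (_ : k ∈ Finset.univ) => key k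
  simp only [Finset.sum_add_distrib, ← Finset.sum_div, ← Finset.mul_sum] at hsum
  have a1 : ∑ k : Fin T, (16 : ℝ) ^ (k : ℕ) * ∑ u with κ u = k, (if u ∈ S then 1 else 0) =
      ∑ u ∈ S, (16 : ℝ) ^ (κ u : ℕ) := by
    have : ∀ k : Fin T, (16 : ℝ) ^ (k : ℕ) * ∑ u with κ u = k, (if u ∈ S then 1 else 0) =
        ∑ u with κ u = k, (if u ∈ S then (16 : ℝ) ^ (κ u : ℕ) else 0) := by
      intro k
      rw [Finset.mul_sum]
      refine Finset.sum_congr rfl fun u hu => ?_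
      rw [(Finset.mem_filter.1 hu).2]; simp
    simp_rw [this]
    rw [sum_fib]; simp [Finset.sum_ite_mem]
  have a2 : ∑ k : Fin T, (16 : ℝ) ^ (k : ℕ) * (Finset.univ.filter fun u => κ u = k).card =
      ∑ u, (16 : ℝ) ^ (κ u : ℕ) := by
    rw [← sum_fib κ]
    refine Finset.sum_congr rfl fun k _ => ?_
    rw [mul_comm, ← nsmul_eq_mul, ← Finset.sum_const]
    refine Finset.sum_congr rfl fun u hu => ?_
    rw [(Finset.mem_filter.1 hu).2]
  have a3 : ∑ k : Fin T, (16 : ℝ) ^ (k : ℕ) * (Finset.univ.filter fun u => k < κ u).card ≤ N / 15 := by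
    have e : ∀ k : Fin T, (16 : ℝ) ^ (k : ℕ) * (Finset.univ.filter fun u => k < κ u).card =
        ∑ u, if k < κ u then (16 : ℝ) ^ (k : ℕ) else 0 := by
      intro k
      rw [← Finset.sum_filter, Finset.sum_const, nsmul_eq_mul, mul_comm]
    simp_rw [e]
    rw [Finset.sum_comm]
    have e2 : ∀ u, ∑ k : Fin T, (if k < κ u then (16 : ℝ) ^ (k : ℕ) else 0) ≤
        16 ^ (κ u : ℕ) / 15 := by
      intro u
      have g := geom16 (κ u)
      have e3 : ∑ k : Fin T, (if k < κ u then (16 : ℝ) ^ (k : ℕ) else 0) =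
          ∑ k ∈ Finset.range (κ u), (16 : ℝ) ^ k := by
        have := Fin.sum_univ_eq_sum_range (fun k => if k < (κ u : ℕ) then (16 : ℝ) ^ k else 0) T
        simp only [Fin.lt_def]
        rw [this, ← Finset.sum_filter]
        refine Finset.sum_congr ?_ fun _ _ => rfl
        ext k
        have := (κ u).2
        simp; omega
      rw [e3]; linarith
    refine (Finset.sum_le_sum fun u _ => e2 u).trans ?_
    rw [← Finset.sum_div]; linarith
  have a4 : ∑ k : Fin T, (16 : ℝ) ^ (k : ℕ) ≤ N / 15 := by
    rw [Fin.sum_univ_eq_sum_range (fun k => (16 : ℝ) ^ k) T]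
    have := geom16 T
    linarith
  have hN : 0 < N := lt_of_lt_of_le (by positivity) hT
  rw [a1, a2] at hsum
  linarith

/-- evaluation at a vector -/
def mvl (z : D → ℝ) : Matrix D D ℝ →ₗ[ℝ] (D → ℝ) where
  toFun M := M.mulVec z
  map_add' M M' := Matrix.add_mulVec M M' z
  map_smul' c M := by simp [Matrix.smul_mulVec]

theorem mvl_apply (z : D → ℝ) (M : Matrix D D ℝ) : mvl z M = M.mulVec z := rfl

theorem class_bessel (Au : υ → Matrix D D ℝ) (U : Finset υ) {r : ℕ} (h : Fin r → EuclideanSpace ℝ υ)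
    (ho : Orthonormal ℝ h) (hsupp : ∀ i, ∀ u, u ∉ U → h i u = 0) (Q : PForm (Matrix D D ℝ)) :
    ∑ i, Q.b (lcE Au (h i)) (lcE Au (h i)) ≤ ∑ u ∈ U, Q.b (Au u) (Au u) := by
  have := bessel_form (Q.comap (lcE Au)) h (ev U) ho
    (fun i => ortho_expand _ (ev_orth U) _ ((mem_span_ev U _).2 (hsupp i)))
  simp only [PForm.comap_b, ev, lcE_single] at this
  refine this.trans (le_of_eq ?_)
  exact Finset.sum_coe_sort U (fun u => Q.b (Au u) (Au u))

theorem dir_class (Au : υ → Matrix D D ℝ) {T : ℕ} (κ : υ → Fin T) (N : ℝ)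
    (hαN : ∑ u, (16 : ℝ) ^ (κ u : ℕ) ≤ N) (hT : (16 : ℝ) ^ T ≤ N)
    (r : Fin T → ℕ) (h : ∀ k, Fin (r k) → EuclideanSpace ℝ υ)
    (ho : ∀ k, Orthonormal ℝ (h k)) (hsupp : ∀ k i, ∀ u, u ∉ (Finset.univ.filter fun u => κ u = k) → h k i u = 0)
    (h1 : ∀ k, ((Finset.univ.filter fun u => κ u = k).card : ℝ) ≤
      r k + (Finset.univ.filter fun u => k < κ u).card + (Finset.univ.filter fun u => κ u = k).card / 24)
    (S : Finset υ) (hS : N / 2 < ∑ u ∈ S, (16 : ℝ) ^ (κ u : ℕ)) (Q : PForm (Matrix D D ℝ))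
    (l1 l2 : (υ → ℝ) →ₗ[ℝ] ℝ) :
    ∃ y : υ → ℝ, y ≠ 0 ∧ (∀ u, u ∉ S → y u = 0) ∧ l1 y = 0 ∧ l2 y = 0 ∧
        Q.b (lc Au y) (lc Au y) ≤ 64 * (Pw (fun u => (16 : ℝ) ^ (κ u : ℕ)) y / N) *
          ∑ i : (Σ k, Fin (r k)), Q.b (lcE Au (h i.1 i.2)) (lcE Au (h i.1 i.2)) := by
  classical
  have hN : 0 < N := lt_of_lt_of_le (by positivity) hT
  set j : EuclideanSpace ℝ υ →ₗ[ℝ] (υ → ℝ) := (WithLp.linearEquiv 2 ℝ (υ → ℝ)).toLinearMap with hj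
  let ψ : ∀ k : Fin T, EuclideanSpace ℝ υ →ₗ[ℝ]
      (((Finset.univ.filter fun u => κ u = k) \ S : Finset υ) → ℝ) × (ℝ × ℝ) := fun k =>
    (LinearMap.pi fun u => LinearMap.proj u.1 ∘ₗ j).prod ((l1 ∘ₗ j).prod (l2 ∘ₗ j))
  let W : Fin T → Submodule ℝ (EuclideanSpace ℝ υ) := fun k =>
    Submodule.span ℝ (Set.range (h k)) ⊓ LinearMap.ker (ψ k)
  have hdim : ∀ k, r k ≤ Module.finrank ℝ (W k) +
      (((Finset.univ.filter fun u => κ u = k) \ S).card + 2) := by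
    intro k
    have := finrank_inf_ker (Submodule.span ℝ (Set.range (h k))) (ψ k)
    rw [finrank_span_eq_card (ho k).linearIndependent] at this
    rw [Module.finrank_prod, Module.finrank_prod, Module.finrank_fintype_fun_eq_card,
      Fintype.card_coe, Fintype.card_fin, Module.finrank_self] at this
    exact this
  have hnum := num_class κ S N (fun k => Module.finrank ℝ (W k)) r hαN hT hS h1 hdim
  obtain ⟨k, hk, hkQ⟩ := avg_class (fun k => Module.finrank ℝ (W k)) (fun k => (16 : ℝ) ^ (k : ℕ))
    (fun k => ∑ i, Q.b (lcE Au (h k i)) (lcE Au (h k i))) (fun k => by positivity)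
    (fun k => Finset.sum_nonneg fun i _ => Q.nonneg _) hN hnum
  obtain ⟨y, hyW, hy1, hyQ⟩ := pick_unit (Q.comap (lcE Au)) (h k) (ho k) (W k) inf_le_left hk
  have hker : ψ k y = 0 := hyW.2
  have hk1 : ∀ u, (u ∈ (Finset.univ.filter fun u => κ u = k) \ S) → y u = 0 := fun u hu =>
    congrFun (congrArg Prod.fst hker) ⟨u, hu⟩
  have hk2 : l1 (j y) = 0 := congrArg (fun z => z.2.1) hker
  have hk3 : l2 (j y) = 0 := congrArg (fun z => z.2.2) hker
  have hyU : ∀ u, u ∉ (Finset.univ.filter fun u => κ u = k) → y u = 0 := by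
    refine (mem_span_ev _ y).1 ?_
    refine (Submodule.span_le.2 ?_ : _ ≤ _) hyW.1
    rintro _ ⟨i, rfl⟩
    exact (mem_span_ev _ _).2 (hsupp k i)
  have hns : ∑ u, y u ^ 2 = 1 := by
    have := EuclideanSpace.real_norm_sq_eq y
    rw [← this, hy1]; norm_num
  have hPw : Pw (fun u => (16 : ℝ) ^ (κ u : ℕ)) (j y) = 16 ^ (k : ℕ) := by
    have : ∀ u, (16 : ℝ) ^ (κ u : ℕ) * (j y) u ^ 2 = 16 ^ (k : ℕ) * y u ^ 2 := by
      intro u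
      change (16 : ℝ) ^ (κ u : ℕ) * (y u) ^ 2 = 16 ^ (k : ℕ) * y u ^ 2
      by_cases hu : κ u = k
      · rw [hu]
      · rw [hyU u (by simp [hu])]; simp
    simp only [Pw]
    rw [Finset.sum_congr rfl fun u _ => this u, ← Finset.mul_sum, hns, mul_one]
  refine ⟨j y, ?_, ?_, hk2, hk3, ?_⟩
  · intro h0
    have : ∀ u, y u = 0 := fun u => congrFun h0 u
    simp [this] at hns
  · intro u hu
    by_cases hu2 : κ u = k
    · exact hk1 u (by simp [hu, hu2])
    · exact hyU u (by simp [hu2])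
  · rw [hPw]
    rw [Fintype.sum_sigma]
    simp only [PForm.comap_b] at hyQ
    have hd : (0 : ℝ) < Module.finrank ℝ (W k) := by exact_mod_cast hk
    change Q.b (lcE Au y) (lcE Au y) ≤ _
    set q := ∑ k, ∑ i, Q.b (lcE Au (h k i)) (lcE Au (h k i))
    have h3 : (Module.finrank ℝ (W k) : ℝ) * (N * Q.b (lcE Au y) (lcE Au y)) ≤
        Module.finrank ℝ (W k) * (64 * 16 ^ (k : ℕ) * q) := by
      have := mul_le_mul_of_nonneg_left hyQ hN.le
      linarith
    have h4 := le_of_mul_le_mul_left h3 hd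
    rw [show 64 * ((16 : ℝ) ^ (k : ℕ) / N) * q = (64 * 16 ^ (k : ℕ) * q) / N by ring, le_div_iff₀ hN]
    linarith

end
end FCB

namespace FCB
set_option linter.unusedSectionVars false
set_option linter.unusedSimpArgs false

section
variable {D : Type*} [Fintype D] [DecidableEq D]
variable {υ : Type*} [Fintype υ] [DecidableEq υ]

set_option maxHeartbeats 1000000 in
theorem round_lemma [Nonempty D] {Au : υ → Matrix D D ℝ} (hAu : ∀ u, (Au u).transpose = Au u)
    (hop : ∀ u z, (dform D).b ((Au u).mulVec z) ((Au u).mulVec z) ≤ (dform D).b z z)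
    {f : ℝ} (hf : 0 < f) {T : ℕ} (κ : υ → Fin T)
    (hF : ∀ u, (hs D).b (Au u) (Au u) ≤ 16 ^ (κ u : ℕ) * f ^ 2) (N : ℝ)
    (hαN : ∑ u, (16 : ℝ) ^ (κ u : ℕ) ≤ N) (hT : (16 : ℝ) ^ T ≤ N) (k : ℕ) (τ : ℝ) (hτ : 0 < τ)
    (hτΛ : ((2 * (k + 2) : ℕ) : ℝ) ^ 3 * (24 * f ^ 2 * N) ≤ τ ^ 4)
    (hd : (Fintype.card D : ℝ) ≤ Real.exp (2 * (k + 2 : ℝ)))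
    (x0 : υ → ℝ) (hx0 : ∀ u, |x0 u| ≤ 1) :
    ∃ x : υ → ℝ, (∀ u, |x u| ≤ 1) ∧ ∑ u with |x u| < 1, (16 : ℝ) ^ (κ u : ℕ) ≤ N / 2 ∧
      ∀ v, (dform D).b ((lc Au (x - x0)).mulVec v) ((lc Au (x - x0)).mulVec v) ≤
        ((66 * √N + τ) * Real.exp (1 + (2 * 33 ^ 3 + 1) / 2)) ^ 2 * (dform D).b v v := by
  classical
  have hN : 0 < N := lt_of_lt_of_le (by positivity) hT
  choose r h ho hsupp horth hL hsz hcard using fun k : Fin T =>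
    class_lemma Au (Finset.univ.filter fun u => κ u = k) (Finset.univ.filter fun u => k < κ u)
      (16 ^ (k : ℕ) * f ^ 2) (by positivity) (fun u hu => by
        have := hF u
        rwa [(Finset.mem_filter.1 hu).2] at this)
  have hcross : ∀ k k' : Fin T, k < k' → ∀ i j,
      (hs D).b (lcE Au (h k i)) (lcE Au (h k' j)) = 0 := by
    intro k k' hkk i j
    rw [lcE_apply Au (h k' j), map_sum]
    refine Finset.sum_eq_zero fun u _ => ?_
    rw [map_smul]
    by_cases hu : κ u = k'
    · rw [hL k i u (by simp [hu, hkk]), smul_zero]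
    · rw [hsupp k' j u (by simp [hu]), zero_smul]
  have hsq : ∀ z, 0 ≤ (dform D).b z z := fun z => (dform D).nonneg z
  refine round_analytic (ι := Σ k, Fin (r k)) hAu (α := fun u => (16 : ℝ) ^ (κ u : ℕ))
    (fun u => by positivity) hN hαN (B := fun i => lcE Au (h i.1 i.2))
    (fun i => lc_transpose hAu _) ?_ (24 * f ^ 2 * N) (by positivity) ?_ (√N) (Real.sqrt_nonneg _)
    ?_ k τ hτ hτΛ hd ?_ x0 hx0
  · rintro ⟨k, i⟩ ⟨k', j⟩ hne
    rcases lt_trichotomy k k' with hlt | heq | hgt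
    · exact hcross k k' hlt i j
    · subst heq
      exact horth k i j (fun hh => hne (by rw [hh]))
    · rw [(hs D).symm]; exact hcross k' k hgt j i
  · intro z
    rw [Fintype.sum_sigma]
    have hk : ∀ k : Fin T, ∑ i, (hs D).b (lcE Au (h k i)) (lcE Au (h k i)) *
        (dform D).b ((lcE Au (h k i)).mulVec z) ((lcE Au (h k i)).mulVec z) ≤
        ∑ u with κ u = k, 24 * f ^ 2 * (dform D).b z z * 16 ^ (κ u : ℕ) := by
      intro k
      calc _ ≤ ∑ i, (24 * (16 ^ (k : ℕ) * f ^ 2)) *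
            (dform D).b ((lcE Au (h k i)).mulVec z) ((lcE Au (h k i)).mulVec z) :=
              Finset.sum_le_sum fun i _ => mul_le_mul_of_nonneg_right (hsz k i) (hsq _)
        _ = (24 * (16 ^ (k : ℕ) * f ^ 2)) * ∑ i,
            (dform D).b ((lcE Au (h k i)).mulVec z) ((lcE Au (h k i)).mulVec z) := by
              rw [Finset.mul_sum]
        _ ≤ (24 * (16 ^ (k : ℕ) * f ^ 2)) * ∑ u with κ u = k,
            (dform D).b ((Au u).mulVec z) ((Au u).mulVec z) := by
              have := class_bessel Au _ (h k) (ho k) (hsupp k) ((dform D).comap (mvl z))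
              simp only [PForm.comap_b, mvl_apply] at this
              gcongr
        _ ≤ (24 * (16 ^ (k : ℕ) * f ^ 2)) * ∑ u with κ u = k, (dform D).b z z := by
              refine mul_le_mul_of_nonneg_left (Finset.sum_le_sum fun u _ => hop u z) (by positivity)
        _ = _ := by
              rw [Finset.mul_sum]
              refine Finset.sum_congr rfl fun u hu => ?_
              rw [(Finset.mem_filter.1 hu).2]; ring
    refine (Finset.sum_le_sum fun k _ => hk k).trans ?_
    rw [sum_fib, ← Finset.mul_sum]
    have := mul_le_mul_of_nonneg_left hαN
      (show 0 ≤ 24 * f ^ 2 * (dform D).b z z from mul_nonneg (by positivity) (hsq z))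
    linarith
  · intro z
    rw [Real.sq_sqrt hN.le, Fintype.sum_sigma]
    have hk : ∀ k : Fin T, ∑ i,
        (dform D).b ((lcE Au (h k i)).mulVec z) ((lcE Au (h k i)).mulVec z) ≤
        ∑ u with κ u = k, (dform D).b z z * 16 ^ (κ u : ℕ) := by
      intro k
      have := class_bessel Au _ (h k) (ho k) (hsupp k) ((dform D).comap (mvl z))
      simp only [PForm.comap_b, mvl_apply] at this
      refine this.trans (Finset.sum_le_sum fun u _ => (hop u z).trans ?_)
      exact le_mul_of_one_le_right (hsq z) (one_le_pow₀ (by norm_num))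
    refine (Finset.sum_le_sum fun k _ => hk k).trans ?_
    rw [sum_fib, ← Finset.mul_sum, mul_comm]
    exact mul_le_mul_of_nonneg_right hαN (hsq z)
  · intro S hS Q l1 l2
    exact dir_class Au κ N hαN hT r h ho hsupp hcard S hS Q l1 l2

end
end FCB

namespace FCB
set_option linter.unusedSectionVars false
set_option linter.unusedSimpArgs false

section
variable {D : Type*} [Fintype D] [DecidableEq D]
variable {υ : Type*} [Fintype υ] [DecidableEq υ]

/-- operator norm -/
noncomputable def nrm (M : Matrix D D ℝ) : ℝ :=
  ‖LinearMap.toContinuousLinearMap (Matrix.toEuclideanLin M)‖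

theorem nrm_nonneg (M : Matrix D D ℝ) : 0 ≤ nrm M := norm_nonneg _
theorem nrm_zero : nrm (0 : Matrix D D ℝ) = 0 := by simp [nrm]
theorem nrm_add (M M' : Matrix D D ℝ) : nrm (M + M') ≤ nrm M + nrm M' := by
  unfold nrm; rw [map_add, map_add]; exact norm_add_le _ _
theorem nrm_smul (c : ℝ) (M : Matrix D D ℝ) : nrm (c • M) = |c| * nrm M := by
  unfold nrm; rw [map_smul, map_smul, norm_smul, Real.norm_eq_abs]
theorem nrm_sum {ι : Type*} (s : Finset ι) (M : ι → Matrix D D ℝ) :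
    nrm (∑ i ∈ s, M i) ≤ ∑ i ∈ s, nrm (M i) := by
  unfold nrm; rw [map_sum, map_sum]; exact norm_sum_le _ _

theorem dform_norm (v : EuclideanSpace ℝ D) : (dform D).b v.ofLp v.ofLp = ‖v‖ ^ 2 := by
  rw [EuclideanSpace.real_norm_sq_eq]
  simp [dform, sq]

theorem nrm_le_of (M : Matrix D D ℝ) (c : ℝ) (hc : 0 ≤ c)
    (h : ∀ v, (dform D).b (M.mulVec v) (M.mulVec v) ≤ c ^ 2 * (dform D).b v v) : nrm M ≤ c := by
  refine ContinuousLinearMap.opNorm_le_bound _ hc fun v => ?_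
  have := h v.ofLp
  have e : M.mulVec v.ofLp = (Matrix.toEuclideanLin M v).ofLp := rfl
  rw [e, dform_norm, dform_norm, ← mul_pow] at this
  exact abs_le_of_sq_le_sq' this (by positivity) |>.2

theorem of_nrm_le (M : Matrix D D ℝ) (h : nrm M ≤ 1) (v : D → ℝ) :
    (dform D).b (M.mulVec v) (M.mulVec v) ≤ (dform D).b v v := by
  have h1 := (LinearMap.toContinuousLinearMap (Matrix.toEuclideanLin M)).le_of_opNorm_le h
    (WithLp.toLp 2 v)
  have e : M.mulVec v = (Matrix.toEuclideanLin M (WithLp.toLp 2 v)).ofLp := rfl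
  have e2 : v = (WithLp.toLp 2 v).ofLp := rfl
  rw [e]
  conv_rhs => rw [e2]
  rw [dform_norm, dform_norm]
  rw [one_mul] at h1
  exact pow_le_pow_left₀ (norm_nonneg _) h1 2

/-- absolute constant of a round -/
noncomputable def EC : ℝ := Real.exp (1 + (2 * 33 ^ 3 + 1) / 2)

theorem EC_pos : 0 < EC := Real.exp_pos _

set_option maxHeartbeats 1000000 in
theorem step_lemma [Nonempty D] {Au : υ → Matrix D D ℝ} (hAu : ∀ u, (Au u).transpose = Au u)
    (hop : ∀ u, nrm (Au u) ≤ 1) {f : ℝ} (hf : 0 < f) (κ : υ → ℕ)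
    (hF : ∀ u, (hs D).b (Au u) (Au u) ≤ 16 ^ (κ u) * f ^ 2) (k : ℕ)
    (hd : (Fintype.card D : ℝ) ≤ Real.exp (2 * (k + 2 : ℝ)))
    (τ : ℝ) (hτ : 0 < τ) (hτ4 : ((2 * (k + 2) : ℕ) : ℝ) ^ 3 * (24 * f ^ 2) ≤ τ ^ 4)
    (N : ℝ) (hN : 1 ≤ N) (x : υ → ℝ) (hx : ∀ u, |x u| ≤ 1)
    (hxN : ∑ u with |x u| < 1, (16 : ℝ) ^ κ u ≤ N) :
    ∃ x' : υ → ℝ, (∀ u, |x' u| ≤ 1) ∧ ∑ u with |x' u| < 1, (16 : ℝ) ^ κ u ≤ N / 2 ∧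
      nrm (lc Au (x' - x)) ≤ (66 * √N + τ * √√N) * EC + 32 := by
  classical
  have hN0 : 0 < N := by linarith
  obtain ⟨T, hT1, hT2⟩ := exists_nat_pow_near hN (show (1 : ℝ) < 16 by norm_num)
  obtain ⟨p, hp⟩ : ∃ p : υ → Prop, ∀ u, p u ↔ (|x u| < 1 ∧ (16 : ℝ) ^ (κ u + 1) ≤ N) :=
    ⟨_, fun _ => Iff.rfl⟩
  have hκT : ∀ u : {u // p u}, κ u < T := by
    rintro ⟨u, hu⟩
    have := ((hp u).1 hu).2.trans_lt hT2
    have := (pow_lt_pow_iff_right₀ (show (1 : ℝ) < 16 by norm_num)).1 this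
    simp only; omega
  have hsumle : ∀ q : υ → Prop, (∀ u, q u → |x u| < 1) →
      ∑ u : {u // q u}, (16 : ℝ) ^ κ u ≤ N := by
    intro q hq
    refine le_trans ?_ hxN
    rw [Finset.sum_subtype (Finset.univ.filter q) (fun u => by simp) (fun u => (16 : ℝ) ^ κ u) |>.symm]
    refine Finset.sum_le_sum_of_subset_of_nonneg ?_ fun _ _ _ => by positivity
    intro u hu
    simp only [Finset.mem_filter, Finset.mem_univ, true_and] at hu ⊢
    exact hq u hu
  have hNN : (√√N) ^ 4 = N := by
    rw [show (4 : ℕ) = 2 * 2 by norm_num, pow_mul, Real.sq_sqrt (Real.sqrt_nonneg _),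
      Real.sq_sqrt hN0.le]
  obtain ⟨z, hz1, hz2, hz3⟩ := round_lemma (υ := {u // p u}) (Au := fun u => Au u)
    (fun u => hAu u) (fun u v => of_nrm_le _ (hop u) v) hf (fun u => ⟨κ u, hκT u⟩)
    (fun u => hF u) N (hsumle p fun u hu => ((hp u).1 hu).1) hT1 k (τ * √√N)
    (mul_pos hτ (Real.sqrt_pos.2 (Real.sqrt_pos.2 hN0)))
    (by rw [mul_pow, hNN, ← mul_assoc]; gcongr) hd (fun u => x u) (fun u => hx u)
  refine ⟨fun u => if hu : p u then z ⟨u, hu⟩ else if |x u| < 1 then 1 else x u, ?_, ?_, ?_⟩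
  · intro u
    by_cases hu : p u
    · simp only [hu, dif_pos]; exact hz1 _
    · simp only [hu, dif_neg, not_false_iff]
      split_ifs
      · simp
      · exact hx u
  · refine le_trans (le_of_eq ?_) hz2
    simp only [Finset.sum_filter]
    rw [← Fintype.sum_subtype_add_sum_subtype p]
    have h2 : ∑ u : {u // ¬ p u}, (if |if hu : p u then z ⟨u, hu⟩ else
        if |x u| < 1 then 1 else x u| < 1 then (16 : ℝ) ^ κ u else 0) = 0 := by
      refine Finset.sum_eq_zero fun u _ => ?_
      simp only [u.2, dif_neg, not_false_iff]
      by_cases h : |x u| < 1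
      · simp [h]
      · simp [h]
    rw [h2, add_zero]
    refine Finset.sum_congr rfl fun u _ => ?_
    simp only [u.2, dif_pos]
  · rw [lc_apply, ← Fintype.sum_subtype_add_sum_subtype p]
    refine (nrm_add _ _).trans (add_le_add ?_ ?_)
    · refine nrm_le_of _ _ (mul_nonneg (by positivity) EC_pos.le) fun v => ?_
      have e : ∑ u : {u // p u}, (((fun u => if hu : p u then z ⟨u, hu⟩ else
          if |x u| < 1 then 1 else x u) - x) u.1) • Au u =
          lc (fun u : {u // p u} => Au u) (z - fun u : {u // p u} => x u) := by
        rw [lc_apply]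
        refine Finset.sum_congr rfl fun u _ => ?_
        simp only [Pi.sub_apply, u.2, dif_pos]
      rw [e]
      exact hz3 v
    · refine (nrm_sum _ _).trans ?_
      have hb : ∀ u : {u // ¬ p u}, nrm ((((fun u => if hu : p u then z ⟨u, hu⟩ else
          if |x u| < 1 then 1 else x u) - x) u.1) • Au u) ≤
          (32 / N) * (if |x u.1| < 1 then (16 : ℝ) ^ κ u.1 else 0) := by
        rintro ⟨u, hu⟩
        rw [nrm_smul]
        simp only [Pi.sub_apply, hu, dif_neg, not_false_iff]
        by_cases h : |x u| < 1
        · simp only [h, if_true]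
          have h1 : ¬ (16 : ℝ) ^ (κ u + 1) ≤ N := fun hh => hu ((hp u).2 ⟨h, hh⟩)
          have h2 : N < 16 * 16 ^ κ u := by rw [pow_succ] at h1; linarith [not_le.1 h1]
          have h3 : |1 - x u| ≤ 2 := by
            have := abs_le.1 (hx u)
            rw [abs_le]; constructor <;> linarith
          calc |1 - x u| * nrm (Au u) ≤ 2 * 1 :=
                mul_le_mul h3 (hop u) (nrm_nonneg _) (by norm_num)
            _ ≤ 32 / N * 16 ^ κ u := by
                rw [div_mul_eq_mul_div, le_div_iff₀ hN0]; linarith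
        · simp [h]
      refine (Finset.sum_le_sum fun u _ => hb u).trans ?_
      rw [← Finset.mul_sum]
      have : ∑ u : {u // ¬ p u}, (if |x u.1| < 1 then (16 : ℝ) ^ κ u.1 else 0) ≤ N := by
        refine le_trans ?_ hxN
        rw [Finset.sum_filter, ← Fintype.sum_subtype_add_sum_subtype p]
        refine le_add_of_nonneg_left (Finset.sum_nonneg fun u _ => ?_)
        split_ifs <;> positivity
      calc _ ≤ 32 / N * N := by gcongr
        _ = 32 := by field_simp

theorem recursion [Nonempty D] {Au : υ → Matrix D D ℝ} (hAu : ∀ u, (Au u).transpose = Au u)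
    (hop : ∀ u, nrm (Au u) ≤ 1) {f : ℝ} (hf : 0 < f) (κ : υ → ℕ)
    (hF : ∀ u, (hs D).b (Au u) (Au u) ≤ 16 ^ (κ u) * f ^ 2) (k : ℕ)
    (hd : (Fintype.card D : ℝ) ≤ Real.exp (2 * (k + 2 : ℝ)))
    (τ : ℝ) (hτ : 0 < τ) (hτ4 : ((2 * (k + 2) : ℕ) : ℝ) ^ 3 * (24 * f ^ 2) ≤ τ ^ 4) (j : ℕ) :
    ∀ (N : ℝ), 0 ≤ N → N < 2 ^ j → ∀ (x : υ → ℝ), (∀ u, |x u| ≤ 1) →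
    ∑ u with |x u| < 1, (16 : ℝ) ^ κ u ≤ N →
    ∃ x' : υ → ℝ, (∀ u, |x' u| = 1) ∧
      nrm (lc Au (x' - x)) ≤ 4 * (66 * EC + 32) * √N + 8 * (τ * EC) * √√N := by
  have hE := EC_pos
  have base : ∀ (N : ℝ), 0 ≤ N → N < 1 → ∀ (x : υ → ℝ), (∀ u, |x u| ≤ 1) →
    ∑ u with |x u| < 1, (16 : ℝ) ^ κ u ≤ N →
    ∃ x' : υ → ℝ, (∀ u, |x' u| = 1) ∧
      nrm (lc Au (x' - x)) ≤ 4 * (66 * EC + 32) * √N + 8 * (τ * EC) * √√N := by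
    intro N hN0 hN x hx hxN
    refine ⟨x, fun u => ?_, ?_⟩
    · by_contra hne
      have hlt : |x u| < 1 := lt_of_le_of_ne (hx u) hne
      have h1 : (16 : ℝ) ^ κ u ≤ ∑ u with |x u| < 1, (16 : ℝ) ^ κ u :=
        Finset.single_le_sum (f := fun u => (16 : ℝ) ^ κ u) (fun _ _ => by positivity)
          (by simpa using hlt)
      have h2 : (1 : ℝ) ≤ 16 ^ κ u := one_le_pow₀ (by norm_num)
      linarith
    · rw [sub_self, map_zero, nrm_zero]; positivity
  induction j with
  | zero => intro N hN0 hN; exact base N hN0 (by simpa using hN)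
  | succ j ih =>
    intro N hN0 hN x hx hxN
    by_cases h1 : N < 1
    · exact base N hN0 h1 x hx hxN
    push Not at h1
    obtain ⟨y, hy1, hy2, hy3⟩ := step_lemma hAu hop hf κ hF k hd τ hτ hτ4 N h1 x hx hxN
    obtain ⟨x', hx1, hx2⟩ := ih (N / 2) (by positivity) (by rw [pow_succ] at hN; linarith) y hy1 hy2
    refine ⟨x', hx1, ?_⟩
    have e : lc Au (x' - x) = lc Au (x' - y) + lc Au (y - x) := by rw [← map_add]; congr 1; abel
    rw [e]
    refine (nrm_add _ _).trans ?_
    have s1 : √(N / 2) ≤ 3 / 4 * √N := by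
      refine Real.sqrt_le_iff.2 ⟨by positivity, ?_⟩
      rw [mul_pow, Real.sq_sqrt hN0]; linarith
    have s2 : √√(N / 2) ≤ 7 / 8 * √√N := by
      refine Real.sqrt_le_iff.2 ⟨by positivity, ?_⟩
      rw [mul_pow, Real.sq_sqrt (Real.sqrt_nonneg _)]
      have := Real.sqrt_nonneg N
      linarith
    have s3 : 1 ≤ √N := Real.one_le_sqrt.2 h1
    have t1 : 4 * (66 * EC + 32) * √(N / 2) ≤ 4 * (66 * EC + 32) * (3 / 4 * √N) := by gcongr
    have t2 : 8 * (τ * EC) * √√(N / 2) ≤ 8 * (τ * EC) * (7 / 8 * √√N) := by gcongr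
    linarith

end
end FCB

namespace FCB
set_option linter.unusedSectionVars false
set_option linter.unusedSimpArgs false

theorem exists_level (a : ℝ) : ∃ m : ℕ, a ≤ 16 ^ m ∧ (16 : ℝ) ^ m ≤ 1 + 16 * max a 0 := by
  by_cases h : a ≤ 1
  · exact ⟨0, by simpa using h, by have := le_max_right a 0; simp⟩
  · push Not at h
    obtain ⟨m, h1, h2⟩ := exists_nat_pow_near h.le (show (1 : ℝ) < 16 by norm_num)
    refine ⟨m + 1, h2.le, ?_⟩
    have := le_max_left a 0
    rw [pow_succ]; linarith

theorem sqrtsqrt_eq {a b : ℝ} (hb : 0 ≤ b) (h : a = b ^ 4) : √√a = b := by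
  rw [h, show b ^ 4 = (b ^ 2) ^ 2 by ring, Real.sqrt_sq (by positivity), Real.sqrt_sq hb]

theorem rhs_eq {L f n : ℝ} (hL : 0 ≤ L) (hf : 0 ≤ f) (hn : 0 ≤ n) :
    √√(L ^ 3 * f ^ 2 * n) = L ^ ((3 : ℝ) / 4) * √f * n ^ ((1 : ℝ) / 4) := by
  refine sqrtsqrt_eq (by positivity) ?_
  rw [mul_pow, mul_pow]
  have h1 : (L ^ ((3 : ℝ) / 4)) ^ 4 = L ^ 3 := by
    rw [← Real.rpow_natCast, ← Real.rpow_mul hL, ← Real.rpow_natCast]; norm_num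
  have h2 : (n ^ ((1 : ℝ) / 4)) ^ 4 = n := by
    rw [← Real.rpow_natCast, ← Real.rpow_mul hn]; norm_num
  have h3 : (√f) ^ 4 = f ^ 2 := by
    rw [show (√f) ^ 4 = ((√f) ^ 2) ^ 2 by ring, Real.sq_sqrt hf]
  rw [h1, h2, h3]

end FCB

/-- **Full coloring bound (proof of Theorem 1.3).** There is a universal constant
`C > 0` such that for all `n ≥ 2`, `d ≤ n²`, `f > 0`, and symmetric matrices
`A 1, …, A n ∈ ℝ^{d×d}` with `‖A i‖_op ≤ 1` and `∑ ‖A i‖_F² ≤ n f²`, there exist signs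
`x ∈ {±1}ⁿ` with `‖∑ x i • A i‖_op ≤ C (√n + (log n)^{3/4} f^{1/2} n^{1/4})`. -/
theorem full_coloring_bound :
    ∃ C : ℝ, 0 < C ∧ ∀ (n d : ℕ), 2 ≤ n → 0 < d → d ≤ n ^ 2 →
      ∀ (f : ℝ), 0 < f →
      ∀ A : Fin n → Matrix (Fin d) (Fin d) ℝ,
        (∀ i, (A i).IsSymm) →
        (∀ i, opNorm (A i) ≤ 1) →
        (∑ i, frobNormSq (A i)) ≤ (n : ℝ) * f ^ 2 →
        ∃ x : Fin n → ℝ, (∀ i, x i = 1 ∨ x i = -1) ∧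
          opNorm (∑ i, x i • A i) ≤
            C * (Real.sqrt n +
              (Real.log n) ^ ((3 : ℝ) / 4) * Real.sqrt f * (n : ℝ) ^ ((1 : ℝ) / 4)) := by
  have hE := FCB.EC_pos
  set C1 : ℝ := 4 * (66 * FCB.EC + 32) * √17 with hC1
  set C2 : ℝ := 8 * FCB.EC * (√√(24 * 12 ^ 3) * √√17) with hC2
  have hC10 : 0 < C1 := by positivity
  have hC20 : 0 < C2 := by positivity
  refine ⟨C1 + C2, by positivity, ?_⟩
  intro n d hn hd hdn f hf A hsym hop hfrob
  haveI : Nonempty (Fin d) := ⟨⟨0, hd⟩⟩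
  have hn0 : (2 : ℝ) ≤ n := by exact_mod_cast hn
  set L := Real.log n with hL
  have hL0 : 0.69 ≤ L := by
    have h1 : Real.log 2 ≤ L := Real.log_le_log (by norm_num) hn0
    have := Real.log_two_gt_d9
    linarith
  have hhs : ∀ i, (FCB.hs (Fin d)).b (A i) (A i) = frobNormSq (A i) := by
    intro i; simp [FCB.hs, frobNormSq, sq]
  have hfn : ∀ i, 0 ≤ frobNormSq (A i) := fun i => by rw [← hhs]; exact (FCB.hs _).nonneg _
  choose κ hκ1 hκ2 using fun i => FCB.exists_level (frobNormSq (A i) / f ^ 2)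
  have hf2 : 0 < f ^ 2 := by positivity
  have hF : ∀ i, (FCB.hs (Fin d)).b (A i) (A i) ≤ 16 ^ (κ i) * f ^ 2 := by
    intro i
    rw [hhs]; exact (div_le_iff₀ hf2).1 (hκ1 i)
  have hsum : ∑ i, (16 : ℝ) ^ κ i ≤ 17 * n := by
    calc ∑ i, (16 : ℝ) ^ κ i ≤ ∑ i, (1 + 16 * (frobNormSq (A i) / f ^ 2)) :=
          Finset.sum_le_sum fun i _ => by
            have := hκ2 i
            rwa [max_eq_left (div_nonneg (hfn i) hf2.le)] at this
      _ = n + 16 * ((∑ i, frobNormSq (A i)) / f ^ 2) := by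
          rw [Finset.sum_add_distrib, ← Finset.mul_sum, ← Finset.sum_div]; simp
      _ ≤ n + 16 * n := by
          have : (∑ i, frobNormSq (A i)) / f ^ 2 ≤ n := (div_le_iff₀ hf2).2 hfrob
          linarith
      _ = 17 * n := by ring
  set k := ⌈L⌉₊ with hk
  have hkL : L ≤ k := Nat.le_ceil L
  have hkL2 : (k : ℝ) < L + 1 := Nat.ceil_lt_add_one (by linarith)
  have hcard : (Fintype.card (Fin d) : ℝ) ≤ Real.exp (2 * (k + 2 : ℝ)) := by
    rw [Fintype.card_fin]
    calc (d : ℝ) ≤ (n : ℝ) ^ 2 := by exact_mod_cast hdn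
      _ = Real.exp (2 * L) := by
          rw [mul_comm, Real.exp_mul, Real.exp_log (by linarith)]; norm_num
      _ ≤ _ := Real.exp_le_exp.2 (by linarith)
  set τ := √√(24 * 12 ^ 3 * (L ^ 3 * f ^ 2)) with hτ
  have hτ0 : 0 < τ := by
    have : 0 < L := by linarith
    positivity
  have hτ4 : ((2 * (k + 2) : ℕ) : ℝ) ^ 3 * (24 * f ^ 2) ≤ τ ^ 4 := by
    have : 0 < L := by linarith
    have e : τ ^ 4 = 24 * 12 ^ 3 * (L ^ 3 * f ^ 2) := by
      rw [hτ, show ∀ y : ℝ, y ^ 4 = (y ^ 2) ^ 2 by intro y; ring, Real.sq_sqrt (Real.sqrt_nonneg _),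
        Real.sq_sqrt (by positivity)]
    rw [e]
    have h1 : ((2 * (k + 2) : ℕ) : ℝ) ≤ 12 * L := by push_cast; linarith
    calc ((2 * (k + 2) : ℕ) : ℝ) ^ 3 * (24 * f ^ 2) ≤ (12 * L) ^ 3 * (24 * f ^ 2) := by gcongr
      _ = _ := by ring
  obtain ⟨j, hj⟩ := pow_unbounded_of_one_lt (17 * n : ℝ) (show (1 : ℝ) < 2 by norm_num)
  obtain ⟨x, hx1, hx2⟩ := FCB.recursion (υ := Fin n) (fun i => hsym i) (fun i => hop i) hf κ hF k
    hcard τ hτ0 hτ4 j (17 * n) (by positivity) hj 0 (by simp) (by simpa using hsum)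
  refine ⟨x, fun i => eq_or_eq_neg_of_abs_eq (hx1 i), ?_⟩
  rw [sub_zero, FCB.lc_apply] at hx2
  refine (show opNorm (∑ i, x i • A i) ≤ _ from hx2).trans ?_
  have hLp : 0 ≤ L := by linarith
  have e1 : 4 * (66 * FCB.EC + 32) * √(17 * n) = C1 * √n := by
    rw [hC1, Real.sqrt_mul (by norm_num)]; ring
  have e2 : 8 * (τ * FCB.EC) * √√(17 * n) = C2 * √√(L ^ 3 * f ^ 2 * n) := by
    have hp : 0 ≤ L ^ 3 * f ^ 2 := by positivity
    rw [hC2, hτ, Real.sqrt_mul (by positivity) (L ^ 3 * f ^ 2), Real.sqrt_mul (by positivity) (√(L ^ 3 * f ^ 2)),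
      Real.sqrt_mul (by norm_num) (n : ℝ), Real.sqrt_mul (by positivity) (√(n : ℝ)),
      Real.sqrt_mul hp (n : ℝ), Real.sqrt_mul (by positivity) (√(n : ℝ))]
    ring
  rw [e1, e2, FCB.rhs_eq hLp hf.le (by positivity)]
  set R := L ^ ((3 : ℝ) / 4) * √f * (n : ℝ) ^ ((1 : ℝ) / 4)
  have hR : 0 ≤ R := by positivity
  have := mul_nonneg hC10.le hR
  have := mul_nonneg hC20.le (Real.sqrt_nonneg (n : ℝ))
  linarith
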